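/- In the high temperature phase, the mixing time of the Glauber dynamics for the exponential random graph model is Θ(n² log n): there exist constants c, C > 0 and N such that for all n ≥ N the mixing time τ(n) satisfies c·n²·log n ≤ τ(n) ≤ C·n²·log n. -/

import Mathlib

open Finset

open scoped Classical

noncomputable section

/-- The set of edges of the complete graph `K_n` on vertex set `[n] = Fin n`:
unordered pairs of distinct vertices. -/
abbrev EdgeK (n : ℕ) : Type := {e : Sym2 (Fin n) // ¬ e.IsDiag}

/-- A graph on `[n]`, identified with an element `X ∈ {0,1}^{E(K_n)}`. -/
abbrev Config (n : ℕ) : Type := EdgeK n → Bool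

/-- The image of an edge under an injection of vertex sets. -/
def mapEdge {m n : ℕ} (v : Fin m ↪ Fin n) (a : EdgeK m) : EdgeK n :=
  ⟨a.1.map v, fun h => a.2 ((Sym2.isDiag_map v.injective).mp h)⟩

/-- The complete graph `K_n` as a configuration. -/
def fullConfig (n : ℕ) : Config n := fun _ => true

/-- `X ∪ {e}`. -/
def addEdge {n : ℕ} (X : Config n) (e : EdgeK n) : Config n :=
  fun f => if f = e then true else X f

/-- `X_{e+}` (for `b = true`), resp. `X_{e-}` (for `b = false`). -/
def setEdge {n : ℕ} (X : Config n) (e : EdgeK n) (b : Bool) : Config n :=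
  fun f => if f = e then b else X f

/-- `N_G(X)`: the number of tuples of `m` distinct vertices of `[n]` such that every
edge of the pattern graph `G` (a graph on `m` labelled vertices) is mapped to an edge of `X`. -/
def copyCount {n m : ℕ} (X : Config n) (G : Finset (EdgeK m)) : ℕ :=
  (univ.filter fun v : Fin m ↪ Fin n => ∀ a ∈ G, X (mapEdge v a) = true).card

/-- `N_G(X, e)`: the number of such tuples for `X ∪ {e}` which moreover use the edge `e`. -/
def rootedCount {n m : ℕ} (X : Config n) (G : Finset (EdgeK m)) (e : EdgeK n) : ℕ :=
  (univ.filter fun v : Fin m ↪ Fin n =>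
    (∃ a ∈ G, mapEdge v a = e) ∧ ∀ a ∈ G, addEdge X e (mapEdge v a) = true).card

/-- `N_G(X, e, e')`: the number of such tuples for `X ∪ {e, e'}` which use both `e` and `e'`. -/
def rooted2Count {n m : ℕ} (X : Config n) (G : Finset (EdgeK m)) (e e' : EdgeK n) : ℕ :=
  (univ.filter fun v : Fin m ↪ Fin n =>
    (∃ a ∈ G, mapEdge v a = e) ∧ (∃ a ∈ G, mapEdge v a = e') ∧
      ∀ a ∈ G, addEdge (addEdge X e) e' (mapEdge v a) = true).card

/-- The number of edges of the graph `X`. -/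
def edgeCount {n : ℕ} (X : Config n) : ℕ := (univ.filter fun e => X e = true).card

/-- Hamming distance between two graphs: the number of edges of disagreement. -/
def hamDist {n : ℕ} (X Y : Config n) : ℕ := (univ.filter fun f => X f ≠ Y f).card

/-- The Hamiltonian `H(X) = ∑ i, β i * N_{G_i}(X) / n^(|V_i| - 2)`. -/
def ergmH {s : ℕ} (V : Fin s → ℕ) (Pt : ∀ i, Finset (EdgeK (V i))) (β : Fin s → ℝ)
    (n : ℕ) (X : Config n) : ℝ :=
  ∑ i, β i * (copyCount X (Pt i) : ℝ) / (n : ℝ) ^ (V i - 2)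

/-- The Gibbs measure `p_n(X) = exp(H(X)) / Z_n`. -/
def gibbs {s : ℕ} (V : Fin s → ℕ) (Pt : ∀ i, Finset (EdgeK (V i))) (β : Fin s → ℝ)
    (n : ℕ) (X : Config n) : ℝ :=
  Real.exp (ergmH V Pt β n X) / ∑ Y : Config n, Real.exp (ergmH V Pt β n Y)

/-- `∂_e H(X) = H(X_{e+}) - H(X_{e-})`. -/
def dH {s : ℕ} (V : Fin s → ℕ) (Pt : ∀ i, Finset (EdgeK (V i))) (β : Fin s → ℝ)
    (n : ℕ) (X : Config n) (e : EdgeK n) : ℝ :=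
  ergmH V Pt β n (setEdge X e true) - ergmH V Pt β n (setEdge X e false)

/-- The transition kernel of the Glauber dynamics: a uniformly random edge `e` of `K_n` is
chosen and set present with probability `exp(∂_e H(X)) /(1 + exp(∂_e H(X)))`, absent
otherwise. -/
def glauber {s : ℕ} (V : Fin s → ℕ) (Pt : ∀ i, Finset (EdgeK (V i))) (β : Fin s → ℝ)
    (n : ℕ) (X Y : Config n) : ℝ :=
  ((n.choose 2 : ℝ))⁻¹ * ∑ e : EdgeK n,
    ((if Y = setEdge X e true then
        Real.exp (dH V Pt β n X e) / (1 + Real.exp (dH V Pt β n X e)) else 0)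
      + (if Y = setEdge X e false then 1 / (1 + Real.exp (dH V Pt β n X e)) else 0))

/-- The `t`-step distribution of the Markov chain with one-step kernel `K`,
started from a given state. -/
def kernelStep {n : ℕ} (K : Config n → Config n → ℝ) : ℕ → Config n → Config n → ℝ
  | 0 => fun x y => if y = x then 1 else 0
  | (t+1) => fun x y => ∑ z, kernelStep K t x z * K z y

/-- Total variation distance between two (signed) distributions on `Config n`. -/
def tvDist {n : ℕ} (μ ν : Config n → ℝ) : ℝ := (∑ Y, |μ Y - ν Y|) / 2

/-- `mixes K π t` says that after `t` steps the chain with kernel `K` is within total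
variation distance `e⁻¹` of `π` from every starting state. -/
def mixes {n : ℕ} (K : Config n → Config n → ℝ) (π : Config n → ℝ) (t : ℕ) : Prop :=
  ∀ x, tvDist (kernelStep K t x) π ≤ Real.exp (-1)

/-- The mixing time: the least `t` such that from every starting state the chain is within
total variation distance `e⁻¹` of `π`. -/
def mixingTime {n : ℕ} (K : Config n → Config n → ℝ) (π : Config n → ℝ) : ℕ :=
  sInf {t | mixes K π t}

/-- `Ψ(p) = ∑ i, 2 β_i |E_i| p^(|E_i| - 1)`. -/
def PsiF {s : ℕ} {V : Fin s → ℕ} (Pt : ∀ i, Finset (EdgeK (V i))) (β : Fin s → ℝ)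
    (p : ℝ) : ℝ :=
  ∑ i, 2 * β i * ((Pt i).card : ℝ) * p ^ ((Pt i).card - 1)

/-- `φ(p) = exp(Ψ(p)) / (1 + exp(Ψ(p)))`. -/
def phiF {s : ℕ} {V : Fin s → ℕ} (Pt : ∀ i, Finset (EdgeK (V i))) (β : Fin s → ℝ)
    (p : ℝ) : ℝ :=
  Real.exp (PsiF Pt β p) / (1 + Real.exp (PsiF Pt β p))

/-- High temperature phase: `φ(p) = p` has a unique solution `p*` (in `[0,1]`), which
moreover satisfies `φ'(p*) < 1`. -/
def HighTemp {s : ℕ} {V : Fin s → ℕ} (Pt : ∀ i, Finset (EdgeK (V i))) (β : Fin s → ℝ)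
    (pstar : ℝ) : Prop :=
  pstar ∈ Set.Icc (0:ℝ) 1 ∧ phiF Pt β pstar = pstar ∧
    (∀ q ∈ Set.Icc (0:ℝ) 1, phiF Pt β q = q → q = pstar) ∧
    deriv (phiF Pt β) pstar < 1

/-- Low temperature phase: `φ(p) = p` has at least two solutions `p` with `φ'(p) < 1`. -/
def LowTemp {s : ℕ} {V : Fin s → ℕ} (Pt : ∀ i, Finset (EdgeK (V i))) (β : Fin s → ℝ) : Prop :=
  ∃ p₁ p₂ : ℝ, p₁ ∈ Set.Icc (0:ℝ) 1 ∧ p₂ ∈ Set.Icc (0:ℝ) 1 ∧ p₁ ≠ p₂ ∧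
    phiF Pt β p₁ = p₁ ∧ phiF Pt β p₂ = p₂ ∧
    deriv (phiF Pt β) p₁ < 1 ∧ deriv (phiF Pt β) p₂ < 1

/-- `r_G(X, e) = (N_G(X,e) / (2 |E(G)| n^(|V(G)|-2)))^(1/(|E(G)|-1))`. -/
def rG {n m : ℕ} (X : Config n) (G : Finset (EdgeK m)) (e : EdgeK n) : ℝ :=
  ((rootedCount X G e : ℝ) / (2 * (G.card : ℝ) * (n : ℝ) ^ (m - 2))) ^ (((G.card : ℝ) - 1)⁻¹)

/-- The set of values `r_G(X,e)` over all edges `e` of `K_n` and all graphs `G` on at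
most `L` vertices with at least two edges. -/
def rSet (L n : ℕ) (X : Config n) : Set ℝ :=
  {r | ∃ m, m ≤ L ∧ ∃ G : Finset (EdgeK m), 2 ≤ G.card ∧ ∃ e : EdgeK n, r = rG X G e}

/-- `r̄(X)`: the maximum of `r_G(X,e)` over all edges `e` of `K_n` and all graphs `G` on
at most `L` vertices with at least two edges. -/
def rbar (L n : ℕ) (X : Config n) : ℝ := sSup (rSet L n X)

/-- `r_min(X)`: the corresponding minimum. -/
def rmin (L n : ℕ) (X : Config n) : ℝ := sInf (rSet L n X)

/-- The cycle `C_l` on `l` labelled vertices, as a pattern graph. -/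
def cyclePattern (l : ℕ) [NeZero l] : Finset (EdgeK l) :=
  univ.filter fun e => ∃ i : Fin l, e.1 = s(i, i + 1)

/-- The probability of a length-`T` trajectory `w` for the chain with kernel `K`
started at `x`. -/
def trajProb {n T : ℕ} (K : Config n → Config n → ℝ) (x : Config n)
    (w : Fin (T+1) → Config n) : ℝ :=
  (if w 0 = x then 1 else 0) * ∏ i : Fin T, K (w i.castSucc) (w i.succ)

/-- Two edges of `K_n` share a vertex. -/
def sharesVertex {n : ℕ} (e e' : EdgeK n) : Prop := ∃ v, v ∈ e.1 ∧ v ∈ e'.1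

end



set_option linter.unusedSectionVars false
set_option linter.style.longLine false

namespace ErgmMix

noncomputable section

lemma bool_le_true : ∀ a b : Bool, a ≤ b → a = true → b = true := by decide


/-- Real indicator of a proposition. -/
def ind (P : Prop) : ℝ := if P then 1 else 0

lemma ind_true {P : Prop} (h : P) : ind P = 1 := by simp [ind, h]
lemma ind_false {P : Prop} (h : ¬ P) : ind P = 0 := by simp [ind, h]
lemma ind_nonneg (P : Prop) : 0 ≤ ind P := by unfold ind; split_ifs <;> norm_num
lemma ind_le_one (P : Prop) : ind P ≤ 1 := by unfold ind; split_ifs <;> norm_num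
lemma ind_mono {P Q : Prop} (h : P → Q) : ind P ≤ ind Q := by
  by_cases hP : P
  · rw [ind_true hP, ind_true (h hP)]
  · rw [ind_false hP]; exact ind_nonneg _
lemma ind_or_le (P Q : Prop) : ind (P ∨ Q) ≤ ind P + ind Q := by
  by_cases hP : P
  · rw [ind_true hP, ind_true (Or.inl hP)]; linarith [ind_nonneg Q]
  · by_cases hQ : Q
    · rw [ind_true hQ, ind_true (Or.inr hQ)]; linarith [ind_nonneg P]
    · rw [ind_false (by tauto)]; linarith [ind_nonneg P, ind_nonneg Q]
lemma ind_exists_le {κ : Type*} [Fintype κ] (P : κ → Prop) : ind (∃ k, P k) ≤ ∑ k, ind (P k) := by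
  by_cases h : ∃ k, P k
  · rw [ind_true h]
    obtain ⟨k, hk⟩ := h
    calc (1:ℝ) = ind (P k) := (ind_true hk).symm
      _ ≤ _ := Finset.single_le_sum (f := fun k => ind (P k)) (fun i _ => ind_nonneg _) (mem_univ k)
  · rw [ind_false h]
    exact Finset.sum_nonneg fun i _ => ind_nonneg _

section Generic

variable {ι : Type*} [Fintype ι] [DecidableEq ι]

/-- Expectation of `f` with weights `μ`. -/
def Ex (μ f : (ι → Bool) → ℝ) : ℝ := ∑ x, μ x * f x

/-- Probability weights. -/
def IsProb (μ : (ι → Bool) → ℝ) : Prop := (∀ x, 0 ≤ μ x) ∧ ∑ x, μ x = 1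

/-- Resampling of coordinate `e` with success probability `s`. -/
def Rst (s : ℝ) (e : ι) (f : (ι → Bool) → ℝ) (x : ι → Bool) : ℝ :=
  s * f (Function.update x e true) + (1 - s) * f (Function.update x e false)

/-- One step operator of the heat bath dynamics with update probabilities `σ`. -/
def Aop (σ : (ι → Bool) → ι → ℝ) (f : (ι → Bool) → ℝ) (x : ι → Bool) : ℝ :=
  (Fintype.card ι : ℝ)⁻¹ * ∑ e, Rst (σ x e) e f x

/-- Number of ones. -/
def Nn (x : ι → Bool) : ℝ := ∑ e, ind (x e = true)

/-- Product Bernoulli weights. -/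
def Gp (p : ℝ) (x : ι → Bool) : ℝ := ∏ e, if x e then p else 1 - p

/-- Admissible (monotone) update probabilities. -/
structure SigOK (σ : (ι → Bool) → ι → ℝ) : Prop where
  nonneg : ∀ x e, 0 ≤ σ x e
  le_one : ∀ x e, σ x e ≤ 1
  mono : ∀ e x y, x ≤ y → σ x e ≤ σ y e

/-- A sequence of laws evolving under the dynamics. -/
structure IsChain (σ : (ι → Bool) → ι → ℝ) (μ : ℕ → (ι → Bool) → ℝ) : Prop where
  prob : ∀ t, IsProb (μ t)
  step : ∀ t f, Ex (μ (t+1)) f = Ex (μ t) (Aop σ f)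


lemma Ex_mono {μ f g : (ι → Bool) → ℝ} (hμ : IsProb μ) (h : ∀ x, f x ≤ g x) : Ex μ f ≤ Ex μ g :=
  Finset.sum_le_sum fun x _ => mul_le_mul_of_nonneg_left (h x) (hμ.1 x)

lemma Ex_add (μ f g : (ι → Bool) → ℝ) : Ex μ (fun x => f x + g x) = Ex μ f + Ex μ g := by
  simp [Ex, mul_add, Finset.sum_add_distrib]

lemma Ex_sub (μ f g : (ι → Bool) → ℝ) : Ex μ (fun x => f x - g x) = Ex μ f - Ex μ g := by
  simp [Ex, mul_sub, Finset.sum_sub_distrib]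

lemma Ex_smul (μ f : (ι → Bool) → ℝ) (c : ℝ) : Ex μ (fun x => c * f x) = c * Ex μ f := by
  simp only [Ex, Finset.mul_sum]; exact Finset.sum_congr rfl fun x _ => by ring

lemma Ex_const {μ : (ι → Bool) → ℝ} (hμ : IsProb μ) (c : ℝ) : Ex μ (fun _ => c) = c := by
  simp [Ex, ← Finset.sum_mul, hμ.2]

lemma Ex_sum {κ : Type*} (s : Finset κ) (μ : (ι → Bool) → ℝ) (f : κ → (ι → Bool) → ℝ) :
    Ex μ (fun x => ∑ k ∈ s, f k x) = ∑ k ∈ s, Ex μ (f k) := by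
  simp only [Ex, Finset.mul_sum]; exact Finset.sum_comm

lemma Ex_nonneg {μ f : (ι → Bool) → ℝ} (hμ : IsProb μ) (h : ∀ x, 0 ≤ f x) : 0 ≤ Ex μ f :=
  Finset.sum_nonneg fun x _ => mul_nonneg (hμ.1 x) (h x)

lemma Rst_mono {s : ℝ} (h0 : 0 ≤ s) (h1 : s ≤ 1) (e : ι) {f g : (ι → Bool) → ℝ}
    (h : ∀ x, f x ≤ g x) (x : ι → Bool) : Rst s e f x ≤ Rst s e g x := by
  unfold Rst
  have := mul_le_mul_of_nonneg_left (h (Function.update x e true)) h0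
  have := mul_le_mul_of_nonneg_left (h (Function.update x e false)) (sub_nonneg.2 h1)
  linarith

lemma update_mono {x y : ι → Bool} (h : x ≤ y) (e : ι) (b : Bool) :
    Function.update x e b ≤ Function.update y e b := by
  intro i
  by_cases hi : i = e
  · subst hi; simp
  · simpa [hi] using h i

lemma update_false_le (x : ι → Bool) (e : ι) :
    Function.update x e false ≤ Function.update x e true := by
  intro i
  by_cases hi : i = e
  · subst hi; simp
  · simp [hi]

lemma Aop_mono_fun {σ : (ι → Bool) → ι → ℝ} (hσ : SigOK σ) {f : (ι → Bool) → ℝ}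
    (hf : Monotone f) : Monotone (Aop σ f) := by
  intro x y hxy
  unfold Aop
  refine mul_le_mul_of_nonneg_left (Finset.sum_le_sum fun e _ => ?_) (by positivity)
  unfold Rst
  have h1 := hf (update_mono hxy e true)
  have h2 := hf (update_mono hxy e false)
  have h3 := hf (update_false_le y e)
  have h4 := hσ.mono e x y hxy
  have h5 := hσ.nonneg x e
  have h6 := hσ.le_one x e
  nlinarith [mul_nonneg h5 (sub_nonneg.2 h1), mul_nonneg (sub_nonneg.2 h6) (sub_nonneg.2 h2),
    mul_nonneg (sub_nonneg.2 h4) (sub_nonneg.2 h3)]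

lemma Aop_le {σ : (ι → Bool) → ι → ℝ} (h0 : ∀ x e, 0 ≤ σ x e) (h1 : ∀ x e, σ x e ≤ 1)
    {f g : (ι → Bool) → ℝ} (h : ∀ x, f x ≤ g x) (x : ι → Bool) : Aop σ f x ≤ Aop σ g x := by
  unfold Aop
  exact mul_le_mul_of_nonneg_left
    (Finset.sum_le_sum fun e _ => Rst_mono (h0 x e) (h1 x e) e h x) (by positivity)

lemma Aop_add (σ : (ι → Bool) → ι → ℝ) (f g : (ι → Bool) → ℝ) :
    Aop σ (fun x => f x + g x) = fun x => Aop σ f x + Aop σ g x := by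
  funext x
  unfold Aop Rst
  rw [← mul_add, ← Finset.sum_add_distrib]
  congr 1
  exact Finset.sum_congr rfl fun e _ => by ring

lemma Aop_sub (σ : (ι → Bool) → ι → ℝ) (f g : (ι → Bool) → ℝ) :
    Aop σ (fun x => f x - g x) = fun x => Aop σ f x - Aop σ g x := by
  funext x
  unfold Aop Rst
  rw [← mul_sub, ← Finset.sum_sub_distrib]
  congr 1
  exact Finset.sum_congr rfl fun e _ => by ring

lemma Aop_const [Nonempty ι] (σ : (ι → Bool) → ι → ℝ) (c : ℝ) :
    Aop σ (fun _ => c) = fun _ => c := by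
  funext x
  unfold Aop Rst
  have : (Fintype.card ι : ℝ) ≠ 0 := by
    exact_mod_cast Fintype.card_ne_zero
  have h : ∀ e ∈ (univ : Finset ι), σ x e * c + (1 - σ x e) * c = c := fun e _ => by ring
  rw [Finset.sum_congr rfl h]
  simp [this]

lemma Aop_unit [Nonempty ι] {σ : (ι → Bool) → ι → ℝ} (hσ : SigOK σ) {f : (ι → Bool) → ℝ}
    (hf : ∀ x, 0 ≤ f x ∧ f x ≤ 1) (x : ι → Bool) : 0 ≤ Aop σ f x ∧ Aop σ f x ≤ 1 := by
  constructor
  · have := Aop_le hσ.nonneg hσ.le_one (f := fun _ => 0) (g := f) (fun x => (hf x).1) x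
    rwa [Aop_const] at this
  · have := Aop_le hσ.nonneg hσ.le_one (f := f) (g := fun _ => 1) (fun x => (hf x).2) x
    rwa [Aop_const] at this

lemma SigOK_const {q : ℝ} (h0 : 0 ≤ q) (h1 : q ≤ 1) : SigOK (fun (_ : ι → Bool) (_ : ι) => q) :=
  ⟨fun _ _ => h0, fun _ _ => h1, fun _ _ _ _ => le_rfl⟩

lemma iter_mono {σ : (ι → Bool) → ι → ℝ} (hσ : SigOK σ) {f : (ι → Bool) → ℝ}
    (hf : Monotone f) (t : ℕ) : Monotone ((Aop σ)^[t] f) := by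
  induction t generalizing f with
  | zero => simpa using hf
  | succ t ih => rw [Function.iterate_succ_apply]; exact ih (Aop_mono_fun hσ hf)

lemma iter_unit [Nonempty ι] {σ : (ι → Bool) → ι → ℝ} (hσ : SigOK σ) {f : (ι → Bool) → ℝ}
    (hf : ∀ x, 0 ≤ f x ∧ f x ≤ 1) (t : ℕ) (x : ι → Bool) :
    0 ≤ (Aop σ)^[t] f x ∧ (Aop σ)^[t] f x ≤ 1 := by
  induction t generalizing f with
  | zero => simpa using hf x
  | succ t ih => rw [Function.iterate_succ_apply]; exact ih (Aop_unit hσ hf)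

lemma iter_add (σ : (ι → Bool) → ι → ℝ) (f g : (ι → Bool) → ℝ) (t : ℕ) :
    (Aop σ)^[t] (fun x => f x + g x) = fun x => (Aop σ)^[t] f x + (Aop σ)^[t] g x := by
  induction t generalizing f g with
  | zero => rfl
  | succ t ih => simp only [Function.iterate_succ_apply, Aop_add, ih]

lemma iter_sub (σ : (ι → Bool) → ι → ℝ) (f g : (ι → Bool) → ℝ) (t : ℕ) :
    (Aop σ)^[t] (fun x => f x - g x) = fun x => (Aop σ)^[t] f x - (Aop σ)^[t] g x := by
  induction t generalizing f g with
  | zero => rfl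
  | succ t ih => simp only [Function.iterate_succ_apply, Aop_sub, ih]

lemma IsChain.iter {σ : (ι → Bool) → ι → ℝ} {μ : ℕ → (ι → Bool) → ℝ} (h : IsChain σ μ)
    (s t : ℕ) (f : (ι → Bool) → ℝ) : Ex (μ (s + t)) f = Ex (μ s) ((Aop σ)^[t] f) := by
  induction t generalizing f with
  | zero => rfl
  | succ t ih => rw [← add_assoc, h.step, ih, Function.iterate_succ_apply]

/-! ### The number of ones -/

lemma Nn_mono : Monotone (Nn : (ι → Bool) → ℝ) := by
  intro x y h
  refine Finset.sum_le_sum fun e _ => ind_mono fun hx => ?_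
  exact bool_le_true _ _ (h e) hx

lemma Nn_add_one_le {x y : ι → Bool} (h : x ≤ y) (hne : x ≠ y) : Nn x + 1 ≤ Nn y := by
  obtain ⟨e, he⟩ := Function.ne_iff.1 hne
  have h1 : ∀ i, x i = true → y i = true := fun i hi => bool_le_true _ _ (h i) hi
  have hx : x e = false := by
    by_contra hc
    simp at hc
    exact he (by rw [hc, h1 e hc])
  have hy : y e = true := by
    by_contra hc
    simp at hc
    exact he (by rw [hc, hx])
  unfold Nn
  rw [← Finset.add_sum_erase _ _ (mem_univ e), ← Finset.add_sum_erase (a := e) univ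
    (fun e => ind (y e = true)) (mem_univ e)]
  rw [ind_false (by simp [hx]), ind_true hy]
  have : ∑ i ∈ univ.erase e, ind (x i = true) ≤ ∑ i ∈ univ.erase e, ind (y i = true) :=
    Finset.sum_le_sum fun i _ => ind_mono (h1 i)
  linarith

lemma Nn_nonneg (x : ι → Bool) : 0 ≤ Nn x := Finset.sum_nonneg fun _ _ => ind_nonneg _
lemma Nn_le (x : ι → Bool) : Nn x ≤ Fintype.card ι := by
  unfold Nn
  calc _ ≤ ∑ e : ι, (1:ℝ) := Finset.sum_le_sum fun _ _ => ind_le_one _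
    _ = _ := by simp

lemma Nn_top : Nn (⊤ : ι → Bool) = Fintype.card ι := by
  unfold Nn
  simp [ind]

lemma Nn_bot : Nn (⊥ : ι → Bool) = 0 := by
  unfold Nn
  simp [ind]

lemma mono_Nn_add {f : (ι → Bool) → ℝ} (hf : ∀ x, 0 ≤ f x ∧ f x ≤ 1) :
    Monotone (fun x => Nn x + f x) := by
  intro x y h
  by_cases hne : x = y
  · rw [hne]
  · have := Nn_add_one_le h hne
    have := hf x
    have := hf y
    simp only
    linarith

lemma mono_Nn_sub {f : (ι → Bool) → ℝ} (hf : ∀ x, 0 ≤ f x ∧ f x ≤ 1) :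
    Monotone (fun x => Nn x - f x) := by
  intro x y h
  by_cases hne : x = y
  · rw [hne]
  · have := Nn_add_one_le h hne
    have := hf x
    have := hf y
    simp only
    linarith

/-- Total variation control by the expected number of ones. -/
lemma osc_le {σ : (ι → Bool) → ι → ℝ} (hσ : SigOK σ) {f : (ι → Bool) → ℝ}
    (hf : ∀ x, 0 ≤ f x ∧ f x ≤ 1) (t : ℕ) {x y : ι → Bool} (h : x ≤ y) :
    |(Aop σ)^[t] f y - (Aop σ)^[t] f x| ≤ (Aop σ)^[t] Nn y - (Aop σ)^[t] Nn x := by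
  have h1 := iter_mono hσ (mono_Nn_add hf) t h
  have h2 := iter_mono hσ (mono_Nn_sub hf) t h
  rw [iter_add] at h1
  rw [iter_sub] at h2
  simp only at h1 h2
  rw [abs_le]
  constructor <;> linarith

lemma Nn_update (x : ι → Bool) (e : ι) (b : Bool) :
    Nn (Function.update x e b) = Nn x - ind (x e = true) + ind (b = true) := by
  unfold Nn
  rw [← Finset.add_sum_erase _ _ (mem_univ e), ← Finset.add_sum_erase (a := e) univ
    (fun e => ind (x e = true)) (mem_univ e)]
  have : ∑ i ∈ univ.erase e, ind (Function.update x e b i = true)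
      = ∑ i ∈ univ.erase e, ind (x i = true) := by
    refine Finset.sum_congr rfl fun i hi => ?_
    rw [Function.update_of_ne (Finset.ne_of_mem_erase hi)]
  rw [this, Function.update_self]
  ring

lemma Aop_Nn [Nonempty ι] (σ : (ι → Bool) → ι → ℝ) (x : ι → Bool) :
    Aop σ Nn x = (1 - (Fintype.card ι : ℝ)⁻¹) * Nn x + (Fintype.card ι : ℝ)⁻¹ * ∑ e, σ x e := by
  have hM : (Fintype.card ι : ℝ) ≠ 0 := by
    exact_mod_cast Fintype.card_ne_zero
  unfold Aop Rst
  have : ∀ e ∈ (univ : Finset ι), σ x e * Nn (Function.update x e true)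
      + (1 - σ x e) * Nn (Function.update x e false) = Nn x - ind (x e = true) + σ x e := by
    intro e _
    rw [Nn_update, Nn_update]
    simp [ind]
    ring
  rw [Finset.sum_congr rfl this, Finset.sum_add_distrib, Finset.sum_sub_distrib]
  simp only [Finset.sum_const, Finset.card_univ, nsmul_eq_mul]
  change _ * ((Fintype.card ι : ℝ) * Nn x - Nn x + _) = _
  field_simp

/-! ### Stationarity -/

lemma sum_update_pair (F : (ι → Bool) → ℝ) (e : ι) :
    ∑ x, (F (Function.update x e true) + F (Function.update x e false)) = 2 * ∑ x, F x := by
  have hinv : Function.Involutive (fun x : ι → Bool => Function.update x e (!x e)) := by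
    intro x
    simp
  have h1 : ∑ x, F (Function.update x e (!x e)) = ∑ x, F x :=
    Equiv.sum_comp hinv.toPerm F
  have h2 : ∀ x : ι → Bool, F (Function.update x e true) + F (Function.update x e false)
      = F x + F (Function.update x e (!x e)) := by
    intro x
    cases hx : x e
    · have : Function.update x e false = x := by rw [← hx]; simp
      rw [this]; simp; ring
    · have : Function.update x e true = x := by rw [← hx]; simp
      rw [this]; simp
  rw [Finset.sum_congr rfl fun x _ => h2 x, Finset.sum_add_distrib, h1]
  ring

lemma stat_Rst (w : (ι → Bool) → ℝ) (e : ι) (s : (ι → Bool) → ℝ)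
    (hs : ∀ x b, s (Function.update x e b) = s x)
    (hw : ∀ x, w (Function.update x e true) * (1 - s x) = w (Function.update x e false) * s x)
    (f : (ι → Bool) → ℝ) : Ex w (fun x => Rst (s x) e f x) = Ex w f := by
  have h1 := sum_update_pair (fun x => w x * Rst (s x) e f x) e
  have h2 := sum_update_pair (fun x => w x * f x) e
  unfold Ex
  suffices h : 2 * ∑ x, w x * Rst (s x) e f x = 2 * ∑ x, w x * f x by linarith
  rw [← h1, ← h2]
  refine Finset.sum_congr rfl fun x _ => ?_
  simp only [Rst, hs, Function.update_idem]
  have := hw x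
  linear_combination (f (Function.update x e false) - f (Function.update x e true)) * this

lemma stat_Aop [Nonempty ι] (w : (ι → Bool) → ℝ) (σ : (ι → Bool) → ι → ℝ)
    (hs : ∀ e x b, σ (Function.update x e b) e = σ x e)
    (hw : ∀ e x, w (Function.update x e true) * (1 - σ x e)
      = w (Function.update x e false) * σ x e)
    (f : (ι → Bool) → ℝ) : Ex w (Aop σ f) = Ex w f := by
  have hM : (Fintype.card ι : ℝ) ≠ 0 := by
    exact_mod_cast Fintype.card_ne_zero
  unfold Aop
  rw [Ex_smul, Ex_sum]
  rw [Finset.sum_congr rfl fun e _ => stat_Rst w e (fun x => σ x e) (hs e) (hw e) f]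
  simp [hM]

lemma Gp_update (p : ℝ) (x : ι → Bool) (e : ι) (b : Bool) :
    Gp p (Function.update x e b) = (if b then p else 1 - p) *
      ∏ i ∈ univ.erase e, if x i then p else 1 - p := by
  unfold Gp
  rw [← Finset.mul_prod_erase _ _ (mem_univ e)]
  congr 1
  · simp
  · refine Finset.prod_congr rfl fun i hi => ?_
    rw [Function.update_of_ne (Finset.ne_of_mem_erase hi)]

lemma Gp_Rst (p : ℝ) (e : ι) (f : (ι → Bool) → ℝ) : Ex (Gp p) (Rst p e f) = Ex (Gp p) f := by
  refine stat_Rst (Gp p) e (fun _ => p) (fun _ _ => rfl) (fun x => ?_) f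
  rw [Gp_update, Gp_update]
  simp
  ring

lemma Gp_Aop [Nonempty ι] (p : ℝ) (f : (ι → Bool) → ℝ) :
    Ex (Gp p) (Aop (fun _ _ => p) f) = Ex (Gp p) f := by
  refine stat_Aop (Gp p) _ (fun _ _ _ => rfl) (fun e x => ?_) f
  rw [Gp_update, Gp_update]
  simp
  ring

lemma Gp_prob {p : ℝ} (h0 : 0 ≤ p) (h1 : p ≤ 1) : IsProb (Gp p : (ι → Bool) → ℝ) := by
  constructor
  · intro x
    refine Finset.prod_nonneg fun e _ => ?_
    split_ifs <;> linarith
  · unfold Gp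
    have := Finset.prod_univ_sum (fun _ : ι => (univ : Finset Bool))
      (fun _ b => if b then p else 1 - p)
    rw [Fintype.piFinset_univ] at this
    rw [← this]
    simp

lemma Gp_iter [Nonempty ι] (p : ℝ) (f : (ι → Bool) → ℝ) (t : ℕ) :
    Ex (Gp p) ((Aop (fun _ _ => p))^[t] f) = Ex (Gp p) f := by
  induction t generalizing f with
  | zero => rfl
  | succ t ih => rw [Function.iterate_succ_apply, ih, Gp_Aop]

lemma Gp_allTrue (p : ℝ) (hp0 : 0 ≤ p) (hp1 : p ≤ 1) (s : Finset ι) :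
    Ex (Gp p) (fun x => ind (∀ c ∈ s, x c = true)) = p ^ s.card := by
  induction s using Finset.induction_on with
  | empty =>
    simp [ind]
    exact Ex_const (Gp_prob hp0 hp1) 1
  | insert e s he ih =>
    rw [← Gp_Rst p e, Finset.card_insert_of_notMem he, pow_succ, ← ih, mul_comm _ p, ← Ex_smul]
    congr 1
    funext x
    unfold Rst
    beta_reduce
    rw [ind_false (P := ∀ c ∈ insert e s, Function.update x e false c = true)]
    · simp only [mul_zero, add_zero]
      congr 2
      apply propext
      constructor
      · intro h c hc
        have := h c (Finset.mem_insert_of_mem hc)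
        rwa [Function.update_of_ne (fun hce : c = e => he (hce ▸ hc))] at this
      · intro h c hc
        by_cases hce : c = e
        · subst hce; simp
        · rw [Function.update_of_ne hce]
          exact h c ((Finset.mem_insert.1 hc).resolve_left hce)
    · intro h
      have := h e (Finset.mem_insert_self _ _)
      simp at this

/-! ### Bounded differences inequality -/

lemma exp_le_chord {c y : ℝ} (hc : 0 < c) (hy : |y| ≤ c) :
    Real.exp y ≤ Real.cosh c + y / c * Real.sinh c := by
  obtain ⟨h1, h2⟩ := abs_le.1 hy
  have k1 : 0 ≤ (c + y) / (2 * c) := div_nonneg (by linarith) (by linarith)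
  have k2 : 0 ≤ (c - y) / (2 * c) := div_nonneg (by linarith) (by linarith)
  have k3 : (c + y) / (2 * c) + (c - y) / (2 * c) = 1 := by field_simp; ring
  have := convexOn_exp.2 (Set.mem_univ c) (Set.mem_univ (-c)) k1 k2 k3
  simp only [smul_eq_mul] at this
  have e1 : (c + y) / (2 * c) * c + (c - y) / (2 * c) * -c = y := by field_simp; ring
  rw [e1] at this
  refine this.trans (le_of_eq ?_)
  rw [Real.cosh_eq, Real.sinh_eq]
  field_simp
  ring

lemma two_point {p a b c : ℝ} (h0 : 0 ≤ p) (h1 : p ≤ 1) (hc : |a - b| ≤ c) :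
    p * Real.exp a + (1 - p) * Real.exp b ≤ Real.exp (p * a + (1 - p) * b + c ^ 2 / 2) := by
  have hc0 : 0 ≤ c := (abs_nonneg _).trans hc
  rcases hc0.eq_or_lt with hc0 | hc0
  · rw [← hc0] at hc ⊢
    have : a = b := by
      have := abs_nonpos_iff.1 hc; linarith
    subst this
    refine le_of_eq ?_
    have : p * a + (1 - p) * a + (0:ℝ) ^ 2 / 2 = a := by ring
    rw [this]; ring
  · set m := p * a + (1 - p) * b with hm
    obtain ⟨h3, h4⟩ := abs_le.1 hc
    have ha : |a - m| ≤ c := by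
      rw [hm, abs_le]; constructor <;> nlinarith
    have hb : |b - m| ≤ c := by
      rw [hm, abs_le]; constructor <;> nlinarith
    have k1 := exp_le_chord hc0 ha
    have k2 := exp_le_chord hc0 hb
    have k3 : p * Real.exp (a - m) + (1 - p) * Real.exp (b - m) ≤ Real.cosh c := by
      have : p * ((a - m) / c * Real.sinh c) + (1 - p) * ((b - m) / c * Real.sinh c) = 0 := by
        have : p * (a - m) + (1 - p) * (b - m) = 0 := by rw [hm]; ring
        have h5 : p * ((a - m) / c * Real.sinh c) + (1 - p) * ((b - m) / c * Real.sinh c)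
          = (p * (a - m) + (1 - p) * (b - m)) / c * Real.sinh c := by ring
        rw [h5, this]; simp
      nlinarith [mul_le_mul_of_nonneg_left k1 h0,
        mul_le_mul_of_nonneg_left k2 (sub_nonneg.2 h1)]
    have k4 := k3.trans (Real.cosh_le_exp_half_sq c)
    rw [Real.exp_add]
    have e1 : Real.exp a = Real.exp m * Real.exp (a - m) := by rw [← Real.exp_add]; ring_nf
    have e2 : Real.exp b = Real.exp m * Real.exp (b - m) := by rw [← Real.exp_add]; ring_nf
    rw [e1, e2]
    nlinarith [Real.exp_pos m]

/-- Successive resampling along a list. -/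
def El (p : ℝ) : List ι → ((ι → Bool) → ℝ) → (ι → Bool) → ℝ
  | [], f => f
  | e :: l, f => Rst p e (El p l f)

lemma El_diff {p : ℝ} (h0 : 0 ≤ p) (h1 : p ≤ 1) {f : (ι → Bool) → ℝ} {c : ι → ℝ}
    (hf : ∀ x e, |f (Function.update x e true) - f (Function.update x e false)| ≤ c e)
    (l : List ι) : ∀ x e, |El p l f (Function.update x e true)
      - El p l f (Function.update x e false)| ≤ c e := by
  induction l with
  | nil => exact hf
  | cons e' l ih =>
    intro x e
    unfold El Rst
    by_cases h : e = e'
    · subst h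
      simp
      exact (abs_nonneg _).trans (hf x e)
    · simp only [Function.update_comm h]
      have k1 := abs_le.1 (ih (Function.update x e' true) e)
      have k2 := abs_le.1 (ih (Function.update x e' false) e)
      rw [abs_le]
      constructor <;> nlinarith

lemma El_exp {p : ℝ} (h0 : 0 ≤ p) (h1 : p ≤ 1) {f : (ι → Bool) → ℝ} {c : ι → ℝ}
    (hf : ∀ x e, |f (Function.update x e true) - f (Function.update x e false)| ≤ c e)
    (l : List ι) (x : ι → Bool) : El p l (fun x => Real.exp (f x)) x
      ≤ Real.exp (El p l f x + (l.map fun e => c e ^ 2 / 2).sum) := by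
  induction l generalizing x with
  | nil => simp [El]
  | cons e l ih =>
    have hd := El_diff h0 h1 hf l x e
    refine (Rst_mono h0 h1 e ih x).trans ?_
    change _ ≤ Real.exp (Rst p e (El p l f) x + _)
    unfold Rst
    simp only [Real.exp_add, ← mul_assoc]
    rw [← add_mul, List.map_cons, List.sum_cons, Real.exp_add, ← Real.exp_add, ← mul_assoc]
    refine mul_le_mul_of_nonneg_right ?_ (Real.exp_pos _).le
    rw [← Real.exp_add]
    exact two_point h0 h1 hd

lemma El_const (p : ℝ) (f : (ι → Bool) → ℝ) (l : List ι) (x y : ι → Bool)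
    (h : ∀ e, e ∉ l → x e = y e) : El p l f x = El p l f y := by
  induction l generalizing x y with
  | nil =>
    have : x = y := funext fun e => h e (by simp)
    rw [this]
  | cons e l ih =>
    unfold El Rst
    have key : ∀ b, El p l f (Function.update x e b) = El p l f (Function.update y e b) := by
      intro b
      refine ih _ _ fun i hi => ?_
      by_cases hie : i = e
      · subst hie; simp
      · rw [Function.update_of_ne hie, Function.update_of_ne hie]
        exact h i (by simp [hie, hi])
    rw [key, key]

lemma Gp_El (p : ℝ) (f : (ι → Bool) → ℝ) (l : List ι) : Ex (Gp p) (El p l f) = Ex (Gp p) f := by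
  induction l with
  | nil => rfl
  | cons e l ih => unfold El; rw [Gp_Rst, ih]

lemma Gp_exp {p : ℝ} (h0 : 0 ≤ p) (h1 : p ≤ 1) {f : (ι → Bool) → ℝ} {c : ι → ℝ}
    (hf : ∀ x e, |f (Function.update x e true) - f (Function.update x e false)| ≤ c e) :
    Ex (Gp p) (fun x => Real.exp (f x)) ≤ Real.exp (Ex (Gp p) f + ∑ e, c e ^ 2 / 2) := by
  set l := (univ : Finset ι).toList with hl
  have hG := Gp_prob (ι := ι) h0 h1
  have hc : ∀ x, El p l f x = Ex (Gp p) f := by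
    intro x
    rw [← Gp_El p f l]
    have : El p l f = fun _ => El p l f x :=
      funext fun y => El_const p f l y x fun e he => absurd (by simp [hl]) he
    rw [this, Ex_const hG]
  rw [← Gp_El p _ l]
  refine (Ex_mono hG (El_exp h0 h1 hf l)).trans ?_
  simp only [hc]
  rw [Ex_const hG]
  simp [hl]

lemma Gp_tail {p : ℝ} (h0 : 0 ≤ p) (h1 : p ≤ 1) {f : (ι → Bool) → ℝ} {c : ι → ℝ}
    (hf : ∀ x e, |f (Function.update x e true) - f (Function.update x e false)| ≤ c e)
    {v t : ℝ} (hv : 0 < v) (hcv : ∑ e, c e ^ 2 ≤ v) (ht : 0 ≤ t) :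
    Ex (Gp p) (fun x => ind (Ex (Gp p) f + t ≤ f x)) ≤ Real.exp (- (t ^ 2 / (2 * v))) := by
  have hG := Gp_prob (ι := ι) h0 h1
  set m := Ex (Gp p) f with hm
  set r := t / v with hr
  have hr0 : 0 ≤ r := div_nonneg ht hv.le
  have key := Gp_exp h0 h1 (f := fun x => r * f x) (c := fun e => r * c e) (fun x e => by
    rw [← mul_sub, abs_mul, abs_of_nonneg hr0]
    exact mul_le_mul_of_nonneg_left (hf x e) hr0)
  rw [Ex_smul, ← hm] at key
  have h2 : ∀ x, ind (m + t ≤ f x) ≤ Real.exp (-(r * (m + t))) * Real.exp (r * f x) := by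
    intro x
    rw [← Real.exp_add]
    by_cases h : m + t ≤ f x
    · rw [ind_true h]
      apply Real.one_le_exp
      nlinarith
    · rw [ind_false h]
      exact (Real.exp_pos _).le
  refine (Ex_mono hG h2).trans ?_
  rw [Ex_smul]
  refine (mul_le_mul_of_nonneg_left key (Real.exp_pos _).le).trans ?_
  rw [← Real.exp_add]
  apply Real.exp_le_exp.2
  have h3 : ∑ e, (r * c e) ^ 2 / 2 = r ^ 2 / 2 * ∑ e, c e ^ 2 := by
    rw [Finset.mul_sum]; exact Finset.sum_congr rfl fun e _ => by ring
  rw [h3]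
  have h4 : r ^ 2 / 2 * ∑ e, c e ^ 2 ≤ r ^ 2 / 2 * v :=
    mul_le_mul_of_nonneg_left hcv (by positivity)
  have h5 : r ^ 2 / 2 * v = t ^ 2 / (2 * v) := by rw [hr]; field_simp
  have h6 : r * t = 2 * (t ^ 2 / (2 * v)) := by rw [hr]; field_simp
  nlinarith

end Generic
end
end ErgmMix


namespace ErgmMix

noncomputable section

section Generic2

variable {ι : Type*} [Fintype ι] [DecidableEq ι]

/-- Approximate stochastic domination by the product measure. -/
def DomUp (μ : (ι → Bool) → ℝ) (p ε : ℝ) : Prop :=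
  ∀ f : (ι → Bool) → ℝ, Monotone f → (∀ x, 0 ≤ f x ∧ f x ≤ 1) → Ex μ f ≤ Ex (Gp p) f + ε

/-- Approximate stochastic domination of the product measure. -/
def DomLo (μ : (ι → Bool) → ℝ) (p ε : ℝ) : Prop :=
  ∀ f : (ι → Bool) → ℝ, Monotone f → (∀ x, 0 ≤ f x ∧ f x ≤ 1) → Ex (Gp p) f - ε ≤ Ex μ f

lemma ind_upper_mono {B : (ι → Bool) → Prop} (hB : ∀ x y, x ≤ y → B x → B y) :
    Monotone (fun x => ind (B x)) := fun x y h => ind_mono (hB x y h)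

lemma ind_unit (B : (ι → Bool) → Prop) (x : ι → Bool) : 0 ≤ ind (B x) ∧ ind (B x) ≤ 1 :=
  ⟨ind_nonneg _, ind_le_one _⟩

lemma DomLo.lower {μ : (ι → Bool) → ℝ} {p ε : ℝ} (hμ : IsProb μ) (h0 : 0 ≤ p) (h1 : p ≤ 1)
    (h : DomLo μ p ε) {B : (ι → Bool) → Prop} (hB : ∀ x y, x ≤ y → B y → B x) :
    Ex μ (fun x => ind (B x)) ≤ Ex (Gp p) (fun x => ind (B x)) + ε := by
  have h2 := h (fun x => 1 - ind (B x)) (fun x y hxy => by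
    have := ind_mono (hB x y hxy)
    simp only
    linarith) (fun x => by
    have := ind_unit B x
    constructor <;> linarith)
  rw [Ex_sub, Ex_sub, Ex_const hμ, Ex_const (Gp_prob h0 h1)] at h2
  linarith

lemma DomUp.upper {μ : (ι → Bool) → ℝ} {p ε : ℝ}
    (h : DomUp μ p ε) {B : (ι → Bool) → Prop} (hB : ∀ x y, x ≤ y → B x → B y) :
    Ex μ (fun x => ind (B x)) ≤ Ex (Gp p) (fun x => ind (B x)) + ε :=
  h _ (ind_upper_mono hB) (ind_unit B)

lemma Aop_compare_up [Nonempty ι] {σ : (ι → Bool) → ι → ℝ} (hσ : SigOK σ) {q : ℝ} (h0 : 0 ≤ q)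
    (h1 : q ≤ 1) {B : (ι → Bool) → Prop} (hB : ∀ x, ¬ B x → ∀ e, σ x e ≤ q)
    {f : (ι → Bool) → ℝ} (hf : Monotone f) (hfu : ∀ x, 0 ≤ f x ∧ f x ≤ 1) (x : ι → Bool) :
    Aop σ f x ≤ Aop (fun _ _ => q) f x + ind (B x) := by
  by_cases hx : B x
  · rw [ind_true hx]
    have := Aop_unit hσ hfu x
    have := Aop_unit (SigOK_const h0 h1) hfu x
    linarith
  · rw [ind_false hx, add_zero]
    unfold Aop
    refine mul_le_mul_of_nonneg_left (Finset.sum_le_sum fun e _ => ?_) (by positivity)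
    unfold Rst
    have h3 := hf (update_false_le x e)
    have h4 := hB x hx e
    nlinarith

lemma Aop_compare_lo [Nonempty ι] {σ : (ι → Bool) → ι → ℝ} (hσ : SigOK σ) {q : ℝ} (h0 : 0 ≤ q)
    (h1 : q ≤ 1) {B : (ι → Bool) → Prop} (hB : ∀ x, ¬ B x → ∀ e, q ≤ σ x e)
    {f : (ι → Bool) → ℝ} (hf : Monotone f) (hfu : ∀ x, 0 ≤ f x ∧ f x ≤ 1) (x : ι → Bool) :
    Aop (fun _ _ => q) f x - ind (B x) ≤ Aop σ f x := by
  by_cases hx : B x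
  · rw [ind_true hx]
    have := Aop_unit hσ hfu x
    have := Aop_unit (SigOK_const h0 h1) hfu x
    linarith
  · rw [ind_false hx, sub_zero]
    unfold Aop
    refine mul_le_mul_of_nonneg_left (Finset.sum_le_sum fun e _ => ?_) (by positivity)
    unfold Rst
    have h3 := hf (update_false_le x e)
    have h4 := hB x hx e
    nlinarith

lemma chain_compare_up [Nonempty ι] {σ : (ι → Bool) → ι → ℝ} (hσ : SigOK σ)
    {μ : ℕ → (ι → Bool) → ℝ} (hμ : IsChain σ μ) {q : ℝ} (h0 : 0 ≤ q)
    (h1 : q ≤ 1) {B : (ι → Bool) → Prop} (hB : ∀ x, ¬ B x → ∀ e, σ x e ≤ q) {η : ℝ} {s : ℕ}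
    (T : ℕ) (hη : ∀ r, r < T → Ex (μ (s + r)) (fun x => ind (B x)) ≤ η)
    {f : (ι → Bool) → ℝ} (hf : Monotone f) (hfu : ∀ x, 0 ≤ f x ∧ f x ≤ 1) :
    Ex (μ (s + T)) f ≤ Ex (μ s) ((Aop (fun _ _ => q))^[T] f) + T * η := by
  induction T generalizing f with
  | zero => simp
  | succ T ih =>
    rw [← add_assoc, hμ.step]
    refine (Ex_mono (hμ.prob _) (Aop_compare_up hσ h0 h1 hB hf hfu)).trans ?_
    rw [Ex_add]
    have k1 := hη T (Nat.lt_succ_self T)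
    have k2 := ih (fun r hr => hη r (by omega)) (Aop_mono_fun (SigOK_const h0 h1) hf)
      (Aop_unit (SigOK_const h0 h1) hfu)
    rw [Function.iterate_succ_apply]
    push_cast
    linarith

lemma chain_compare_lo [Nonempty ι] {σ : (ι → Bool) → ι → ℝ} (hσ : SigOK σ)
    {μ : ℕ → (ι → Bool) → ℝ} (hμ : IsChain σ μ) {q : ℝ} (h0 : 0 ≤ q)
    (h1 : q ≤ 1) {B : (ι → Bool) → Prop} (hB : ∀ x, ¬ B x → ∀ e, q ≤ σ x e) {η : ℝ} {s : ℕ}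
    (T : ℕ) (hη : ∀ r, r < T → Ex (μ (s + r)) (fun x => ind (B x)) ≤ η)
    {f : (ι → Bool) → ℝ} (hf : Monotone f) (hfu : ∀ x, 0 ≤ f x ∧ f x ≤ 1) :
    Ex (μ s) ((Aop (fun _ _ => q))^[T] f) - T * η ≤ Ex (μ (s + T)) f := by
  induction T generalizing f with
  | zero => simp
  | succ T ih =>
    rw [← add_assoc, hμ.step]
    refine le_trans ?_ (Ex_mono (hμ.prob _) (Aop_compare_lo hσ h0 h1 hB hf hfu))
    rw [Ex_sub]
    have k1 := hη T (Nat.lt_succ_self T)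
    have k2 := ih (fun r hr => hη r (by omega)) (Aop_mono_fun (SigOK_const h0 h1) hf)
      (Aop_unit (SigOK_const h0 h1) hfu)
    rw [Function.iterate_succ_apply]
    push_cast
    linarith

/-- Number of ones under the independent dynamics. -/
lemma indep_Nn [Nonempty ι] (q : ℝ) (t : ℕ) (x : ι → Bool) :
    (Aop (fun _ _ => q))^[t] Nn x = (1 - (Fintype.card ι : ℝ)⁻¹) ^ t * Nn x
      + q * Fintype.card ι * (1 - (1 - (Fintype.card ι : ℝ)⁻¹) ^ t) := by
  have hM : (Fintype.card ι : ℝ) ≠ 0 := by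
    exact_mod_cast Fintype.card_ne_zero
  have gen : ∀ (t : ℕ) (a b : ℝ) (x : ι → Bool),
      (Aop (fun _ _ => q))^[t] (fun x => a * Nn x + b) x
      = a * ((1 - (Fintype.card ι : ℝ)⁻¹) ^ t * Nn x
      + q * Fintype.card ι * (1 - (1 - (Fintype.card ι : ℝ)⁻¹) ^ t)) + b := by
    intro t
    induction t with
    | zero => intro a b x; simp
    | succ t ih =>
      intro a b x
      rw [Function.iterate_succ_apply]
      have : Aop (fun _ _ => q) (fun x : ι → Bool => a * Nn x + b) =
          fun x => (a * (1 - (Fintype.card ι : ℝ)⁻¹)) * Nn x + (a * q + b) := by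
        rw [Aop_add (fun _ _ => q) (fun x => a * Nn x) (fun _ => b), Aop_const]
        funext x
        have h2 : Aop (fun _ _ => q) (fun x : ι → Bool => a * Nn x) x
            = a * Aop (fun _ _ => q) Nn x := by
          unfold Aop Rst
          rw [← mul_assoc, mul_comm a, mul_assoc, Finset.mul_sum _ _ a]
          congr 1
          exact Finset.sum_congr rfl fun e _ => by ring
        rw [h2, Aop_Nn]
        simp
        field_simp
        ring
      rw [this, ih]
      rw [pow_succ]
      field_simp
      ring
  have := gen t 1 0 x
  simpa using this

lemma indep_mix [Nonempty ι] {q : ℝ} (h0 : 0 ≤ q) (h1 : q ≤ 1) {f : (ι → Bool) → ℝ}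
    (hfu : ∀ x, 0 ≤ f x ∧ f x ≤ 1) (t : ℕ) {y : ι → Bool} (hy : y = ⊤ ∨ y = ⊥) :
    |(Aop (fun _ _ => q))^[t] f y - Ex (Gp q) f|
      ≤ Fintype.card ι * (1 - (Fintype.card ι : ℝ)⁻¹) ^ t := by
  have hM : (1:ℝ) ≤ (Fintype.card ι : ℝ) := by
    exact_mod_cast Fintype.card_pos
  have hr : 0 ≤ (1 - (Fintype.card ι : ℝ)⁻¹) ^ t := by
    apply pow_nonneg
    rw [sub_nonneg]
    exact inv_le_one_of_one_le₀ hM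
  have hG := Gp_prob (ι := ι) h0 h1
  have key : ∀ x, |(Aop (fun _ _ => q))^[t] f y - (Aop (fun _ _ => q))^[t] f x|
      ≤ Fintype.card ι * (1 - (Fintype.card ι : ℝ)⁻¹) ^ t := by
    intro x
    have k1 := Nn_nonneg x
    have k2 := Nn_le x
    rcases hy with rfl | rfl
    · refine (osc_le (SigOK_const h0 h1) hfu t (le_top : x ≤ ⊤)).trans ?_
      rw [indep_Nn, indep_Nn, Nn_top]
      nlinarith
    · rw [abs_sub_comm]
      refine (osc_le (SigOK_const h0 h1) hfu t (bot_le : ⊥ ≤ x)).trans ?_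
      rw [indep_Nn, indep_Nn, Nn_bot]
      nlinarith
  rw [← Gp_iter q f t, ← Ex_const hG ((Aop (fun _ _ => q))^[t] f y), ← Ex_sub]
  have k3 := Ex_mono hG fun x => (abs_le.1 (key x)).1
  have k4 := Ex_mono hG fun x => (abs_le.1 (key x)).2
  rw [Ex_const hG] at k3 k4
  exact abs_le.2 ⟨k3, k4⟩

/-- One burn-in phase from above. -/
lemma phase_up [Nonempty ι] {σ : (ι → Bool) → ι → ℝ} (hσ : SigOK σ)
    {μ : ℕ → (ι → Bool) → ℝ} (hμ : IsChain σ μ) {p q : ℝ}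
    (h0 : 0 ≤ q) (h1 : q ≤ 1) {B : (ι → Bool) → Prop} (hBu : ∀ x y, x ≤ y → B x → B y)
    (hB : ∀ x, ¬ B x → ∀ e, σ x e ≤ q) {ε τ ρ : ℝ}
    (hτ : Ex (Gp p) (fun x => ind (B x)) ≤ τ) {s0 : ℕ} (hs : ∀ s, s0 ≤ s → DomUp (μ s) p ε)
    (T : ℕ) (hρ : Fintype.card ι * (1 - (Fintype.card ι : ℝ)⁻¹) ^ T ≤ ρ) :
    ∀ s, s0 + T ≤ s → DomUp (μ s) q (T * (ε + τ) + ρ) := by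
  intro s hsT f hf hfu
  obtain ⟨r, rfl⟩ := Nat.exists_eq_add_of_le hsT
  rw [show s0 + T + r = (s0 + r) + T by ring]
  have k1 := chain_compare_up hσ hμ h0 h1 hB (η := ε + τ) (s := s0 + r) T
    (fun r' _ => by
      have := (hs (s0 + r + r') (by omega)).upper hBu
      linarith) hf hfu
  have k2 : Ex (μ (s0 + r)) ((Aop (fun _ _ => q))^[T] f) ≤ (Aop (fun _ _ => q))^[T] f ⊤ := by
    rw [← Ex_const (hμ.prob (s0 + r)) ((Aop (fun _ _ => q))^[T] f ⊤)]
    exact Ex_mono (hμ.prob _) fun x => iter_mono (SigOK_const h0 h1) hf T le_top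
  have k3 := (abs_le.1 (indep_mix h0 h1 hfu T (Or.inl rfl))).2
  linarith

/-- One burn-in phase from below. -/
lemma phase_lo [Nonempty ι] {σ : (ι → Bool) → ι → ℝ} (hσ : SigOK σ)
    {μ : ℕ → (ι → Bool) → ℝ} (hμ : IsChain σ μ) {p q : ℝ} (hp0 : 0 ≤ p) (hp1 : p ≤ 1)
    (h0 : 0 ≤ q) (h1 : q ≤ 1) {B : (ι → Bool) → Prop} (hBu : ∀ x y, x ≤ y → B y → B x)
    (hB : ∀ x, ¬ B x → ∀ e, q ≤ σ x e) {ε τ ρ : ℝ}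
    (hτ : Ex (Gp p) (fun x => ind (B x)) ≤ τ) {s0 : ℕ} (hs : ∀ s, s0 ≤ s → DomLo (μ s) p ε)
    (T : ℕ) (hρ : Fintype.card ι * (1 - (Fintype.card ι : ℝ)⁻¹) ^ T ≤ ρ) :
    ∀ s, s0 + T ≤ s → DomLo (μ s) q (T * (ε + τ) + ρ) := by
  intro s hsT f hf hfu
  obtain ⟨r, rfl⟩ := Nat.exists_eq_add_of_le hsT
  rw [show s0 + T + r = (s0 + r) + T by ring]
  have k1 := chain_compare_lo hσ hμ h0 h1 hB (η := ε + τ) (s := s0 + r) T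
    (fun r' _ => by
      have := (hs (s0 + r + r') (by omega)).lower (hμ.prob _) hp0 hp1 hBu
      linarith) hf hfu
  have k2 : (Aop (fun _ _ => q))^[T] f ⊥ ≤ Ex (μ (s0 + r)) ((Aop (fun _ _ => q))^[T] f) := by
    rw [← Ex_const (hμ.prob (s0 + r)) ((Aop (fun _ _ => q))^[T] f ⊥)]
    exact Ex_mono (hμ.prob _) fun x => iter_mono (SigOK_const h0 h1) hf T bot_le
  have k3 := (abs_le.1 (indep_mix h0 h1 hfu T (Or.inr rfl))).1
  linarith

lemma DomUp_one {μ : (ι → Bool) → ℝ} (hμ : IsProb μ) : DomUp μ 1 0 := by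
  intro f hf _
  have hG : Ex (Gp 1) f = f ⊤ := by
    unfold Ex
    rw [Finset.sum_eq_single ⊤]
    · simp [Gp]
    · intro x _ hx
      obtain ⟨e, he⟩ := Function.ne_iff.1 hx
      have : Gp 1 x = 0 := Finset.prod_eq_zero (mem_univ e) (by simpa using he)
      rw [this, zero_mul]
    · simp
  rw [hG, add_zero, ← Ex_const hμ (f ⊤)]
  exact Ex_mono hμ fun x => hf le_top

lemma DomLo_zero {μ : (ι → Bool) → ℝ} (hμ : IsProb μ) : DomLo μ 0 0 := by
  intro f hf _
  have hG : Ex (Gp 0) f = f ⊥ := by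
    unfold Ex
    rw [Finset.sum_eq_single ⊥]
    · simp [Gp]
    · intro x _ hx
      obtain ⟨e, he⟩ := Function.ne_iff.1 hx
      have : Gp 0 x = 0 := Finset.prod_eq_zero (mem_univ e) (by simpa using he)
      rw [this, zero_mul]
    · simp
  rw [hG, sub_zero, ← Ex_const hμ (f ⊥)]
  exact Ex_mono hμ fun x => hf bot_le

/-- Iterated burn-in. `u` is the sequence of densities, `B k` the bad event of phase `k`. -/
lemma burn_up [Nonempty ι] {σ : (ι → Bool) → ι → ℝ} (hσ : SigOK σ)
    {μ : ℕ → (ι → Bool) → ℝ} (hμ : IsChain σ μ) {u : ℕ → ℝ} (hu0 : u 0 = 1)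
    (hu : ∀ k, 0 ≤ u k ∧ u k ≤ 1) {B : ℕ → (ι → Bool) → Prop}
    (hBu : ∀ k x y, x ≤ y → B k x → B k y)
    (hB : ∀ k x, ¬ B k x → ∀ e, σ x e ≤ u (k+1)) {τ ρ : ℝ} (hτ0 : 0 ≤ τ) (hρ0 : 0 ≤ ρ)
    (hτ : ∀ k, Ex (Gp (u k)) (fun x => ind (B k x)) ≤ τ) {T : ℕ} (hT : 1 ≤ T)
    (hρ : Fintype.card ι * (1 - (Fintype.card ι : ℝ)⁻¹) ^ T ≤ ρ) (k : ℕ) :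
    ∀ s, k * T ≤ s → DomUp (μ s) (u k) ((2 * T) ^ k * (τ + ρ) - (τ + ρ)) := by
  have hT' : (1:ℝ) ≤ T := by exact_mod_cast hT
  induction k with
  | zero => intro s _; rw [hu0]; simpa using DomUp_one (hμ.prob s)
  | succ k ih =>
    intro s hs f hf hfu
    have := phase_up hσ hμ (hu (k+1)).1 (hu (k+1)).2 (hBu k) (hB k) (hτ k) ih T hρ s
      (by rw [← Nat.succ_mul]; exact hs) f hf hfu
    refine this.trans ?_
    have h1 : 1 ≤ (2 * (T:ℝ)) ^ k := one_le_pow₀ (by linarith)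
    rw [pow_succ]
    have h2 : (τ + ρ) ≤ (2 * (T:ℝ)) ^ k * (τ + ρ) := le_mul_of_one_le_left (by linarith) h1
    have h3 : ρ + (τ + ρ) ≤ T * ρ + T * ((2 * (T:ℝ)) ^ k * (τ + ρ)) := by
      have a1 : ρ ≤ T * ρ := le_mul_of_one_le_left hρ0 hT'
      have a2 : (2 * (T:ℝ)) ^ k * (τ + ρ) ≤ T * ((2 * (T:ℝ)) ^ k * (τ + ρ)) :=
        le_mul_of_one_le_left (by positivity) hT'
      linarith
    nlinarith

lemma burn_lo [Nonempty ι] {σ : (ι → Bool) → ι → ℝ} (hσ : SigOK σ)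
    {μ : ℕ → (ι → Bool) → ℝ} (hμ : IsChain σ μ) {u : ℕ → ℝ} (hu0 : u 0 = 0)
    (hu : ∀ k, 0 ≤ u k ∧ u k ≤ 1) {B : ℕ → (ι → Bool) → Prop}
    (hBu : ∀ k x y, x ≤ y → B k y → B k x)
    (hB : ∀ k x, ¬ B k x → ∀ e, u (k+1) ≤ σ x e) {τ ρ : ℝ} (hτ0 : 0 ≤ τ) (hρ0 : 0 ≤ ρ)
    (hτ : ∀ k, Ex (Gp (u k)) (fun x => ind (B k x)) ≤ τ) {T : ℕ} (hT : 1 ≤ T)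
    (hρ : Fintype.card ι * (1 - (Fintype.card ι : ℝ)⁻¹) ^ T ≤ ρ) (k : ℕ) :
    ∀ s, k * T ≤ s → DomLo (μ s) (u k) ((2 * T) ^ k * (τ + ρ) - (τ + ρ)) := by
  have hT' : (1:ℝ) ≤ T := by exact_mod_cast hT
  induction k with
  | zero => intro s _; rw [hu0]; simpa using DomLo_zero (hμ.prob s)
  | succ k ih =>
    intro s hs f hf hfu
    have := phase_lo hσ hμ (hu k).1 (hu k).2 (hu (k+1)).1 (hu (k+1)).2 (hBu k) (hB k) (hτ k)
      ih T hρ s (by rw [← Nat.succ_mul]; exact hs) f hf hfu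
    refine le_trans ?_ this
    have h1 : 1 ≤ (2 * (T:ℝ)) ^ k := one_le_pow₀ (by linarith)
    rw [pow_succ]
    have h2 : (τ + ρ) ≤ (2 * (T:ℝ)) ^ k * (τ + ρ) := le_mul_of_one_le_left (by linarith) h1
    have h3 : ρ + (τ + ρ) ≤ T * ρ + T * ((2 * (T:ℝ)) ^ k * (τ + ρ)) := by
      have a1 : ρ ≤ T * ρ := le_mul_of_one_le_left hρ0 hT'
      have a2 : (2 * (T:ℝ)) ^ k * (τ + ρ) ≤ T * ((2 * (T:ℝ)) ^ k * (τ + ρ)) :=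
        le_mul_of_one_le_left (by positivity) hT'
      linarith
    nlinarith

/-! ### Contraction -/

lemma iter_eq_of_start {σ : (ι → Bool) → ι → ℝ} {μ : ℕ → (ι → Bool) → ℝ} (hμ : IsChain σ μ)
    {x : ι → Bool} (h0 : ∀ f, Ex (μ 0) f = f x) (t : ℕ) (f : (ι → Bool) → ℝ) :
    Ex (μ t) f = (Aop σ)^[t] f x := by
  have := hμ.iter 0 t f
  rw [zero_add] at this
  rw [this, h0]

lemma contraction_step [Nonempty ι] {σ : (ι → Bool) → ι → ℝ} (hσ : SigOK σ)
    {μ ν : ℕ → (ι → Bool) → ℝ} (hμ : IsChain σ μ) (hν : IsChain σ ν)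
    (h0μ : ∀ f, Ex (μ 0) f = f ⊤) (h0ν : ∀ f, Ex (ν 0) f = f ⊥)
    {B : (ι → Bool) → Prop} {κ : ℝ} (hκ0 : 0 ≤ κ) (hκ1 : κ ≤ 1)
    (hB : ∀ x y, x ≤ y → ¬ B x → ¬ B y →
      ∑ e, σ y e - ∑ e, σ x e ≤ (1 - κ) * (Nn y - Nn x)) (t : ℕ) :
    Ex (μ (t+1)) Nn - Ex (ν (t+1)) Nn ≤
      (1 - κ * (Fintype.card ι : ℝ)⁻¹) * (Ex (μ t) Nn - Ex (ν t) Nn)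
      + 2 * (Ex (μ t) (fun x => ind (B x)) + Ex (ν t) (fun x => ind (B x))) := by
  set M : ℝ := (Fintype.card ι : ℝ) with hMdef
  have hM : 1 ≤ M := by
    rw [hMdef]; exact_mod_cast Fintype.card_pos
  set h : (ι → Bool) → ℝ := fun x => (1 - κ) * Nn x - ∑ e, σ x e with hh
  have hσs : ∀ x, 0 ≤ ∑ e, σ x e ∧ ∑ e, σ x e ≤ M := by
    intro x
    refine ⟨Finset.sum_nonneg fun e _ => hσ.nonneg x e, ?_⟩
    calc _ ≤ ∑ e : ι, (1:ℝ) := Finset.sum_le_sum fun e _ => hσ.le_one x e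
      _ = M := by simp [hMdef]
  have hlo : ∀ x, -M ≤ h x := by
    intro x
    have := hσs x
    have := Nn_nonneg x
    simp only [hh]
    nlinarith
  have hhi : ∀ x, h x ≤ M := by
    intro x
    have := hσs x
    have := Nn_nonneg x
    have := Nn_le x
    simp only [hh]
    nlinarith
  set H : (ι → Bool) → ℝ := fun x =>
    (univ : Finset (ι → Bool)).sup' Finset.univ_nonempty
      (fun z => if z ≤ x ∧ ¬ B z then h z else -M) with hH
  have Hmono : Monotone H := by
    intro x y hxy
    simp only [hH]
    apply Finset.sup'_le
    intro z _
    refine le_trans ?_ (Finset.le_sup' _ (mem_univ z))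
    by_cases hz : z ≤ x ∧ ¬ B z
    · rw [if_pos hz, if_pos ⟨hz.1.trans hxy, hz.2⟩]
    · rw [if_neg hz]
      split_ifs
      · exact hlo z
      · exact le_rfl
  have Hlo : ∀ x, -M ≤ H x := by
    intro x
    simp only [hH]
    refine le_trans ?_ (Finset.le_sup' _ (mem_univ x))
    split_ifs
    · exact hlo x
    · exact le_rfl
  have Hhi : ∀ x, H x ≤ M := by
    intro x
    simp only [hH]
    apply Finset.sup'_le
    intro z _
    split_ifs
    · exact hhi z
    · linarith
  have Heq : ∀ x, ¬ B x → H x = h x := by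
    intro x hx
    apply le_antisymm
    · simp only [hH]
      apply Finset.sup'_le
      intro z _
      split_ifs with hz
      · have := hB z x hz.1 hz.2 hx
        simp only [hh]
        linarith
      · exact hlo x
    · simp only [hH]
      refine le_trans ?_ (Finset.le_sup' _ (mem_univ x))
      rw [if_pos ⟨le_rfl, hx⟩]
  have hd1 : ∀ x, h x ≤ H x + 2 * M * ind (B x) := by
    intro x
    by_cases hx : B x
    · rw [ind_true hx]; linarith [hhi x, Hlo x]
    · rw [ind_false hx, Heq x hx]; linarith
  have hd2 : ∀ x, H x ≤ h x + 2 * M * ind (B x) := by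
    intro x
    by_cases hx : B x
    · rw [ind_true hx]; linarith [hlo x, Hhi x]
    · rw [ind_false hx, Heq x hx]; linarith
  have k1 := Ex_mono (hν.prob t) hd1
  have k2 := Ex_mono (hμ.prob t) hd2
  rw [Ex_add, Ex_smul] at k1 k2
  have k3 : Ex (ν t) H ≤ Ex (μ t) H := by
    rw [iter_eq_of_start hμ h0μ, iter_eq_of_start hν h0ν]
    exact iter_mono hσ Hmono t bot_le
  have k4 : ∀ w, Ex w h = (1 - κ) * Ex w Nn - Ex w (fun x => ∑ e, σ x e) := by
    intro w
    simp only [hh]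
    rw [Ex_sub, Ex_smul]
  rw [k4] at k1 k2
  have k5 : ∀ w, Ex w (Aop σ Nn) = (1 - M⁻¹) * Ex w Nn + M⁻¹ * Ex w (fun x => ∑ e, σ x e) := by
    intro w
    rw [← Ex_smul, ← Ex_smul, ← Ex_add]
    congr 1
    funext x
    rw [Aop_Nn]
  rw [hμ.step, hν.step, k5, k5]
  have hMi : 0 < M⁻¹ := by positivity
  have k6 : Ex (μ t) (fun x => ∑ e, σ x e) - Ex (ν t) (fun x => ∑ e, σ x e) ≤
    (1 - κ) * (Ex (μ t) Nn - Ex (ν t) Nn) + 2 * M * (Ex (μ t) (fun x => ind (B x))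
      + Ex (ν t) (fun x => ind (B x))) := by linarith
  have k7 := mul_le_mul_of_nonneg_left k6 hMi.le
  have k8 : M⁻¹ * (2 * M * (Ex (μ t) (fun x => ind (B x))
      + Ex (ν t) (fun x => ind (B x)))) = 2 * ((Ex (μ t) (fun x => ind (B x))
      + Ex (ν t) (fun x => ind (B x)))) := by
    field_simp
  rw [mul_add, k8] at k7
  linarith

lemma contraction [Nonempty ι] {σ : (ι → Bool) → ι → ℝ} (hσ : SigOK σ)
    {μ ν : ℕ → (ι → Bool) → ℝ} (hμ : IsChain σ μ) (hν : IsChain σ ν)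
    (h0μ : ∀ f, Ex (μ 0) f = f ⊤) (h0ν : ∀ f, Ex (ν 0) f = f ⊥)
    {B : (ι → Bool) → Prop} {κ : ℝ} (hκ0 : 0 ≤ κ) (hκ1 : κ ≤ 1)
    (hB : ∀ x y, x ≤ y → ¬ B x → ¬ B y →
      ∑ e, σ y e - ∑ e, σ x e ≤ (1 - κ) * (Nn y - Nn x)) {s : ℕ} {η : ℝ}
    (hη1 : ∀ t, s ≤ t → Ex (μ t) (fun x => ind (B x)) ≤ η)
    (hη2 : ∀ t, s ≤ t → Ex (ν t) (fun x => ind (B x)) ≤ η) (t : ℕ) :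
    Ex (μ (s + t)) Nn - Ex (ν (s + t)) Nn ≤
      (1 - κ * (Fintype.card ι : ℝ)⁻¹) ^ t * Fintype.card ι + 4 * t * η := by
  have hM : (1:ℝ) ≤ Fintype.card ι := by exact_mod_cast Fintype.card_pos
  have hr : 0 ≤ 1 - κ * (Fintype.card ι : ℝ)⁻¹ := by
    have h1 := inv_le_one_of_one_le₀ hM
    have h2 : 0 ≤ (Fintype.card ι : ℝ)⁻¹ := by positivity
    nlinarith
  have hr1 : 1 - κ * (Fintype.card ι : ℝ)⁻¹ ≤ 1 := by
    have h2 : 0 ≤ (Fintype.card ι : ℝ)⁻¹ := by positivity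
    nlinarith
  have hη0 : 0 ≤ η := le_trans (Ex_nonneg (hμ.prob s) fun x => ind_nonneg (B x)) (hη1 s le_rfl)
  induction t with
  | zero =>
    have k1 := Ex_mono (hμ.prob s) (f := Nn) (g := fun _ => (Fintype.card ι : ℝ)) Nn_le
    have k2 := Ex_nonneg (hν.prob s) (f := Nn) Nn_nonneg
    rw [Ex_const (hμ.prob s)] at k1
    simp
    linarith
  | succ t ih =>
    have := contraction_step hσ hμ hν h0μ h0ν hκ0 hκ1 hB (s + t)
    rw [← add_assoc]
    refine this.trans ?_
    have k1 := hη1 (s + t) (by omega)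
    have k2 := hη2 (s + t) (by omega)
    have k3 := mul_le_mul_of_nonneg_left ih hr
    rw [pow_succ]
    push_cast
    have k4 : (1 - κ * (Fintype.card ι : ℝ)⁻¹) * (4 * t * η) ≤ 4 * t * η :=
      mul_le_of_le_one_left (by positivity) hr1
    nlinarith

/-! ### Fluctuations under the independent dynamics -/

lemma indep_sq_step [Nonempty ι] {q : ℝ} (h0 : 0 ≤ q) (h1 : q ≤ 1) (b : ℝ) (x : ι → Bool) :
    Aop (fun _ _ => q) (fun y => (Nn y - ((1 - (Fintype.card ι : ℝ)⁻¹) * b + q)) ^ 2) x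
      ≤ (Nn x - b) ^ 2 + 1 := by
  set M : ℝ := (Fintype.card ι : ℝ) with hMdef
  have hM : 1 ≤ M := by
    rw [hMdef]; exact_mod_cast Fintype.card_pos
  set a := (1 - M⁻¹) * b + q with ha
  have hMi : 0 < M⁻¹ := by positivity
  have hMi1 : M⁻¹ ≤ 1 := inv_le_one_of_one_le₀ hM
  -- expand around `m = Aop Nn x`
  have hlin := Aop_Nn (fun _ _ => q) x
  have hsq : Aop (fun _ _ => q) (fun y => (Nn y - Nn x) ^ 2) x ≤ 1 := by
    have : Aop (fun _ _ => q) (fun _ : ι → Bool => (1:ℝ)) x = 1 := by rw [Aop_const]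
    rw [← this]
    unfold Aop Rst
    refine mul_le_mul_of_nonneg_left (Finset.sum_le_sum fun e _ => ?_) (by positivity)
    have k : ∀ b : Bool, (Nn (Function.update x e b) - Nn x) ^ 2 ≤ 1 := by
      intro b
      rw [Nn_update]
      rw [sq_le_one_iff_abs_le_one, abs_le]
      have := ind_nonneg (x e = true)
      have := ind_le_one (x e = true)
      have := ind_nonneg (b = true)
      have := ind_le_one (b = true)
      constructor <;> linarith
    have k1 := mul_le_mul_of_nonneg_left (k true) h0
    have k2 := mul_le_mul_of_nonneg_left (k false) (sub_nonneg.2 h1)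
    linarith
  have hexp : Aop (fun _ _ => q) (fun y => (Nn y - a) ^ 2) x =
      Aop (fun _ _ => q) (fun y => (Nn y - Nn x) ^ 2) x
        + 2 * (Nn x - a) * (Aop (fun _ _ => q) Nn x - Nn x) + (Nn x - a) ^ 2 := by
    have e1 : (Nn x - a) ^ 2 = M⁻¹ * ∑ e : ι, (Nn x - a) ^ 2 := by
      simp [← hMdef]
      field_simp
    have e2 : Nn x = M⁻¹ * ∑ e : ι, Nn x := by
      simp [← hMdef]
      field_simp
    have e3 : Aop (fun _ _ => q) Nn x - Nn x
        = M⁻¹ * ∑ e : ι, (Rst q e Nn x - Nn x) := by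
      rw [Finset.sum_sub_distrib, mul_sub, ← e2]
      rfl
    rw [e3]
    rw [e1]
    unfold Aop
    rw [← hMdef]
    rw [mul_left_comm (2 * (Nn x - a)), ← mul_add, ← mul_add, Finset.mul_sum _ _ (2 * (Nn x - a)),
      ← Finset.sum_add_distrib, ← Finset.sum_add_distrib]
    congr 1
    refine Finset.sum_congr rfl fun e _ => ?_
    unfold Rst
    ring
  rw [hexp, hlin]
  simp only [Finset.sum_const, Finset.card_univ, nsmul_eq_mul, ← hMdef]
  have e4 : M⁻¹ * (M * q) = q := by field_simp
  rw [e4]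
  have e5 : (1 - M⁻¹) * Nn x + q - Nn x = (1 - M⁻¹) * (Nn x - b) - (Nn x - a) := by
    rw [ha]; ring
  rw [e5]
  set X := Nn x - b
  set Y := Nn x - a
  have : 2 * Y * ((1 - M⁻¹) * X - Y) + Y ^ 2 ≤ ((1 - M⁻¹) * X) ^ 2 := by nlinarith [sq_nonneg (Y - (1 - M⁻¹) * X)]
  have h6 : ((1 - M⁻¹) * X) ^ 2 ≤ X ^ 2 := by
    rw [mul_pow]
    exact mul_le_of_le_one_left (sq_nonneg X) (pow_le_one₀ (by linarith) (by linarith))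
  linarith

lemma indep_sq [Nonempty ι] {q : ℝ} (h0 : 0 ≤ q) (h1 : q ≤ 1) (t : ℕ) :
    (Aop (fun _ _ => q))^[t] (fun y : ι → Bool =>
      (Nn y - (q * Fintype.card ι + (1 - q) * Fintype.card ι *
        (1 - (Fintype.card ι : ℝ)⁻¹) ^ t)) ^ 2) ⊤ ≤ t := by
  set M : ℝ := (Fintype.card ι : ℝ) with hMdef
  have hM : 1 ≤ M := by
    rw [hMdef]; exact_mod_cast Fintype.card_pos
  have gen : ∀ (t : ℕ) (c : ℝ), (Aop (fun _ _ => q))^[t] (fun y : ι → Bool =>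
      (Nn y - (q * M + (1 - q) * M * (1 - M⁻¹) ^ t)) ^ 2 + c) ⊤ ≤ t + c := by
    intro t
    induction t with
    | zero =>
      intro c
      have : M - (q * M + (1 - q) * M) = 0 := by ring
      simp [Nn_top, ← hMdef, this]
    | succ t ih =>
      intro c
      rw [Function.iterate_succ_apply]
      have hmono : ∀ (t : ℕ) (f g : (ι → Bool) → ℝ), (∀ x, f x ≤ g x) →
          ∀ x, (Aop (fun _ _ => q))^[t] f x ≤ (Aop (fun _ _ => q))^[t] g x := by
        intro t
        induction t with
        | zero => intro f g h x; exact h x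
        | succ t ih2 =>
          intro f g h x
          rw [Function.iterate_succ_apply, Function.iterate_succ_apply]
          exact ih2 _ _ (Aop_le (fun _ _ => h0) (fun _ _ => h1) h) x
      have hst : ∀ x, Aop (fun _ _ => q) (fun y : ι → Bool =>
          (Nn y - (q * M + (1 - q) * M * (1 - M⁻¹) ^ (t+1))) ^ 2 + c) x
          ≤ (Nn x - (q * M + (1 - q) * M * (1 - M⁻¹) ^ t)) ^ 2 + (1 + c) := by
        intro x
        have e1 : q * M + (1 - q) * M * (1 - M⁻¹) ^ (t+1)
            = (1 - M⁻¹) * (q * M + (1 - q) * M * (1 - M⁻¹) ^ t) + q := by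
          rw [pow_succ]
          field_simp
          ring
        rw [Aop_add (fun _ _ => q) (fun y =>
          (Nn y - (q * M + (1 - q) * M * (1 - M⁻¹) ^ (t+1))) ^ 2) (fun _ => c), Aop_const]
        rw [e1]
        have := indep_sq_step h0 h1 (q * M + (1 - q) * M * (1 - M⁻¹) ^ t) x
        rw [← hMdef] at this
        simp only
        linarith
      refine (hmono t _ _ hst ⊤).trans ?_
      refine (ih (1 + c)).trans (le_of_eq ?_)
      push_cast
      ring
  have := gen t 0
  simpa using this

lemma iter_le {σ : (ι → Bool) → ι → ℝ} (hσ : SigOK σ) {f g : (ι → Bool) → ℝ}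
    (h : ∀ x, f x ≤ g x) (t : ℕ) (x : ι → Bool) : (Aop σ)^[t] f x ≤ (Aop σ)^[t] g x := by
  induction t generalizing f g with
  | zero => exact h x
  | succ t ih =>
    rw [Function.iterate_succ_apply, Function.iterate_succ_apply]
    exact ih (Aop_le hσ.nonneg hσ.le_one h)

lemma Aop_smul (σ : (ι → Bool) → ι → ℝ) (c : ℝ) (f : (ι → Bool) → ℝ) :
    Aop σ (fun x => c * f x) = fun x => c * Aop σ f x := by
  funext x
  unfold Aop Rst
  rw [mul_left_comm, Finset.mul_sum _ _ c]
  congr 1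
  exact Finset.sum_congr rfl fun e _ => by ring

lemma iter_smul (σ : (ι → Bool) → ι → ℝ) (c : ℝ) (f : (ι → Bool) → ℝ) (t : ℕ) :
    (Aop σ)^[t] (fun x => c * f x) = fun x => c * (Aop σ)^[t] f x := by
  induction t generalizing f with
  | zero => rfl
  | succ t ih => simp only [Function.iterate_succ_apply, Aop_smul, ih]

lemma iter_const [Nonempty ι] (σ : (ι → Bool) → ι → ℝ) (c : ℝ) (t : ℕ) :
    (Aop σ)^[t] (fun _ => c) = fun _ => c := by
  induction t with
  | zero => rfl
  | succ t ih => rw [Function.iterate_succ_apply, Aop_const, ih]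

/-- Under the independent dynamics from the full state the number of ones is large. -/
lemma indep_large [Nonempty ι] {q : ℝ} (h0 : 0 ≤ q) (h1 : q ≤ 1) (t : ℕ) {θ d : ℝ} (hd : 0 < d)
    (hθ : θ + d ≤ q * Fintype.card ι + (1 - q) * Fintype.card ι *
        (1 - (Fintype.card ι : ℝ)⁻¹) ^ t) :
    1 - t / d ^ 2 ≤ (Aop (fun _ _ => q))^[t] (fun y : ι → Bool => ind (θ ≤ Nn y)) ⊤ := by
  have hsq := indep_sq (ι := ι) h0 h1 t
  set a := q * Fintype.card ι + (1 - q) * Fintype.card ι *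
        (1 - (Fintype.card ι : ℝ)⁻¹) ^ t
  have key : ∀ y : ι → Bool, 1 - (d ^ 2)⁻¹ * (Nn y - a) ^ 2 ≤ ind (θ ≤ Nn y) := by
    intro y
    by_cases h : θ ≤ Nn y
    · rw [ind_true h]
      have : 0 ≤ (d ^ 2)⁻¹ * (Nn y - a) ^ 2 := by positivity
      linarith
    · rw [ind_false h]
      push Not at h
      have k : d ^ 2 ≤ (Nn y - a) ^ 2 := by nlinarith
      have : 1 ≤ (d ^ 2)⁻¹ * (Nn y - a) ^ 2 := by
        rw [inv_mul_eq_div, one_le_div (by positivity)]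
        exact k
      linarith
  refine le_trans ?_ (iter_le (SigOK_const h0 h1) key t ⊤)
  rw [iter_sub, iter_const, iter_smul]
  have : (d ^ 2)⁻¹ * (Aop (fun _ _ => q))^[t] (fun y : ι → Bool => (Nn y - a) ^ 2) ⊤
      ≤ (d ^ 2)⁻¹ * t := mul_le_mul_of_nonneg_left hsq (by positivity)
  rw [inv_mul_eq_div (d ^ 2) (t:ℝ)] at this
  simp only
  linarith

end Generic2
end
end ErgmMix


namespace ErgmMix

noncomputable section

section Counts

variable {m n : ℕ}

lemma mapEdge_inj (v : Fin m ↪ Fin n) : Function.Injective (mapEdge v) := by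
  intro a b h
  apply Subtype.ext
  have h2 : (mapEdge v a).1 = (mapEdge v b).1 := by rw [h]
  exact Sym2.map.injective v.injective h2

/-- Number of embeddings sending `a` to `e`. -/
def cnt (a : EdgeK m) (e : EdgeK n) : ℝ := ∑ v : Fin m ↪ Fin n, ind (mapEdge v a = e)

/-- Number of embeddings sending `a` to `e` and `b` to `f`. -/
def cnt2 (a b : EdgeK m) (e f : EdgeK n) : ℝ :=
  ∑ v : Fin m ↪ Fin n, ind (mapEdge v a = e) * ind (mapEdge v b = f)

/-- The rooted statistic. -/
def Sst (a : EdgeK m) (C : Finset (EdgeK m)) (x : Config n) (e : EdgeK n) : ℝ :=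
  ∑ v : Fin m ↪ Fin n, ind (mapEdge v a = e) * ind (∀ c ∈ C, x (mapEdge v c) = true)

lemma Sst_mono (a : EdgeK m) (C : Finset (EdgeK m)) (e : EdgeK n) :
    Monotone (fun x : Config n => Sst a C x e) := by
  intro x y hxy
  refine Finset.sum_le_sum fun v _ => mul_le_mul_of_nonneg_left ?_ (ind_nonneg _)
  exact ind_mono fun h c hc => bool_le_true _ _ (hxy _) (h c hc)

lemma cnt_nonneg (a : EdgeK m) (e : EdgeK n) : 0 ≤ cnt a e :=
  Finset.sum_nonneg fun _ _ => ind_nonneg _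

lemma sum_ind_eq {α : Type*} [Fintype α] [DecidableEq α] (z : α) : ∑ e : α, ind (z = e) = 1 := by
  rw [Finset.sum_eq_single z, ind_true rfl]
  · intro b _ hb
    exact ind_false fun h => hb h.symm
  · simp

lemma sum_ind_eq_mul {α : Type*} [Fintype α] [DecidableEq α] (z : α) (g : α → ℝ) :
    ∑ e : α, ind (z = e) * g e = g z := by
  rw [Finset.sum_eq_single z, ind_true rfl, one_mul]
  · intro b _ hb
    rw [ind_false fun h => hb h.symm, zero_mul]
  · simp

lemma card_EdgeK (n : ℕ) : Fintype.card (EdgeK n) = n.choose 2 := by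
  have := Sym2.card_subtype_not_diag (α := Fin n)
  rw [Fintype.card_fin] at this
  rw [← this]

lemma exists_perm_edge (e f : EdgeK n) : ∃ π : Equiv.Perm (Fin n), e.1.map π = f.1 := by
  obtain ⟨e, he⟩ := e
  obtain ⟨f, hf⟩ := f
  induction e using Sym2.ind with
  | _ a b =>
  induction f using Sym2.ind with
  | _ c d =>
    have hab : a ≠ b := by simpa using he
    have hcd : c ≠ d := by simpa using hf
    refine ⟨(Equiv.swap a c).trans (Equiv.swap (Equiv.swap a c b) d), ?_⟩
    have h1 : Equiv.swap a c b ≠ c := by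
      intro h
      have : Equiv.swap a c b = Equiv.swap a c a := by rw [h, Equiv.swap_apply_left]
      exact hab ((Equiv.swap a c).injective this).symm
    simp only [Sym2.map_mk, Equiv.trans_apply, Equiv.swap_apply_left]
    rw [Equiv.swap_apply_of_ne_of_ne h1.symm hcd]
    

lemma cnt_const (a : EdgeK m) (e f : EdgeK n) : cnt a e = cnt a f := by
  obtain ⟨π, hπ⟩ := exists_perm_edge e f
  unfold cnt
  refine Fintype.sum_equiv (Equiv.embeddingCongr (Equiv.refl _) π) _ _ fun v => ?_
  congr 1
  apply propext
  have key : (mapEdge ((Equiv.embeddingCongr (Equiv.refl (Fin m)) π) v) a).1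
      = (mapEdge v a).1.map π := by
    simp only [mapEdge, Sym2.map_map]
    congr 1
  constructor
  · intro h
    apply Subtype.ext
    rw [key, h, hπ]
  · intro h
    apply Subtype.ext
    apply Sym2.map.injective π.injective
    rw [hπ, ← key, h]

lemma cnt_mul (a : EdgeK m) (e : EdgeK n) :
    cnt a e * (n.choose 2 : ℝ) = (n.descFactorial m : ℝ) := by
  have h : ∑ f : EdgeK n, cnt a f = (n.descFactorial m : ℝ) := by
    unfold cnt
    rw [Finset.sum_comm]
    simp only [sum_ind_eq]
    simp [Fintype.card_embedding_eq]
  rw [← h, Finset.sum_congr rfl fun f _ => cnt_const a f e]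
  rw [Finset.sum_const, Finset.card_univ, card_EdgeK, nsmul_eq_mul, mul_comm]

lemma EdgeK_two_le (a : EdgeK m) : 2 ≤ m := by
  by_contra h
  have : Fintype.card (EdgeK m) = 0 := by
    rw [card_EdgeK]; exact Nat.choose_eq_zero_of_lt (by omega)
  exact (Fintype.card_eq_zero_iff.mp this).false a

lemma cnt_eq (a : EdgeK m) (e : EdgeK n) :
    cnt a e = 2 * ((n - 2).descFactorial (m - 2) : ℝ) := by
  have hm := EdgeK_two_le a
  have hn := EdgeK_two_le e
  have h := cnt_mul a e
  obtain ⟨k, rfl⟩ := Nat.exists_eq_add_of_le hm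
  obtain ⟨l, rfl⟩ := Nat.exists_eq_add_of_le hn
  have e1 : (2 + l).descFactorial (2 + k) = (2 + l) * ((1 + l) * l.descFactorial k) := by
    rw [show 2 + l = (l + 1) + 1 by ring, show 2 + k = (k + 1) + 1 by ring,
      Nat.succ_descFactorial_succ, Nat.succ_descFactorial_succ]
    ring
  rw [e1, Nat.cast_choose_two] at h
  push_cast at h
  simp only [Nat.add_sub_cancel_left]
  have h2 : ((2:ℝ) + l) * (1 + l) ≠ 0 := by positivity
  apply mul_right_cancel₀ h2
  linarith

lemma cnt_le (a : EdgeK m) (e : EdgeK n) : cnt a e ≤ 2 * (n : ℝ) ^ (m - 2) := by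
  rw [cnt_eq]
  have h1 : (n - 2).descFactorial (m - 2) ≤ n ^ (m - 2) :=
    (Nat.descFactorial_le_pow _ _).trans (Nat.pow_le_pow_left (by omega) _)
  have : (((n - 2).descFactorial (m - 2) : ℕ) : ℝ) ≤ (n : ℝ) ^ (m - 2) := by exact_mod_cast h1
  linarith

lemma cnt_ge (a : EdgeK m) (e : EdgeK n) (hmn : m ≤ n) :
    2 * (n : ℝ) ^ (m - 2) * (1 - (m : ℝ) ^ 2 / n) ≤ cnt a e := by
  have hm := EdgeK_two_le a
  have hn := EdgeK_two_le e
  rw [cnt_eq]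
  have h1 := Nat.pow_sub_le_descFactorial (n - 2) (m - 2)
  have h1' : ((n - 2 + 1 - (m - 2) : ℕ) : ℝ) ^ (m - 2) ≤ ((n - 2).descFactorial (m - 2) : ℝ) := by
    exact_mod_cast h1
  have hnpos : (0:ℝ) < n := by exact_mod_cast (by omega : 0 < n)
  have h2 : (n : ℝ) * (1 - m / n) ≤ ((n - 2 + 1 - (m - 2) : ℕ) : ℝ) := by
    have : (n - 2 + 1 - (m - 2) : ℕ) = n - m + 1 := by omega
    rw [this, mul_sub, mul_div_cancel₀ _ hnpos.ne']
    push_cast [hmn]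
    linarith
  have h3 : (0:ℝ) ≤ 1 - m / n := by
    rw [sub_nonneg, div_le_one hnpos]; exact_mod_cast hmn
  have h4 : 1 - (m : ℝ) ^ 2 / n ≤ (1 - m / n) ^ (m - 2) := by
    have hb := one_add_mul_le_pow (a := -((m:ℝ)/n)) (by linarith [show (m:ℝ)/n ≤ 1 by linarith]) (m - 2)
    have h5 : ((m - 2 : ℕ) : ℝ) ≤ m := by exact_mod_cast Nat.sub_le _ _
    have h6 : ((m - 2 : ℕ) : ℝ) * ((m:ℝ)/n) ≤ m * (m / n) :=
      mul_le_mul_of_nonneg_right h5 (by positivity)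
    have h7 : (m:ℝ) ^ 2 / n = m * (m / n) := by ring
    rw [h7]
    rw [← sub_eq_add_neg] at hb
    linarith
  have h8 : ((n : ℝ) * (1 - m / n)) ^ (m - 2) ≤ ((n - 2 + 1 - (m - 2) : ℕ) : ℝ) ^ (m - 2) :=
    pow_le_pow_left₀ (by positivity) h2 _
  rw [mul_pow] at h8
  have h9 := mul_le_mul_of_nonneg_left h4 (by positivity : (0:ℝ) ≤ (n:ℝ) ^ (m - 2))
  linarith

lemma exists_new_vertex (a c : EdgeK m) (h : a ≠ c) : ∃ k, k ∈ c.1 ∧ k ∉ a.1 := by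
  by_contra hcon
  push Not at hcon
  apply h
  apply Subtype.ext
  obtain ⟨c, hc⟩ := c
  induction c using Sym2.ind with
  | _ i j =>
    have hij : i ≠ j := by simpa using hc
    exact ((Sym2.mem_and_mem_iff hij).mp ⟨hcon i (by simp), hcon j (by simp)⟩)

lemma cnt2_le (a c : EdgeK m) (h : a ≠ c) (e f : EdgeK n) :
    cnt2 a c e f ≤ 8 * ((n : ℝ) ^ (m - 2) / n) := by
  have hn := EdgeK_two_le e
  obtain ⟨k, hkc, hka⟩ := exists_new_vertex a c h
  obtain ⟨a, ha⟩ := a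
  induction a using Sym2.ind with
  | _ i j =>
  have hij : i ≠ j := by simpa using ha
  have hki : k ≠ i := by rintro rfl; exact hka (by simp)
  have hkj : k ≠ j := by rintro rfl; exact hka (by simp)
  set P : Finset (Fin m → Fin n) := Fintype.piFinset (fun l =>
    if l = i ∨ l = j then e.1.toFinset else if l = k then f.1.toFinset else univ) with hP
  have hcard : P.card = 8 * n ^ (m - 3) := by
    rw [hP, Fintype.card_piFinset]
    have hs : ∀ l, (if l = i ∨ l = j then e.1.toFinset else if l = k then f.1.toFinset else univ).card
        = if l ∈ ({i, j, k} : Finset (Fin m)) then 2 else n := by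
      intro l
      simp only [Finset.mem_insert, Finset.mem_singleton]
      by_cases h1 : l = i ∨ l = j
      · rw [if_pos h1, if_pos (by tauto), Sym2.card_toFinset_of_not_isDiag _ e.2]
      · rw [if_neg h1]
        by_cases h2 : l = k
        · rw [if_pos h2, if_pos (by tauto), Sym2.card_toFinset_of_not_isDiag _ f.2]
        · rw [if_neg h2, if_neg (by tauto)]; simp
    have h3 : ({i, j, k} : Finset (Fin m)).card = 3 := by
      rw [Finset.card_eq_three]; exact ⟨i, j, k, hij, hki.symm, hkj.symm, rfl⟩
    rw [Finset.prod_congr rfl fun l _ => hs l, Finset.prod_ite]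
    simp only [Finset.prod_const]
    rw [Finset.filter_mem_eq_inter, Finset.univ_inter, h3, ← Finset.sdiff_eq_filter,
      Finset.card_sdiff_of_subset (Finset.subset_univ _), h3]
    simp
  have hm3 : 3 ≤ m := by
    have h3 : ({i, j, k} : Finset (Fin m)).card = 3 := by
      rw [Finset.card_eq_three]; exact ⟨i, j, k, hij, hki.symm, hkj.symm, rfl⟩
    have := Finset.card_le_univ ({i, j, k} : Finset (Fin m))
    rw [h3] at this; simpa using this
  have hle : cnt2 ⟨s(i,j), ha⟩ c e f ≤ P.card := by
    unfold cnt2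
    have h1 : ∀ v : Fin m ↪ Fin n, ind (mapEdge v ⟨s(i,j), ha⟩ = e) * ind (mapEdge v c = f)
        = if (mapEdge v ⟨s(i,j), ha⟩ = e ∧ mapEdge v c = f) then 1 else 0 := by
      intro v
      unfold ind
      split_ifs <;> simp_all
    rw [Finset.sum_congr rfl fun v _ => h1 v, Finset.sum_boole]
    norm_cast
    refine Finset.card_le_card_of_injOn (fun v => (v : Fin m → Fin n)) ?_ ?_
    · intro v hv
      simp only [Finset.coe_filter, Finset.mem_univ, true_and, Set.mem_ofPred_eq] at hv
      rw [Finset.mem_coe, hP, Fintype.mem_piFinset]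
      intro l
      have hv1 : ∀ q, q ∈ s(i,j) → v q ∈ e.1 := by
        intro q hq
        rw [← hv.1]
        exact Sym2.mem_map.mpr ⟨q, hq, rfl⟩
      have hv2 : v k ∈ f.1 := by
        rw [← hv.2]
        exact Sym2.mem_map.mpr ⟨k, hkc, rfl⟩
      by_cases h1 : l = i ∨ l = j
      · rw [if_pos h1, Sym2.mem_toFinset]
        apply hv1; simpa using h1
      · rw [if_neg h1]
        by_cases h2 : l = k
        · rw [if_pos h2, Sym2.mem_toFinset, h2]; exact hv2
        · rw [if_neg h2]; simp
    · intro v _ w _ hvw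
      exact DFunLike.coe_injective hvw
  refine hle.trans ?_
  rw [hcard]
  have hnpos : (0:ℝ) < n := by exact_mod_cast (by omega : 0 < n)
  push_cast
  obtain ⟨r, rfl⟩ := Nat.exists_eq_add_of_le hm3
  rw [show 3 + r - 2 = r + 1 by omega, show 3 + r - 3 = r by omega, pow_succ]
  field_simp
  norm_num

lemma sum_cnt2 (a c : EdgeK m) (e : EdgeK n) : ∑ f, cnt2 a c e f = cnt a e := by
  unfold cnt2 cnt
  rw [Finset.sum_comm]
  refine Finset.sum_congr rfl fun v _ => ?_
  rw [← Finset.mul_sum, sum_ind_eq, mul_one]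

lemma cnt2_nonneg (a c : EdgeK m) (e f : EdgeK n) : 0 ≤ cnt2 a c e f :=
  Finset.sum_nonneg fun _ _ => mul_nonneg (ind_nonneg _) (ind_nonneg _)

/-- Telescoping bound for products of monotone indicators. -/
lemma ind_forall_sub_le {α κ : Type*} [DecidableEq κ] (g : κ → α) (C : Finset κ) {x y : α → Bool}
    (hxy : x ≤ y) :
    ind (∀ c ∈ C, y (g c) = true) - ind (∀ c ∈ C, x (g c) = true) ≤
      ∑ b ∈ C, (ind (y (g b) = true) - ind (x (g b) = true)) *
        ind (∀ c ∈ C.erase b, y (g c) = true) := by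
  have hterm : ∀ b ∈ C, 0 ≤ (ind (y (g b) = true) - ind (x (g b) = true)) *
        ind (∀ c ∈ C.erase b, y (g c) = true) := fun b _ =>
    mul_nonneg (sub_nonneg.mpr (ind_mono (bool_le_true _ _ (hxy _)))) (ind_nonneg _)
  by_cases hy : ∀ c ∈ C, y (g c) = true
  · by_cases hx : ∀ c ∈ C, x (g c) = true
    · rw [ind_true hy, ind_true hx, sub_self]
      exact Finset.sum_nonneg hterm
    · have hx' := hx
      push Not at hx'
      obtain ⟨b, hb, hxb⟩ := hx'
      refine le_trans ?_ (Finset.single_le_sum hterm hb)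
      rw [ind_true hy, ind_false hx, ind_true (hy b hb), ind_false hxb,
        ind_true (fun c hc => hy c (Finset.mem_of_mem_erase hc))]
      norm_num
  · have hx : ¬ ∀ c ∈ C, x (g c) = true := fun h => hy fun c hc =>
      bool_le_true _ _ (hxy _) (h c hc)
    rw [ind_false hy, ind_false hx, sub_self]
    exact Finset.sum_nonneg hterm

/-- Bounded differences. -/
lemma Sst_diff (a : EdgeK m) (C : Finset (EdgeK m)) (e f : EdgeK n) (x : Config n) :
    |Sst a C (Function.update x f true) e - Sst a C (Function.update x f false) e|
      ≤ ∑ c ∈ C, cnt2 a c e f := by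
  have hle := update_false_le x f
  have hm := Sst_mono a C e hle
  simp only at hm
  rw [abs_of_nonneg (by linarith)]
  unfold Sst cnt2
  rw [← Finset.sum_sub_distrib, Finset.sum_comm]
  refine Finset.sum_le_sum fun v _ => ?_
  rw [← mul_sub, ← Finset.mul_sum]
  refine mul_le_mul_of_nonneg_left ?_ (ind_nonneg _)
  refine (ind_forall_sub_le (mapEdge v) C hle).trans (Finset.sum_le_sum fun b _ => ?_)
  by_cases hb : mapEdge v b = f
  · rw [hb]
    simp only [Function.update_self]
    rw [ind_true trivial, ind_false (by simp)]
    have := ind_le_one (∀ c ∈ C.erase b, Function.update x f true (mapEdge v c) = true)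
    linarith
  · rw [Function.update_of_ne hb, Function.update_of_ne hb, sub_self, zero_mul]
    exact ind_nonneg _

lemma Sst_mean (a : EdgeK m) (C : Finset (EdgeK m)) (e : EdgeK n) {p : ℝ} (h0 : 0 ≤ p)
    (h1 : p ≤ 1) : Ex (Gp p) (fun x => Sst a C x e) = p ^ C.card * cnt a e := by
  unfold Sst
  rw [Ex_sum, cnt, Finset.mul_sum]
  refine Finset.sum_congr rfl fun v _ => ?_
  rw [Ex_smul, mul_comm]
  congr 1
  have := Gp_allTrue p h0 h1 (C.map ⟨mapEdge v, mapEdge_inj v⟩)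
  rw [Finset.card_map] at this
  rw [← this]
  congr 1
  funext x
  congr 1
  apply propext
  rw [Finset.forall_mem_map]
  rfl
/-- Variance proxy. -/
lemma sum_sq_le (a : EdgeK m) (C : Finset (EdgeK m)) (ha : a ∉ C) (e : EdgeK n) :
    ∑ f, (∑ c ∈ C, cnt2 a c e f) ^ 2 ≤ 16 * (C.card : ℝ) ^ 2 * (((n : ℝ) ^ (m - 2)) ^ 2 / n) := by
  set M := (n : ℝ) ^ (m - 2) with hM
  have h1 : ∀ f, ∑ c ∈ C, cnt2 a c e f ≤ C.card * (8 * (M / n)) := by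
    intro f
    rw [← nsmul_eq_mul]
    exact Finset.sum_le_card_nsmul _ _ _ fun c hc =>
      cnt2_le a c (fun h => ha (h ▸ hc)) e f
  have h0 : ∀ f, 0 ≤ ∑ c ∈ C, cnt2 a c e f := fun f =>
    Finset.sum_nonneg fun c _ => cnt2_nonneg _ _ _ _
  calc ∑ f, (∑ c ∈ C, cnt2 a c e f) ^ 2
      ≤ ∑ f, (C.card * (8 * (M / n))) * (∑ c ∈ C, cnt2 a c e f) :=
        Finset.sum_le_sum fun f _ => by
          rw [sq]; exact mul_le_mul_of_nonneg_right (h1 f) (h0 f)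
    _ = (C.card * (8 * (M / n))) * (C.card * cnt a e) := by
        rw [← Finset.mul_sum, Finset.sum_comm]
        simp only [sum_cnt2]
        simp
    _ ≤ (C.card * (8 * (M / n))) * (C.card * (2 * M)) := by
        have := cnt_le a e
        gcongr
    _ = _ := by ring

/-- Upper tail of the rooted statistic under the product measure. -/
lemma Sst_tail_up (a : EdgeK m) (C : Finset (EdgeK m)) (ha : a ∉ C) (e : EdgeK n) {p δ K : ℝ}
    (h0 : 0 ≤ p) (h1 : p ≤ 1) (hδ : 0 ≤ δ) (hK : 16 * (C.card : ℝ) ^ 2 ≤ K) (hK0 : 0 < K) :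
    Ex (Gp p) (fun x => ind ((2 * p ^ C.card + δ) * (n : ℝ) ^ (m - 2) < Sst a C x e)) ≤
      Real.exp (- (δ ^ 2 * n / (8 * K))) := by
  have hn : (0:ℝ) < n := by exact_mod_cast (by have := EdgeK_two_le e; omega : 0 < n)
  set M := (n : ℝ) ^ (m - 2) with hM
  have hMpos : 0 < M := by positivity
  have hv : 0 < K * (M ^ 2 / n) := by positivity
  have ht := Gp_tail h0 h1 (f := fun x => Sst a C x e) (c := fun f => ∑ c ∈ C, cnt2 a c e f)
    (fun x f => Sst_diff a C e f x) hv
    ((sum_sq_le a C ha e).trans (mul_le_mul_of_nonneg_right hK (by positivity)))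
    (t := δ * M) (by positivity)
  refine (Ex_mono (Gp_prob h0 h1) fun x => ind_mono fun h => ?_).trans (ht.trans ?_)
  · rw [Sst_mean a C e h0 h1]
    have := mul_le_mul_of_nonneg_left (cnt_le a e) (pow_nonneg h0 C.card)
    nlinarith
  · apply Real.exp_le_exp.mpr
    have : (δ * M) ^ 2 / (2 * (K * (M ^ 2 / n))) = δ ^ 2 * n / (2 * K) := by
      field_simp
    rw [this]
    apply neg_le_neg
    gcongr
    norm_num

/-- Lower tail of the rooted statistic under the product measure. -/
lemma Sst_tail_lo (a : EdgeK m) (C : Finset (EdgeK m)) (ha : a ∉ C) (e : EdgeK n) {p δ K : ℝ}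
    (h0 : 0 ≤ p) (h1 : p ≤ 1) (hδ : 0 ≤ δ) (hK : 16 * (C.card : ℝ) ^ 2 ≤ K) (hK0 : 0 < K)
    (hmn : m ≤ n) (hδn : 4 * (m : ℝ) ^ 2 ≤ δ * n) :
    Ex (Gp p) (fun x => ind (Sst a C x e < (2 * p ^ C.card - δ) * (n : ℝ) ^ (m - 2))) ≤
      Real.exp (- (δ ^ 2 * n / (8 * K))) := by
  have hn : (0:ℝ) < n := by exact_mod_cast (by have := EdgeK_two_le e; omega : 0 < n)
  have hG := cnt_ge a e hmn
  set M := (n : ℝ) ^ (m - 2) with hM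
  have hMpos : 0 < M := by positivity
  have hv : 0 < K * (M ^ 2 / n) := by positivity
  have ht := Gp_tail h0 h1 (f := fun x => - Sst a C x e) (c := fun f => ∑ c ∈ C, cnt2 a c e f)
    (fun x f => by
      rw [neg_sub_neg, abs_sub_comm]
      exact Sst_diff a C e f x) hv
    ((sum_sq_le a C ha e).trans (mul_le_mul_of_nonneg_right hK (by positivity)))
    (t := δ / 2 * M) (by positivity)
  refine (Ex_mono (Gp_prob h0 h1) fun x => ind_mono fun h => ?_).trans (ht.trans ?_)
  · have hE : Ex (Gp p) (fun x => - Sst a C x e) = - (p ^ C.card * cnt a e) := by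
      rw [← Sst_mean a C e h0 h1, ← neg_one_mul, ← Ex_smul]
      simp
    rw [hE]
    have hp := pow_nonneg h0 C.card
    have hp1 := pow_le_one₀ h0 h1 (n := C.card)
    have h2 := mul_le_mul_of_nonneg_left hG hp
    have h3 : (m : ℝ) ^ 2 / n ≤ δ / 4 := by
      rw [div_le_iff₀ hn]; linarith
    have h4 : p ^ C.card * ((m : ℝ) ^ 2 / n) ≤ δ / 4 := by
      calc p ^ C.card * ((m : ℝ) ^ 2 / n) ≤ 1 * ((m : ℝ) ^ 2 / n) :=
            mul_le_mul_of_nonneg_right hp1 (by positivity)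
        _ ≤ _ := by linarith
    have h5 := mul_le_mul_of_nonneg_left h4 hMpos.le
    nlinarith
  · apply Real.exp_le_exp.mpr
    have : (δ / 2 * M) ^ 2 / (2 * (K * (M ^ 2 / n))) = δ ^ 2 * n / (8 * K) := by
      field_simp
      norm_num
    rw [this]

end Counts

end
end ErgmMix


namespace ErgmMix

noncomputable section

/-- The logistic function. -/
def lgs (z : ℝ) : ℝ := Real.exp z / (1 + Real.exp z)

lemma lgs_pos (z : ℝ) : 0 < lgs z := by unfold lgs; positivity
lemma lgs_lt_one (z : ℝ) : lgs z < 1 := by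
  unfold lgs
  rw [div_lt_one (by positivity)]
  linarith
lemma lgs_mono : Monotone lgs := by
  intro a b h
  unfold lgs
  rw [div_le_div_iff₀ (by positivity) (by positivity)]
  have := Real.exp_le_exp.mpr h
  nlinarith

lemma one_sub_lgs (z : ℝ) : 1 - lgs z = 1 / (1 + Real.exp z) := by
  unfold lgs
  field_simp
  ring

section Model

variable {s : ℕ} (V : Fin s → ℕ) (Pt : ∀ i, Finset (EdgeK (V i))) (β : Fin s → ℝ)

/-- Standing sign assumption. -/
def Good : Prop := ∀ i, 0 ≤ β i ∨ (V i = 2 ∧ (Pt i).card = 1)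

/-- Update probabilities of the Glauber dynamics. -/
def sig (n : ℕ) (x : Config n) (e : EdgeK n) : ℝ := lgs (dH V Pt β n x e)

variable {n : ℕ}

lemma setEdge_eq (x : Config n) (e : EdgeK n) (b : Bool) : setEdge x e b = Function.update x e b := by
  funext f
  unfold setEdge
  by_cases h : f = e
  · subst h; simp
  · simp [h]

lemma copyCount_eq {m : ℕ} (x : Config n) (G : Finset (EdgeK m)) :
    (copyCount x G : ℝ) = ∑ v : Fin m ↪ Fin n, ind (∀ a ∈ G, x (mapEdge v a) = true) := by
  unfold copyCount
  rw [Finset.card_filter]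
  push_cast
  refine Finset.sum_congr rfl fun v _ => ?_
  by_cases h : ∀ a ∈ G, x (mapEdge v a) = true
  · rw [if_pos h, ind_true h]
  · rw [if_neg h, ind_false h]

lemma ind_forall_update {m : ℕ} (G : Finset (EdgeK m)) (x : Config n) (e : EdgeK n)
    (v : Fin m ↪ Fin n) :
    ind (∀ a ∈ G, Function.update x e true (mapEdge v a) = true)
      - ind (∀ a ∈ G, Function.update x e false (mapEdge v a) = true)
    = ∑ a ∈ G, ind (mapEdge v a = e) * ind (∀ c ∈ G.erase a, x (mapEdge v c) = true) := by
  by_cases h : ∃ a ∈ G, mapEdge v a = e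
  · obtain ⟨a, ha, rfl⟩ := h
    rw [Finset.sum_eq_single a, ind_true rfl, one_mul,
      ind_false (P := ∀ b ∈ G, Function.update x (mapEdge v a) false (mapEdge v b) = true), sub_zero]
    · congr 1
      apply propext
      constructor
      · intro h c hc
        have h1 := h c (Finset.mem_of_mem_erase hc)
        rwa [Function.update_of_ne] at h1
        exact fun h2 => (Finset.ne_of_mem_erase hc) (mapEdge_inj v h2)
      · intro h c hc
        by_cases hca : c = a
        · subst hca; simp
        · rw [Function.update_of_ne fun h2 => hca (mapEdge_inj v h2)]
          exact h c (Finset.mem_erase.mpr ⟨hca, hc⟩)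
    · intro h
      have := h a ha
      simp at this
    · intro b _ hb
      rw [ind_false fun h => hb (mapEdge_inj v h), zero_mul]
    · exact fun h => absurd ha h
  · push Not at h
    rw [Finset.sum_eq_zero, sub_eq_zero]
    · congr 1
      apply propext
      refine forall₂_congr fun a ha => ?_
      rw [Function.update_of_ne (h a ha), Function.update_of_ne (h a ha)]
    · intro a ha
      rw [ind_false (h a ha), zero_mul]

/-- The discrete derivative of the Hamiltonian in terms of rooted statistics. -/
lemma dH_eq (x : Config n) (e : EdgeK n) :
    dH V Pt β n x e = ∑ i, β i / (n : ℝ) ^ (V i - 2) *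
      ∑ a ∈ Pt i, Sst a ((Pt i).erase a) x e := by
  unfold dH ergmH
  rw [← Finset.sum_sub_distrib]
  refine Finset.sum_congr rfl fun i _ => ?_
  have : (copyCount (setEdge x e true) (Pt i) : ℝ) - copyCount (setEdge x e false) (Pt i)
      = ∑ a ∈ Pt i, Sst a ((Pt i).erase a) x e := by
    rw [copyCount_eq, copyCount_eq, setEdge_eq, setEdge_eq, ← Finset.sum_sub_distrib,
      Finset.sum_congr rfl fun v _ => ind_forall_update (Pt i) x e v, Finset.sum_comm]
    rfl
  rw [← this]
  ring

lemma Sst_two {m : ℕ} (hm : m = 2) (a : EdgeK m) (x : Config n) (e : EdgeK n) :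
    Sst a ∅ x e = 2 := by
  have h : Sst a ∅ x e = cnt a e := by
    unfold Sst cnt
    refine Finset.sum_congr rfl fun v _ => ?_
    rw [ind_true (P := ∀ c ∈ (∅ : Finset (EdgeK m)), _) (by simp), mul_one]
  rw [h, cnt_eq, hm]
  simp

lemma single_sum {m : ℕ} (hm : m = 2) (G : Finset (EdgeK m)) (hG : G.card = 1) (x : Config n)
    (e : EdgeK n) : ∑ a ∈ G, Sst a (G.erase a) x e = 2 := by
  obtain ⟨a, rfl⟩ := Finset.card_eq_one.mp hG
  rw [Finset.sum_singleton, Finset.erase_singleton, Sst_two hm]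

variable {V Pt β}

lemma dH_mono (hg : Good V Pt β) (e : EdgeK n) : Monotone (fun x => dH V Pt β n x e) := by
  intro x y hxy
  simp only [dH_eq]
  refine Finset.sum_le_sum fun i _ => ?_
  rcases hg i with h | ⟨h1, h2⟩
  · refine mul_le_mul_of_nonneg_left ?_ (by positivity)
    exact Finset.sum_le_sum fun a _ => Sst_mono _ _ _ hxy
  · rw [single_sum h1 _ h2, single_sum h1 _ h2]

lemma sig_ok (hg : Good V Pt β) : SigOK (sig V Pt β n) where
  nonneg _ _ := (lgs_pos _).le
  le_one _ _ := (lgs_lt_one _).le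
  mono e _ _ h := lgs_mono (dH_mono hg e h)

variable (V Pt β)

lemma dH_update (x : Config n) (e : EdgeK n) (b : Bool) :
    dH V Pt β n (Function.update x e b) e = dH V Pt β n x e := by
  unfold dH
  simp only [setEdge_eq, Function.update_idem]

lemma glauber_sum (x : Config n) (f : Config n → ℝ) :
    ∑ y, glauber V Pt β n x y * f y = Aop (sig V Pt β n) f x := by
  unfold glauber Aop
  simp only [mul_assoc]
  rw [← Finset.mul_sum, card_EdgeK]
  congr 1
  simp only [Finset.sum_mul]
  rw [Finset.sum_comm]
  refine Finset.sum_congr rfl fun e _ => ?_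
  unfold Rst sig
  rw [one_sub_lgs, ← setEdge_eq, ← setEdge_eq]
  simp only [add_mul, Finset.sum_add_distrib, ite_mul, zero_mul]
  simp [lgs]

lemma gibbs_prob : IsProb (gibbs V Pt β n) := by
  have hZ : 0 < ∑ Y : Config n, Real.exp (ergmH V Pt β n Y) :=
    Finset.sum_pos (fun _ _ => Real.exp_pos _) ⟨fun _ => true, mem_univ _⟩
  constructor
  · intro x; unfold gibbs; positivity
  · unfold gibbs
    rw [← Finset.sum_div, div_self hZ.ne']

lemma gibbs_stat [Nonempty (EdgeK n)] (f : Config n → ℝ) :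
    Ex (gibbs V Pt β n) (Aop (sig V Pt β n) f) = Ex (gibbs V Pt β n) f := by
  refine stat_Aop _ _ (fun e x b => ?_) (fun e x => ?_) f
  · unfold sig; rw [dH_update]
  · unfold sig
    rw [one_sub_lgs]
    unfold gibbs lgs dH
    rw [setEdge_eq, setEdge_eq]
    set a := ergmH V Pt β n (Function.update x e true)
    set b := ergmH V Pt β n (Function.update x e false)
    rw [Real.exp_sub]
    have := Real.exp_pos a
    have := Real.exp_pos b
    field_simp

lemma gibbs_chain [Nonempty (EdgeK n)] :
    IsChain (sig V Pt β n) (fun _ => gibbs V Pt β n) where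
  prob _ := gibbs_prob V Pt β
  step _ f := (gibbs_stat V Pt β f).symm

lemma kernel_start (x : Config n) (f : Config n → ℝ) :
    Ex (kernelStep (glauber V Pt β n) 0 x) f = f x := by
  unfold Ex kernelStep
  simp

lemma kernel_step (x : Config n) (t : ℕ) (f : Config n → ℝ) :
    Ex (kernelStep (glauber V Pt β n) (t+1) x) f
      = Ex (kernelStep (glauber V Pt β n) t x) (Aop (sig V Pt β n) f) := by
  unfold Ex
  simp only [← glauber_sum]
  simp only [kernelStep, Finset.sum_mul, Finset.mul_sum]
  rw [Finset.sum_comm]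
  simp only [mul_assoc]

lemma glauber_nonneg (x y : Config n) : 0 ≤ glauber V Pt β n x y := by
  unfold glauber
  refine mul_nonneg (by positivity) (Finset.sum_nonneg fun e _ => add_nonneg ?_ ?_)
  · split_ifs <;> positivity
  · split_ifs <;> positivity

lemma kernel_nonneg (t : ℕ) (x y : Config n) : 0 ≤ kernelStep (glauber V Pt β n) t x y := by
  induction t generalizing y with
  | zero => unfold kernelStep; split_ifs <;> norm_num
  | succ t ih =>
    unfold kernelStep
    exact Finset.sum_nonneg fun z _ => mul_nonneg (ih z) (glauber_nonneg V Pt β _ _)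

lemma kernel_chain [Nonempty (EdgeK n)] (x : Config n) :
    IsChain (sig V Pt β n) (fun t => kernelStep (glauber V Pt β n) t x) where
  prob t := by
    refine ⟨fun y => kernel_nonneg V Pt β t x y, ?_⟩
    have h : ∀ t, Ex (kernelStep (glauber V Pt β n) t x) (fun _ => 1) = 1 := by
      intro t
      induction t with
      | zero => rw [kernel_start]
      | succ t ih => rw [kernel_step, Aop_const]; exact ih
    simpa [Ex] using h t
  step t f := kernel_step V Pt β x t f

/-! ### Bad events -/

/-- Some rooted statistic is too large. -/
def BadUp (n : ℕ) (p δ : ℝ) (x : Config n) : Prop :=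
  ∃ i, ∃ a : EdgeK (V i), ∃ C : Finset (EdgeK (V i)), ∃ e : EdgeK n, a ∉ C ∧
    (2 * p ^ C.card + δ) * (n : ℝ) ^ (V i - 2) < Sst a C x e

/-- Some rooted statistic is too small. -/
def BadLo (n : ℕ) (p δ : ℝ) (x : Config n) : Prop :=
  ∃ i, ∃ a : EdgeK (V i), ∃ C : Finset (EdgeK (V i)), ∃ e : EdgeK n, a ∉ C ∧
    Sst a C x e < (2 * p ^ C.card - δ) * (n : ℝ) ^ (V i - 2)

lemma BadUp_upper (p δ : ℝ) (x y : Config n) (h : x ≤ y) (hx : BadUp V n p δ x) :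
    BadUp V n p δ y := by
  obtain ⟨i, a, C, e, ha, hS⟩ := hx
  exact ⟨i, a, C, e, ha, hS.trans_le (Sst_mono a C e h)⟩

lemma BadLo_lower (p δ : ℝ) (x y : Config n) (h : x ≤ y) (hx : BadLo V n p δ y) :
    BadLo V n p δ x := by
  obtain ⟨i, a, C, e, ha, hS⟩ := hx
  exact ⟨i, a, C, e, ha, (Sst_mono a C e h).trans_lt hS⟩

/-- Number of kinds of statistics. -/
def kap0 : ℝ := ∑ i, (Fintype.card (EdgeK (V i)) : ℝ) * Fintype.card (Finset (EdgeK (V i)))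

/-- Variance constant. -/
def kap1 : ℝ := 1 + ∑ i, 16 * (Fintype.card (EdgeK (V i)) : ℝ) ^ 2

/-- Bound for the probability of bad events. -/
def tauF (n : ℕ) (δ : ℝ) : ℝ := kap0 V * (n : ℝ) ^ 2 * Real.exp (- (δ ^ 2 * n / (8 * kap1 V)))

lemma kap0_nonneg : 0 ≤ kap0 V := Finset.sum_nonneg fun _ _ => by positivity
lemma kap1_pos : 0 < kap1 V := by
  unfold kap1
  have : 0 ≤ ∑ i, 16 * (Fintype.card (EdgeK (V i)) : ℝ) ^ 2 :=
    Finset.sum_nonneg fun _ _ => by positivity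
  linarith
lemma tauF_nonneg (n : ℕ) (δ : ℝ) : 0 ≤ tauF V n δ := by
  unfold tauF
  have := kap0_nonneg V
  positivity

lemma card_le_kap1 (i : Fin s) (C : Finset (EdgeK (V i))) : 16 * (C.card : ℝ) ^ 2 ≤ kap1 V := by
  have h1 : (C.card : ℝ) ≤ Fintype.card (EdgeK (V i)) := by exact_mod_cast Finset.card_le_univ C
  have h2 : 16 * (Fintype.card (EdgeK (V i)) : ℝ) ^ 2 ≤
      ∑ i, 16 * (Fintype.card (EdgeK (V i)) : ℝ) ^ 2 :=
    Finset.single_le_sum (f := fun i => 16 * (Fintype.card (EdgeK (V i)) : ℝ) ^ 2)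
      (fun _ _ => by positivity) (mem_univ i)
  have h3 : (C.card : ℝ) ^ 2 ≤ (Fintype.card (EdgeK (V i)) : ℝ) ^ 2 := by gcongr
  unfold kap1
  linarith

lemma card_EdgeK_le (n : ℕ) : (Fintype.card (EdgeK n) : ℝ) ≤ (n : ℝ) ^ 2 := by
  rw [card_EdgeK]
  exact_mod_cast Nat.choose_le_pow n 2

/-- Union bound for a family of events indexed by statistics. -/
lemma union_bound {p : ℝ} (h0 : 0 ≤ p) (h1 : p ≤ 1)
    (Q : ∀ i, EdgeK (V i) → Finset (EdgeK (V i)) → EdgeK n → Config n → Prop) {q : ℝ}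
    (hq : 0 ≤ q) (hQ : ∀ i a C e, Ex (Gp p) (fun x => ind (Q i a C e x)) ≤ q) :
    Ex (Gp p) (fun x => ind (∃ i a C e, Q i a C e x)) ≤ kap0 V * (n : ℝ) ^ 2 * q := by
  have hstep : ∀ x, ind (∃ i a C e, Q i a C e x) ≤ ∑ i, ∑ a, ∑ C, ∑ e, ind (Q i a C e x) := by
    intro x
    refine (ind_exists_le _).trans (Finset.sum_le_sum fun i _ => ?_)
    refine (ind_exists_le _).trans (Finset.sum_le_sum fun a _ => ?_)
    refine (ind_exists_le _).trans (Finset.sum_le_sum fun C _ => ?_)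
    exact ind_exists_le _
  refine (Ex_mono (Gp_prob h0 h1) hstep).trans ?_
  simp only [Ex_sum]
  calc ∑ i, ∑ a, ∑ C, ∑ e, Ex (Gp p) (fun x => ind (Q i a C e x))
      ≤ ∑ i, ∑ _a : EdgeK (V i), ∑ _C : Finset (EdgeK (V i)), ∑ _e : EdgeK n, q :=
        Finset.sum_le_sum fun i _ => Finset.sum_le_sum fun a _ => Finset.sum_le_sum fun C _ =>
          Finset.sum_le_sum fun e _ => hQ i a C e
    _ = kap0 V * (Fintype.card (EdgeK n) : ℝ) * q := by
        unfold kap0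
        rw [Finset.sum_mul, Finset.sum_mul]
        refine Finset.sum_congr rfl fun i _ => ?_
        simp only [Finset.sum_const, Finset.card_univ, nsmul_eq_mul]
        ring
    _ ≤ _ := by
        have := kap0_nonneg V
        have := card_EdgeK_le n
        gcongr

lemma BadUp_prob {p δ : ℝ} (h0 : 0 ≤ p) (h1 : p ≤ 1) (hδ : 0 ≤ δ) :
    Ex (Gp p) (fun x : Config n => ind (BadUp V n p δ x)) ≤ tauF V n δ := by
  refine union_bound V h0 h1 (fun i a C e x => a ∉ C ∧
    (2 * p ^ C.card + δ) * (n : ℝ) ^ (V i - 2) < Sst a C x e) (Real.exp_pos _).le ?_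
  intro i a C e
  by_cases ha : a ∈ C
  · have : Ex (Gp p) (fun x : Config n => ind (a ∉ C ∧
      (2 * p ^ C.card + δ) * (n : ℝ) ^ (V i - 2) < Sst a C x e)) = 0 := by
      unfold Ex
      refine Finset.sum_eq_zero fun x _ => ?_
      simp only
      rw [ind_false (by tauto), mul_zero]
    rw [this]; positivity
  · refine le_trans (Ex_mono (Gp_prob h0 h1) fun x => ind_mono fun h => h.2)
      (Sst_tail_up a C ha e h0 h1 hδ (card_le_kap1 V i C) (kap1_pos V))

lemma BadLo_prob {p δ : ℝ} (h0 : 0 ≤ p) (h1 : p ≤ 1) (hδ : 0 ≤ δ)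
    (hn : ∀ i, V i ≤ n ∧ 4 * (V i : ℝ) ^ 2 ≤ δ * n) :
    Ex (Gp p) (fun x : Config n => ind (BadLo V n p δ x)) ≤ tauF V n δ := by
  refine union_bound V h0 h1 (fun i a C e x => a ∉ C ∧
    Sst a C x e < (2 * p ^ C.card - δ) * (n : ℝ) ^ (V i - 2)) (Real.exp_pos _).le ?_
  intro i a C e
  by_cases ha : a ∈ C
  · have : Ex (Gp p) (fun x : Config n => ind (a ∉ C ∧
      Sst a C x e < (2 * p ^ C.card - δ) * (n : ℝ) ^ (V i - 2))) = 0 := by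
      unfold Ex
      refine Finset.sum_eq_zero fun x _ => ?_
      simp only
      rw [ind_false (by tauto), mul_zero]
    rw [this]; positivity
  · refine le_trans (Ex_mono (Gp_prob h0 h1) fun x => ind_mono fun h => h.2)
      (Sst_tail_lo a C ha e h0 h1 hδ (card_le_kap1 V i C) (kap1_pos V) (hn i).1 (hn i).2)

/-! ### Consequences of being good -/

/-- Lipschitz constant. -/
def kapK : ℝ := 1 + ∑ i, |β i| * ((Pt i).card : ℝ) ^ 2

lemma kapK_pos : 0 < kapK V Pt β := by
  unfold kapK
  have : 0 ≤ ∑ i, |β i| * ((Pt i).card : ℝ) ^ 2 := Finset.sum_nonneg fun _ _ => by positivity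
  linarith

/-- The derivative of `Ψ`. -/
def dPsi (p : ℝ) : ℝ :=
  ∑ i, 2 * β i * ((Pt i).card : ℝ) * (((Pt i).card - 1 : ℕ) : ℝ) * p ^ ((Pt i).card - 1 - 1)

variable {V Pt β}

lemma card_le_sq (k : ℕ) : (k : ℝ) ≤ (k : ℝ) ^ 2 := by
  exact_mod_cast Nat.le_self_pow (by norm_num) k

lemma dH_le (hg : Good V Pt β) {p δ : ℝ} (hδ : 0 ≤ δ) {x : Config n}
    (hx : ¬ BadUp V n p δ x) (e : EdgeK n) :
    dH V Pt β n x e ≤ PsiF Pt β p + kapK V Pt β * δ := by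
  have hn : (0:ℝ) < n := by exact_mod_cast (by have := EdgeK_two_le e; omega : 0 < n)
  rw [dH_eq]
  have hsum : PsiF Pt β p + ∑ i, |β i| * ((Pt i).card : ℝ) ^ 2 * δ ≤ PsiF Pt β p + kapK V Pt β * δ := by
    unfold kapK
    rw [← Finset.sum_mul]
    nlinarith
  refine le_trans ?_ hsum
  unfold PsiF
  rw [← Finset.sum_add_distrib]
  refine Finset.sum_le_sum fun i _ => ?_
  rcases hg i with h | ⟨h1, h2⟩
  · have hS : ∑ a ∈ Pt i, Sst a ((Pt i).erase a) x e ≤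
        (Pt i).card * ((2 * p ^ ((Pt i).card - 1) + δ) * (n : ℝ) ^ (V i - 2)) := by
      rw [← nsmul_eq_mul]
      refine Finset.sum_le_card_nsmul _ _ _ fun a ha => ?_
      by_contra hc
      push Not at hc
      rw [← Finset.card_erase_of_mem ha] at hc
      exact hx ⟨i, a, _, e, Finset.notMem_erase a _, hc⟩
    calc _ ≤ β i / (n : ℝ) ^ (V i - 2) * ((Pt i).card * ((2 * p ^ ((Pt i).card - 1) + δ) * (n : ℝ) ^ (V i - 2))) :=
          mul_le_mul_of_nonneg_left hS (by positivity)
      _ = 2 * β i * (Pt i).card * p ^ ((Pt i).card - 1) + β i * (Pt i).card * δ := by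
          field_simp
      _ ≤ _ := by
          rw [abs_of_nonneg h]
          have := card_le_sq (Pt i).card
          gcongr
  · rw [single_sum h1 _ h2, show V i - 2 = 0 by omega, h2]
    simp
    have : 0 ≤ |β i| * δ := by positivity
    linarith

lemma le_dH (hg : Good V Pt β) {p δ : ℝ} (hδ : 0 ≤ δ) {x : Config n}
    (hx : ¬ BadLo V n p δ x) (e : EdgeK n) :
    PsiF Pt β p - kapK V Pt β * δ ≤ dH V Pt β n x e := by
  have hn : (0:ℝ) < n := by exact_mod_cast (by have := EdgeK_two_le e; omega : 0 < n)
  rw [dH_eq]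
  have hsum : PsiF Pt β p - kapK V Pt β * δ ≤ PsiF Pt β p - ∑ i, |β i| * ((Pt i).card : ℝ) ^ 2 * δ := by
    unfold kapK
    rw [← Finset.sum_mul]
    nlinarith
  refine hsum.trans ?_
  unfold PsiF
  rw [← Finset.sum_sub_distrib]
  refine Finset.sum_le_sum fun i _ => ?_
  rcases hg i with h | ⟨h1, h2⟩
  · have hS : (Pt i).card * ((2 * p ^ ((Pt i).card - 1) - δ) * (n : ℝ) ^ (V i - 2)) ≤
        ∑ a ∈ Pt i, Sst a ((Pt i).erase a) x e := by
      rw [← nsmul_eq_mul]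
      refine Finset.card_nsmul_le_sum _ _ _ fun a ha => ?_
      by_contra hc
      push Not at hc
      rw [← Finset.card_erase_of_mem ha] at hc
      exact hx ⟨i, a, _, e, Finset.notMem_erase a _, hc⟩
    calc _ ≤ 2 * β i * (Pt i).card * p ^ ((Pt i).card - 1) - β i * (Pt i).card * δ := by
          rw [abs_of_nonneg h]
          have := card_le_sq (Pt i).card
          gcongr
      _ = β i / (n : ℝ) ^ (V i - 2) * ((Pt i).card * ((2 * p ^ ((Pt i).card - 1) - δ) * (n : ℝ) ^ (V i - 2))) := by
          field_simp
      _ ≤ _ := mul_le_mul_of_nonneg_left hS (by positivity)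
  · rw [single_sum h1 _ h2, show V i - 2 = 0 by omega, h2]
    simp
    have : 0 ≤ |β i| * δ := by positivity
    linarith

lemma Sst_sum {m : ℕ} (a : EdgeK m) (C : Finset (EdgeK m)) (x : Config n) :
    ∑ e, Sst a C x e = ∑ v : Fin m ↪ Fin n, ind (∀ c ∈ C, x (mapEdge v c) = true) := by
  unfold Sst
  rw [Finset.sum_comm]
  refine Finset.sum_congr rfl fun v _ => ?_
  rw [← Finset.sum_mul, sum_ind_eq, one_mul]

lemma Sst_sum_sub {m : ℕ} (a : EdgeK m) (C : Finset (EdgeK m)) {x y : Config n} (hxy : x ≤ y) :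
    ∑ e, Sst a C y e - ∑ e, Sst a C x e ≤
      ∑ b ∈ C, ∑ f, (ind (y f = true) - ind (x f = true)) * Sst b (C.erase b) y f := by
  rw [Sst_sum, Sst_sum, ← Finset.sum_sub_distrib]
  refine (Finset.sum_le_sum fun v _ => ind_forall_sub_le (mapEdge v) C hxy).trans ?_
  rw [Finset.sum_comm]
  refine Finset.sum_le_sum fun b _ => ?_
  unfold Sst
  simp only [Finset.mul_sum]
  rw [Finset.sum_comm]
  refine le_of_eq (Finset.sum_congr rfl fun v _ => ?_)
  rw [← sum_ind_eq_mul (mapEdge v b) (fun f => (ind (y f = true) - ind (x f = true)) *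
    ind (∀ c ∈ C.erase b, y (mapEdge v c) = true))]
  exact Finset.sum_congr rfl fun f _ => by ring

lemma dH_sum_sub (hg : Good V Pt β) {p δ : ℝ} (hδ : 0 ≤ δ) {x y : Config n} (hxy : x ≤ y)
    (hn : 0 < n) (hy : ¬ BadUp V n p δ y) :
    ∑ e, dH V Pt β n y e - ∑ e, dH V Pt β n x e ≤
      (dPsi V Pt β p + kapK V Pt β * δ) * (Nn y - Nn x) := by
  have hn : (0:ℝ) < n := by exact_mod_cast hn
  have hN : 0 ≤ Nn y - Nn x := sub_nonneg.mpr (Nn_mono hxy)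
  have hNd : Nn y - Nn x = ∑ f, (ind (y f = true) - ind (x f = true)) := by
    unfold Nn; rw [Finset.sum_sub_distrib]
  simp only [dH_eq]
  rw [Finset.sum_comm, Finset.sum_comm (s := univ (α := EdgeK n)), ← Finset.sum_sub_distrib]
  have hsum : (dPsi V Pt β p + ∑ i, |β i| * ((Pt i).card : ℝ) ^ 2 * δ) * (Nn y - Nn x)
      ≤ (dPsi V Pt β p + kapK V Pt β * δ) * (Nn y - Nn x) := by
    refine mul_le_mul_of_nonneg_right ?_ hN
    unfold kapK
    rw [← Finset.sum_mul]
    nlinarith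
  refine le_trans ?_ hsum
  unfold dPsi
  rw [← Finset.sum_add_distrib, Finset.sum_mul]
  refine Finset.sum_le_sum fun i _ => ?_
  rcases hg i with h | ⟨h1, h2⟩
  · rw [← Finset.mul_sum, ← Finset.mul_sum, ← mul_sub, Finset.sum_comm,
      Finset.sum_comm (s := univ (α := EdgeK n)), ← Finset.sum_sub_distrib]
    have hS : ∑ a ∈ Pt i, (∑ e, Sst a ((Pt i).erase a) y e - ∑ e, Sst a ((Pt i).erase a) x e) ≤
        (Pt i).card * ((((Pt i).card - 1 : ℕ) : ℝ) * ((2 * p ^ ((Pt i).card - 1 - 1) + δ)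
          * (n : ℝ) ^ (V i - 2) * (Nn y - Nn x))) := by
      rw [← nsmul_eq_mul]
      refine Finset.sum_le_card_nsmul _ _ _ fun a ha => ?_
      refine (Sst_sum_sub a _ hxy).trans ?_
      rw [← Finset.card_erase_of_mem ha, ← nsmul_eq_mul]
      refine Finset.sum_le_card_nsmul _ _ _ fun b hb => ?_
      rw [hNd, Finset.mul_sum]
      refine Finset.sum_le_sum fun f _ => ?_
      rw [mul_comm]
      refine mul_le_mul_of_nonneg_right ?_ (sub_nonneg.mpr (ind_mono (bool_le_true _ _ (hxy _))))
      by_contra hc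
      push Not at hc
      rw [← Finset.card_erase_of_mem hb] at hc
      exact hy ⟨i, b, _, f, Finset.notMem_erase b _, hc⟩
    have hc1 : (((Pt i).card - 1 : ℕ) : ℝ) ≤ (Pt i).card := by exact_mod_cast Nat.sub_le _ _
    calc _ ≤ β i / (n : ℝ) ^ (V i - 2) * ((Pt i).card * ((((Pt i).card - 1 : ℕ) : ℝ) *
            ((2 * p ^ ((Pt i).card - 1 - 1) + δ) * (n : ℝ) ^ (V i - 2) * (Nn y - Nn x)))) :=
          mul_le_mul_of_nonneg_left hS (by positivity)
      _ = (2 * β i * (Pt i).card * (((Pt i).card - 1 : ℕ) : ℝ) * p ^ ((Pt i).card - 1 - 1)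
            + β i * ((Pt i).card * (((Pt i).card - 1 : ℕ) : ℝ)) * δ) * (Nn y - Nn x) := by
          field_simp
      _ ≤ _ := by
          refine mul_le_mul_of_nonneg_right ?_ hN
          rw [abs_of_nonneg h, sq]
          gcongr
  · have e1 : ∀ z : Config n, ∀ e, ∑ a ∈ Pt i, Sst a ((Pt i).erase a) z e = 2 := fun z e =>
      single_sum h1 _ h2 z e
    simp only [e1, sub_self]
    refine mul_nonneg ?_ hN
    rw [h2]
    simp
    positivity

/-- The contraction estimate in the good region. -/
lemma sig_sum_sub (hg : Good V Pt β) {u l δ lam : ℝ} (hδ : 0 ≤ δ) (hlam : 0 ≤ lam) (hn : 0 < n)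
    (hL : ∀ z z', PsiF Pt β l - kapK V Pt β * δ ≤ z → z ≤ z' → z' ≤ PsiF Pt β u + kapK V Pt β * δ →
      lgs z' - lgs z ≤ lam * (z' - z))
    {x y : Config n} (hxy : x ≤ y) (hx : ¬ BadLo V n l δ x) (hy : ¬ BadUp V n u δ y) :
    ∑ e, sig V Pt β n y e - ∑ e, sig V Pt β n x e ≤
      lam * (dPsi V Pt β u + kapK V Pt β * δ) * (Nn y - Nn x) := by
  rw [mul_assoc]
  refine le_trans ?_ (mul_le_mul_of_nonneg_left (dH_sum_sub hg hδ hxy hn hy) hlam)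
  rw [← Finset.sum_sub_distrib, ← Finset.sum_sub_distrib, Finset.mul_sum]
  exact Finset.sum_le_sum fun e _ => hL _ _ (le_dH hg hδ hx e) (dH_mono hg e hxy) (dH_le hg hδ hy e)

end Model

end
end ErgmMix


namespace ErgmMix

noncomputable section

lemma lgs_hasDerivAt (z : ℝ) : HasDerivAt lgs (lgs z * (1 - lgs z)) z := by
  have h := (Real.hasDerivAt_exp z).div ((Real.hasDerivAt_exp z).const_add 1)
    (by positivity : (1 + Real.exp z) ≠ 0)
  have e : lgs z * (1 - lgs z) =
      (Real.exp z * (1 + Real.exp z) - Real.exp z * Real.exp z) / (1 + Real.exp z) ^ 2 := by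
    rw [one_sub_lgs]
    unfold lgs
    field_simp
    ring
  rw [e]
  exact h

lemma lgs_continuous : Continuous lgs :=
  continuous_iff_continuousAt.mpr fun z => (lgs_hasDerivAt z).continuousAt

lemma lgs_sub_le {lo hi lam : ℝ} (h : ∀ w, lo ≤ w → w ≤ hi → lgs w * (1 - lgs w) ≤ lam) {z z' : ℝ}
    (h1 : lo ≤ z) (h2 : z ≤ z') (h3 : z' ≤ hi) : lgs z' - lgs z ≤ lam * (z' - z) := by
  refine Convex.image_sub_le_mul_sub_of_deriv_le (convex_Icc lo hi) lgs_continuous.continuousOn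
    (fun w _ => (lgs_hasDerivAt w).differentiableAt.differentiableWithinAt) ?_
    z ⟨h1, h2.trans h3⟩ z' ⟨h1.trans h2, h3⟩ h2
  intro w hw
  rw [interior_Icc] at hw
  rw [(lgs_hasDerivAt w).deriv]
  exact h w hw.1.le hw.2.le

lemma lgs_add_le (z : ℝ) {ε : ℝ} (hε : 0 ≤ ε) : lgs (z + ε) ≤ lgs z + ε := by
  have := lgs_sub_le (lo := z) (hi := z + ε) (lam := 1) (fun w _ _ => by
    nlinarith [lgs_pos w, lgs_lt_one w]) le_rfl (by linarith : z ≤ z + ε) le_rfl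
  linarith

section Phi

variable {s : ℕ} {V : Fin s → ℕ} {Pt : ∀ i, Finset (EdgeK (V i))} {β : Fin s → ℝ}

lemma phiF_eq (p : ℝ) : phiF Pt β p = lgs (PsiF Pt β p) := rfl

lemma PsiF_hasDerivAt (p : ℝ) : HasDerivAt (PsiF Pt β) (dPsi V Pt β p) p := by
  unfold PsiF dPsi
  have h : ∀ i ∈ (univ : Finset (Fin s)), HasDerivAt
      (fun p : ℝ => 2 * β i * ((Pt i).card : ℝ) * p ^ ((Pt i).card - 1))
      (2 * β i * ((Pt i).card : ℝ) * ((((Pt i).card - 1 : ℕ) : ℝ) * p ^ ((Pt i).card - 1 - 1))) p :=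
    fun i _ => (hasDerivAt_pow _ p).const_mul _
  have h2 := HasDerivAt.fun_sum h
  simpa only [mul_assoc] using h2

lemma PsiF_continuous : Continuous (PsiF Pt β) :=
  continuous_iff_continuousAt.mpr fun z => (PsiF_hasDerivAt z).continuousAt

lemma dPsi_continuous : Continuous (dPsi V Pt β) := by
  unfold dPsi
  fun_prop

lemma PsiF_mono (hg : Good V Pt β) {p q : ℝ} (h0 : 0 ≤ p) (h : p ≤ q) :
    PsiF Pt β p ≤ PsiF Pt β q := by
  unfold PsiF
  refine Finset.sum_le_sum fun i _ => ?_
  rcases hg i with h1 | ⟨_, h2⟩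
  · gcongr
  · rw [h2]; simp

lemma phiF_hasDerivAt (p : ℝ) : HasDerivAt (phiF Pt β)
    (lgs (PsiF Pt β p) * (1 - lgs (PsiF Pt β p)) * dPsi V Pt β p) p :=
  (lgs_hasDerivAt _).comp p (PsiF_hasDerivAt p)

lemma phiF_continuous : Continuous (phiF Pt β) :=
  continuous_iff_continuousAt.mpr fun z => (phiF_hasDerivAt z).continuousAt

lemma phi_lt {ps : ℝ} (hHT : HighTemp Pt β ps) {p : ℝ} (h1 : ps < p) (h2 : p ≤ 1) :
    phiF Pt β p < p := by
  obtain ⟨hps, _, huniq, _⟩ := hHT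
  by_contra hc
  push Not at hc
  have hcont : ContinuousOn (fun q => phiF Pt β q - q) (Set.Icc p 1) :=
    (phiF_continuous.sub continuous_id).continuousOn
  have hmem : (0:ℝ) ∈ Set.Icc (phiF Pt β 1 - 1) (phiF Pt β p - p) := by
    refine ⟨?_, by linarith⟩
    rw [phiF_eq]
    linarith [lgs_lt_one (PsiF Pt β 1)]
  obtain ⟨q, hq, hq0⟩ := intermediate_value_Icc' h2 hcont hmem
  have := huniq q ⟨by linarith [hps.1, hq.1], hq.2⟩ (by simp only at hq0; linarith)
  linarith [hq.1]

lemma lt_phi {ps : ℝ} (hHT : HighTemp Pt β ps) {p : ℝ} (h1 : p < ps) (h2 : 0 ≤ p) :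
    p < phiF Pt β p := by
  obtain ⟨hps, _, huniq, _⟩ := hHT
  by_contra hc
  push Not at hc
  have hcont : ContinuousOn (fun q => phiF Pt β q - q) (Set.Icc 0 p) :=
    (phiF_continuous.sub continuous_id).continuousOn
  have hmem : (0:ℝ) ∈ Set.Icc (phiF Pt β p - p) (phiF Pt β 0 - 0) := by
    refine ⟨by linarith, ?_⟩
    rw [phiF_eq]
    linarith [lgs_pos (PsiF Pt β 0)]
  obtain ⟨q, hq, hq0⟩ := intermediate_value_Icc' h2 hcont hmem
  have := huniq q ⟨hq.1, by linarith [hps.2, hq.2]⟩ (by simp only at hq0; linarith)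
  linarith [hq.2]

lemma phi_contr {ps : ℝ} (hHT : HighTemp Pt β ps) : ∃ η : ℝ, 0 < η ∧ η < 1 ∧
    (∀ p, ps ≤ p → p ≤ 1 → phiF Pt β p - ps ≤ (1 - η) * (p - ps)) ∧
    (∀ p, 0 ≤ p → p ≤ ps → ps - phiF Pt β p ≤ (1 - η) * (ps - p)) := by
  have hfix := hHT.2.1
  have hd := hHT.2.2.2
  have hcont : ContinuousOn (dslope (phiF Pt β) ps) (Set.Icc 0 1) := by
    have : Continuous (dslope (phiF Pt β) ps) := by
      rw [continuous_iff_continuousAt]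
      intro b
      by_cases hb : b = ps
      · subst hb
        exact continuousAt_dslope_same.mpr (phiF_hasDerivAt b).differentiableAt
      · exact (continuousAt_dslope_of_ne hb).mpr phiF_continuous.continuousAt
    exact this.continuousOn
  obtain ⟨q, hq, hmax⟩ := isCompact_Icc.exists_isMaxOn ⟨(0:ℝ), by simp⟩ hcont
  have heq : ∀ p, phiF Pt β p - ps = (p - ps) * dslope (phiF Pt β) ps p := by
    intro p
    have := sub_smul_dslope (phiF Pt β) ps p
    rw [smul_eq_mul, hfix] at this
    linarith
  have hlt : dslope (phiF Pt β) ps q < 1 := by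
    rcases lt_trichotomy q ps with h | h | h
    · have h1 := lt_phi hHT h hq.1
      have h2 := heq q
      by_contra hc
      push Not at hc
      nlinarith
    · rw [h, dslope_same]; exact hd
    · have h1 := phi_lt hHT h hq.2
      have h2 := heq q
      by_contra hc
      push Not at hc
      nlinarith
  have hps := hHT.1
  refine ⟨1 - max (dslope (phiF Pt β) ps q) (1/2), ?_, ?_, ?_, ?_⟩
  · have : max (dslope (phiF Pt β) ps q) (1/2) < 1 := max_lt hlt (by norm_num)
    linarith
  · have : (1/2 : ℝ) ≤ max (dslope (phiF Pt β) ps q) (1/2) := le_max_right _ _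
    linarith
  · intro p h1 h2
    have h3 : dslope (phiF Pt β) ps p ≤ dslope (phiF Pt β) ps q := hmax ⟨hps.1.trans h1, h2⟩
    have h4 := h3.trans (le_max_left _ (1/2))
    rw [heq p]
    nlinarith
  · intro p h1 h2
    have h3 : dslope (phiF Pt β) ps p ≤ dslope (phiF Pt β) ps q := hmax ⟨h1, h2.trans hps.2⟩
    have h4 := h3.trans (le_max_left _ (1/2))
    have := heq p
    nlinarith

variable (Pt β)

/-- Upper envelope recursion. -/
def useq (ε : ℝ) : ℕ → ℝ
  | 0 => 1
  | k + 1 => lgs (PsiF Pt β (useq ε k) + ε)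

/-- Lower envelope recursion. -/
def lseq (ε : ℝ) : ℕ → ℝ
  | 0 => 0
  | k + 1 => lgs (PsiF Pt β (lseq ε k) - ε)

variable {Pt β}

lemma useq_bounds (hg : Good V Pt β) {ps : ℝ} (hHT : HighTemp Pt β ps) {η : ℝ} (hη0 : 0 < η)
    (hη1 : η < 1) (hη : ∀ p, ps ≤ p → p ≤ 1 → phiF Pt β p - ps ≤ (1 - η) * (p - ps))
    {ε : ℝ} (hε : 0 ≤ ε) (k : ℕ) :
    ps ≤ useq Pt β ε k ∧ useq Pt β ε k ≤ 1 ∧ useq Pt β ε k - ps ≤ (1 - η) ^ k + ε / η := by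
  have hps := hHT.1
  have hfix := hHT.2.1
  induction k with
  | zero =>
    refine ⟨hps.2, le_rfl, ?_⟩
    have : 0 ≤ ε / η := by positivity
    simp only [useq, pow_zero]
    linarith [hps.1]
  | succ k ih =>
    obtain ⟨h1, h2, h3⟩ := ih
    simp only [useq]
    refine ⟨?_, (lgs_lt_one _).le, ?_⟩
    · calc ps = lgs (PsiF Pt β ps) := by rw [← phiF_eq, hfix]
        _ ≤ _ := lgs_mono (by have := PsiF_mono hg hps.1 h1; linarith)
    · have h4 := lgs_add_le (PsiF Pt β (useq Pt β ε k)) hε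
      have h5 := hη _ h1 h2
      rw [phiF_eq] at h5
      have h6 : (1 - η) * (useq Pt β ε k - ps) ≤ (1 - η) * ((1 - η) ^ k + ε / η) :=
        mul_le_mul_of_nonneg_left h3 (by linarith)
      have h7 : (1 - η) * ((1 - η) ^ k + ε / η) = (1 - η) ^ (k+1) + ε / η - ε := by
        rw [pow_succ]; field_simp; ring
      linarith

lemma lseq_bounds (hg : Good V Pt β) {ps : ℝ} (hHT : HighTemp Pt β ps) {η : ℝ} (hη0 : 0 < η)
    (hη1 : η < 1) (hη : ∀ p, 0 ≤ p → p ≤ ps → ps - phiF Pt β p ≤ (1 - η) * (ps - p))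
    {ε : ℝ} (hε : 0 ≤ ε) (k : ℕ) :
    0 ≤ lseq Pt β ε k ∧ lseq Pt β ε k ≤ ps ∧ ps - lseq Pt β ε k ≤ (1 - η) ^ k + ε / η := by
  have hps := hHT.1
  have hfix := hHT.2.1
  induction k with
  | zero =>
    refine ⟨le_rfl, hps.1, ?_⟩
    have : 0 ≤ ε / η := by positivity
    simp only [lseq, pow_zero]
    linarith [hps.2]
  | succ k ih =>
    obtain ⟨h1, h2, h3⟩ := ih
    simp only [lseq]
    refine ⟨(lgs_pos _).le, ?_, ?_⟩
    · calc _ ≤ lgs (PsiF Pt β ps) := lgs_mono (by have := PsiF_mono hg h1 h2; linarith)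
        _ = ps := by rw [← phiF_eq, hfix]
    · have h4 := lgs_add_le (PsiF Pt β (lseq Pt β ε k) - ε) hε
      rw [sub_add_cancel] at h4
      have h5 := hη _ h1 h2
      rw [phiF_eq] at h5
      have h6 : (1 - η) * (ps - lseq Pt β ε k) ≤ (1 - η) * ((1 - η) ^ k + ε / η) :=
        mul_le_mul_of_nonneg_left h3 (by linarith)
      have h7 : (1 - η) * ((1 - η) ^ k + ε / η) = (1 - η) ^ (k+1) + ε / η - ε := by
        rw [pow_succ]; field_simp; ring
      linarith

/-- Local contraction constants near the fixed point. -/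
lemma local_contr {ps : ℝ} (hHT : HighTemp Pt β ps) : ∃ r κ : ℝ, 0 < r ∧ 0 < κ ∧ κ ≤ 1 ∧
    ∃ lam : ℝ, 0 ≤ lam ∧ ∀ u l ε : ℝ, |u - ps| ≤ r → |l - ps| ≤ r → 0 ≤ ε → ε ≤ r →
      (∀ z z', PsiF Pt β l - ε ≤ z → z ≤ z' → z' ≤ PsiF Pt β u + ε →
        lgs z' - lgs z ≤ lam * (z' - z)) ∧ lam * (dPsi V Pt β u + ε) ≤ 1 - κ := by
  set z0 := PsiF Pt β ps with hz0
  set lam0 := lgs z0 * (1 - lgs z0) with hlam0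
  have hlam0pos : 0 < lam0 := mul_pos (lgs_pos _) (by linarith [lgs_lt_one z0])
  set d0 := dPsi V Pt β ps with hd0
  have hlt : lam0 * d0 < 1 := by
    have := hHT.2.2.2
    rwa [(phiF_hasDerivAt ps).deriv] at this
  have hcont : Continuous (fun t : ℝ => (lam0 + t) * (d0 + 2 * t)) := by fun_prop
  obtain ⟨a, ha, hab⟩ : ∃ a : ℝ, 0 < a ∧ (lam0 + a) * (d0 + 2 * a) < 1 := by
    have h1 : ∀ᶠ t in nhds (0:ℝ), (lam0 + t) * (d0 + 2 * t) < 1 :=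
      hcont.continuousAt.eventually_lt continuousAt_const (by simpa using hlt)
    obtain ⟨e, he, h2⟩ := Metric.eventually_nhds_iff.mp h1
    refine ⟨e / 2, by positivity, h2 ?_⟩
    rw [Real.dist_eq, sub_zero, abs_of_pos (by positivity)]
    linarith
  obtain ⟨r1, hr1, hr1'⟩ : ∃ r1 > 0, ∀ w, |w - z0| < r1 → lgs w * (1 - lgs w) < lam0 + a := by
    have hc : Continuous (fun w => lgs w * (1 - lgs w)) :=
      lgs_continuous.mul (continuous_const.sub lgs_continuous)
    have h1 : ∀ᶠ w in nhds z0, lgs w * (1 - lgs w) < lam0 + a :=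
      hc.continuousAt.eventually_lt continuousAt_const (by simp only [← hlam0]; linarith)
    obtain ⟨e, he, h2⟩ := Metric.eventually_nhds_iff.mp h1
    exact ⟨e, he, fun w hw => h2 (by rwa [Real.dist_eq])⟩
  obtain ⟨r2, hr2, hr2'⟩ : ∃ r2 > 0, ∀ p, |p - ps| < r2 → |PsiF Pt β p - z0| < r1 / 2 ∧
      dPsi V Pt β p < d0 + a := by
    have h1 : ∀ᶠ p in nhds ps, |PsiF Pt β p - z0| < r1 / 2 :=
      (PsiF_continuous.sub continuous_const).abs.continuousAt.eventually_lt continuousAt_const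
        (by show |PsiF Pt β ps - z0| < r1 / 2; rw [hz0, sub_self, abs_zero]; positivity)
    have h2 : ∀ᶠ p in nhds ps, dPsi V Pt β p < d0 + a :=
      dPsi_continuous.continuousAt.eventually_lt continuousAt_const (by simp only [← hd0]; linarith)
    obtain ⟨e, he, h2⟩ := Metric.eventually_nhds_iff.mp (h1.and h2)
    exact ⟨e, he, fun w hw => h2 (by rwa [Real.dist_eq])⟩
  refine ⟨min (r2 / 2) (min (r1 / 4) a), min (1 - (lam0 + a) * (d0 + 2 * a)) 1, by positivity,
    lt_min (by linarith) one_pos, min_le_right _ _, lam0 + a, by linarith, ?_⟩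
  intro u l ε hu hl hε0 hε
  have e1 : min (r2 / 2) (min (r1 / 4) a) ≤ r2 / 2 := min_le_left _ _
  have e2 : min (r2 / 2) (min (r1 / 4) a) ≤ r1 / 4 := (min_le_right _ _).trans (min_le_left _ _)
  have e3 : min (r2 / 2) (min (r1 / 4) a) ≤ a := (min_le_right _ _).trans (min_le_right _ _)
  obtain ⟨hu1, hu2⟩ := hr2' u (by linarith)
  obtain ⟨hl1, _⟩ := hr2' l (by linarith)
  rw [abs_lt] at hu1 hl1
  constructor
  · intro z z' h1 h2 h3
    refine lgs_sub_le (fun w hw1 hw2 => (hr1' w ?_).le) h1 h2 h3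
    rw [abs_lt]
    constructor <;> linarith [hu1.1, hu1.2, hl1.1, hl1.2]
  · have h4 : (lam0 + a) * (dPsi V Pt β u + ε) ≤ (lam0 + a) * (d0 + 2 * a) :=
      mul_le_mul_of_nonneg_left (by linarith) (by linarith)
    have h5 := min_le_left (1 - (lam0 + a) * (d0 + 2 * a)) 1
    linarith

end Phi

end
end ErgmMix


namespace ErgmMix

noncomputable section

section TV

variable {n : ℕ}

lemma tv_ge {μ π : Config n → ℝ} (hμ : IsProb μ) (hπ : IsProb π) {f : Config n → ℝ}
    (hf : ∀ x, 0 ≤ f x ∧ f x ≤ 1) : Ex μ f - Ex π f ≤ tvDist μ π := by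
  have h1 : Ex μ f - Ex π f = ∑ x, (μ x - π x) * (f x - 1/2) := by
    unfold Ex
    have : ∑ x, (μ x - π x) * (f x - 1/2) = (∑ x, μ x * f x - ∑ x, π x * f x)
        - (∑ x, μ x - ∑ x, π x) * (1/2) := by
      rw [← Finset.sum_sub_distrib, ← Finset.sum_sub_distrib, Finset.sum_mul,
        ← Finset.sum_sub_distrib]
      exact Finset.sum_congr rfl fun x _ => by ring
    rw [this, hμ.2, hπ.2]
    ring
  rw [h1]
  unfold tvDist
  rw [Finset.sum_div]
  refine Finset.sum_le_sum fun x _ => ?_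
  calc (μ x - π x) * (f x - 1/2) ≤ |(μ x - π x) * (f x - 1/2)| := le_abs_self _
    _ = |μ x - π x| * |f x - 1/2| := abs_mul _ _
    _ ≤ |μ x - π x| * (1/2) := by
        refine mul_le_mul_of_nonneg_left ?_ (abs_nonneg _)
        rw [abs_le]
        have := hf x
        constructor <;> linarith
    _ = _ := by ring

lemma tv_le {μ π : Config n → ℝ} (hμ : IsProb μ) (hπ : IsProb π) {D : ℝ}
    (h : ∀ f : Config n → ℝ, (∀ x, 0 ≤ f x ∧ f x ≤ 1) → Ex μ f - Ex π f ≤ D) :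
    tvDist μ π ≤ D := by
  refine le_trans (le_of_eq ?_) (h (fun x => ind (π x < μ x)) fun x => ⟨ind_nonneg _, ind_le_one _⟩)
  have h1 : ∀ x, |μ x - π x| = 2 * ((μ x - π x) * ind (π x < μ x)) - (μ x - π x) := by
    intro x
    by_cases hx : π x < μ x
    · rw [ind_true hx, abs_of_pos (by linarith)]; ring
    · rw [ind_false hx, abs_of_nonpos (by linarith)]; ring
  unfold tvDist Ex
  rw [Finset.sum_congr rfl fun x _ => h1 x, Finset.sum_sub_distrib, Finset.sum_sub_distrib,
    hμ.2, hπ.2, ← Finset.mul_sum]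
  simp only [sub_mul, Finset.sum_sub_distrib]
  ring

end TV

section Core

variable {s : ℕ} {V : Fin s → ℕ} {Pt : ∀ i, Finset (EdgeK (V i))} {β : Fin s → ℝ} {n : ℕ}

lemma edge_nonempty (hn : 2 ≤ n) : Nonempty (EdgeK n) := by
  rw [← Fintype.card_pos_iff, card_EdgeK]
  exact Nat.choose_pos hn

lemma mixes_of [Nonempty (EdgeK n)] (hg : Good V Pt β) (t : ℕ)
    (hD : 2 * (Ex (kernelStep (glauber V Pt β n) t ⊤) Nn
      - Ex (kernelStep (glauber V Pt β n) t ⊥) Nn) ≤ Real.exp (-1)) :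
    mixes (glauber V Pt β n) (gibbs V Pt β n) t := by
  intro x
  have hσ := sig_ok (n := n) hg
  have hst : ∀ x f, Ex (kernelStep (glauber V Pt β n) t x) f = (Aop (sig V Pt β n))^[t] f x :=
    fun x f => iter_eq_of_start (kernel_chain V Pt β x) (kernel_start V Pt β x) t f
  rw [hst, hst] at hD
  set D := (Aop (sig V Pt β n))^[t] Nn ⊤ - (Aop (sig V Pt β n))^[t] Nn ⊥ with hDdef
  refine (tv_le (D := 2 * D) ((kernel_chain V Pt β x).prob t) (gibbs_prob V Pt β) ?_).trans hD
  intro f hf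
  have hosc : ∀ y, |(Aop (sig V Pt β n))^[t] f ⊤ - (Aop (sig V Pt β n))^[t] f y| ≤ D := by
    intro y
    refine (osc_le hσ hf t (le_top : y ≤ ⊤)).trans ?_
    have := iter_mono hσ (fun x y h => Nn_mono h) t (bot_le : ⊥ ≤ y)
    linarith
  have h1 : Ex (gibbs V Pt β n) f = Ex (gibbs V Pt β n) ((Aop (sig V Pt β n))^[t] f) :=
    (gibbs_chain V Pt β).iter 0 t f
  have h2 : (Aop (sig V Pt β n))^[t] f ⊤ - D ≤ Ex (gibbs V Pt β n) ((Aop (sig V Pt β n))^[t] f) := by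
    rw [← Ex_const (gibbs_prob V Pt β (n := n)) ((Aop (sig V Pt β n))^[t] f ⊤ - D)]
    refine Ex_mono (gibbs_prob V Pt β) fun y => ?_
    have := (abs_le.mp (hosc y)).2
    linarith
  rw [h1, hst]
  have := (abs_le.mp (hosc x)).1
  linarith

/-- Domination after the burn in phases. -/
lemma dom_up [Nonempty (EdgeK n)] (hg : Good V Pt β) {ps : ℝ} (hHT : HighTemp Pt β ps)
    {η : ℝ} (hη0 : 0 < η) (hη1 : η < 1)
    (hη : ∀ p, ps ≤ p → p ≤ 1 → phiF Pt β p - ps ≤ (1 - η) * (p - ps))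
    {μ : ℕ → Config n → ℝ} (hμ : IsChain (sig V Pt β n) μ) {δ ρ : ℝ} (hδ : 0 ≤ δ) (hρ0 : 0 ≤ ρ)
    {T : ℕ} (hT : 1 ≤ T)
    (hρ : Fintype.card (EdgeK n) * (1 - (Fintype.card (EdgeK n) : ℝ)⁻¹) ^ T ≤ ρ) (k : ℕ) :
    ∀ t, k * T ≤ t → DomUp (μ t) (useq Pt β (kapK V Pt β * δ) k)
      ((2 * T) ^ k * (tauF V n δ + ρ) - (tauF V n δ + ρ)) := by
  have hε : 0 ≤ kapK V Pt β * δ := mul_nonneg (kapK_pos V Pt β).le hδ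
  have hub := useq_bounds hg hHT hη0 hη1 hη hε
  have hps := hHT.1
  refine burn_up (sig_ok hg) hμ (u := useq Pt β (kapK V Pt β * δ)) rfl
    (fun k => ⟨hps.1.trans (hub k).1, (hub k).2.1⟩)
    (B := fun k x => BadUp V n (useq Pt β (kapK V Pt β * δ) k) δ x)
    (fun k => BadUp_upper V _ δ) ?_ (tauF_nonneg V n δ) hρ0 ?_ hT hρ k
  · intro k x hx e
    exact lgs_mono (dH_le hg hδ hx e)
  · intro k
    exact BadUp_prob V (hps.1.trans (hub k).1) (hub k).2.1 hδ

lemma dom_lo [Nonempty (EdgeK n)] (hg : Good V Pt β) {ps : ℝ} (hHT : HighTemp Pt β ps)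
    {η : ℝ} (hη0 : 0 < η) (hη1 : η < 1)
    (hη : ∀ p, 0 ≤ p → p ≤ ps → ps - phiF Pt β p ≤ (1 - η) * (ps - p))
    {μ : ℕ → Config n → ℝ} (hμ : IsChain (sig V Pt β n) μ) {δ ρ : ℝ} (hδ : 0 ≤ δ) (hρ0 : 0 ≤ ρ)
    (hn : ∀ i, V i ≤ n ∧ 4 * (V i : ℝ) ^ 2 ≤ δ * n)
    {T : ℕ} (hT : 1 ≤ T)
    (hρ : Fintype.card (EdgeK n) * (1 - (Fintype.card (EdgeK n) : ℝ)⁻¹) ^ T ≤ ρ) (k : ℕ) :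
    ∀ t, k * T ≤ t → DomLo (μ t) (lseq Pt β (kapK V Pt β * δ) k)
      ((2 * T) ^ k * (tauF V n δ + ρ) - (tauF V n δ + ρ)) := by
  have hε : 0 ≤ kapK V Pt β * δ := mul_nonneg (kapK_pos V Pt β).le hδ
  have hub := lseq_bounds hg hHT hη0 hη1 hη hε
  have hps := hHT.1
  refine burn_lo (sig_ok hg) hμ (u := lseq Pt β (kapK V Pt β * δ)) rfl
    (fun k => ⟨(hub k).1, (hub k).2.1.trans hps.2⟩)
    (B := fun k x => BadLo V n (lseq Pt β (kapK V Pt β * δ) k) δ x)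
    (fun k => BadLo_lower V _ δ) ?_ (tauF_nonneg V n δ) hρ0 ?_ hT hρ k
  · intro k x hx e
    exact lgs_mono (le_dH hg hδ hx e)
  · intro k
    exact BadLo_prob V (hub k).1 ((hub k).2.1.trans hps.2) hδ hn

/-- Non-asymptotic upper bound. -/
lemma upper_core (hn2 : 2 ≤ n) (hg : Good V Pt β) {ps : ℝ} (hHT : HighTemp Pt β ps)
    {η : ℝ} (hη0 : 0 < η) (hη1 : η < 1)
    (hηu : ∀ p, ps ≤ p → p ≤ 1 → phiF Pt β p - ps ≤ (1 - η) * (p - ps))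
    (hηl : ∀ p, 0 ≤ p → p ≤ ps → ps - phiF Pt β p ≤ (1 - η) * (ps - p))
    {κ lam δ : ℝ} (hκ0 : 0 < κ) (hκ1 : κ ≤ 1) (hlam : 0 ≤ lam) (hδ : 0 ≤ δ) {k : ℕ}
    (hL : ∀ z z', PsiF Pt β (lseq Pt β (kapK V Pt β * δ) k) - kapK V Pt β * δ ≤ z → z ≤ z' →
      z' ≤ PsiF Pt β (useq Pt β (kapK V Pt β * δ) k) + kapK V Pt β * δ →
        lgs z' - lgs z ≤ lam * (z' - z))
    (hc : lam * (dPsi V Pt β (useq Pt β (kapK V Pt β * δ) k) + kapK V Pt β * δ) ≤ 1 - κ)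
    (hn : ∀ i, V i ≤ n ∧ 4 * (V i : ℝ) ^ 2 ≤ δ * n)
    {T : ℕ} (hT : 1 ≤ T) {ρ : ℝ} (hρ0 : 0 ≤ ρ)
    (hρ : Fintype.card (EdgeK n) * (1 - (Fintype.card (EdgeK n) : ℝ)⁻¹) ^ T ≤ ρ) (T' : ℕ)
    (hfin : 2 * ((1 - κ * (Fintype.card (EdgeK n) : ℝ)⁻¹) ^ T' * Fintype.card (EdgeK n) +
      8 * T' * ((2 * T) ^ k * (tauF V n δ + ρ))) ≤ Real.exp (-1)) :
    mixes (glauber V Pt β n) (gibbs V Pt β n) (k * T + T') := by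
  have := edge_nonempty hn2
  have hε : 0 ≤ kapK V Pt β * δ := mul_nonneg (kapK_pos V Pt β).le hδ
  have hub := useq_bounds hg hHT hη0 hη1 hηu hε k
  have hlb := lseq_bounds hg hHT hη0 hη1 hηl hε k
  have hps := hHT.1
  refine mixes_of hg _ ?_
  set u := useq Pt β (kapK V Pt β * δ) k
  set l := lseq Pt β (kapK V Pt β * δ) k
  set E := (2 * T) ^ k * (tauF V n δ + ρ) - (tauF V n δ + ρ) with hE
  set B : Config n → Prop := fun x => BadUp V n u δ x ∨ BadLo V n l δ x with hB
  have hbad : ∀ (μ : ℕ → Config n → ℝ), IsChain (sig V Pt β n) μ → ∀ t, k * T ≤ t →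
      Ex (μ t) (fun x => ind (B x)) ≤ 2 * ((2 * T) ^ k * (tauF V n δ + ρ)) := by
    intro μ hμ t ht
    have h1 := (dom_up hg hHT hη0 hη1 hηu hμ hδ hρ0 hT hρ k t ht).upper (BadUp_upper V u δ)
    have h2 := (dom_lo hg hHT hη0 hη1 hηl hμ hδ hρ0 hn hT hρ k t ht).lower (hμ.prob t) hlb.1
      (hlb.2.1.trans hps.2) (BadLo_lower V l δ)
    have h3 := BadUp_prob V (n := n) (hps.1.trans hub.1) hub.2.1 hδ
    have h4 := BadLo_prob V (n := n) hlb.1 (hlb.2.1.trans hps.2) hδ hn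
    have h5 : Ex (μ t) (fun x => ind (B x)) ≤ Ex (μ t) (fun x => ind (BadUp V n u δ x)) +
        Ex (μ t) (fun x => ind (BadLo V n l δ x)) := by
      rw [← Ex_add]
      exact Ex_mono (hμ.prob t) fun x => ind_or_le _ _
    linarith
  have hcon := contraction (sig_ok (n := n) hg) (kernel_chain V Pt β (⊤ : Config n))
    (kernel_chain V Pt β (⊥ : Config n)) (kernel_start V Pt β _) (kernel_start V Pt β _)
    (B := B) hκ0.le hκ1 ?_ (hbad _ (kernel_chain V Pt β (⊤ : Config n)))
    (hbad _ (kernel_chain V Pt β (⊥ : Config n))) T'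
  · linarith
  · intro x y hxy hx hy
    simp only [hB, not_or] at hx hy
    refine (sig_sum_sub hg hδ hlam (by omega) hL hxy hx.2 hy.1).trans ?_
    exact mul_le_mul_of_nonneg_right hc (sub_nonneg.mpr (Nn_mono hxy))

lemma Gp_Nn {ι : Type*} [Fintype ι] [DecidableEq ι] {p : ℝ} (h0 : 0 ≤ p) (h1 : p ≤ 1) :
    Ex (Gp p) (Nn : (ι → Bool) → ℝ) = p * Fintype.card ι := by
  have : (Nn : (ι → Bool) → ℝ) = fun x => ∑ e ∈ univ, ind (x e = true) := rfl
  rw [this, Ex_sum]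
  have h : ∀ e : ι, Ex (Gp p) (fun x => ind (x e = true)) = p := by
    intro e
    have := Gp_allTrue p h0 h1 {e}
    simpa using this
  rw [Finset.sum_congr rfl fun e _ => h e]
  simp [mul_comm]

lemma Gp_Nn_tail {ι : Type*} [Fintype ι] [DecidableEq ι] [Nonempty ι] {p d : ℝ} (h0 : 0 ≤ p)
    (h1 : p ≤ 1) (hd : 0 ≤ d) :
    Ex (Gp p) (fun x : ι → Bool => ind (p * Fintype.card ι + d ≤ Nn x)) ≤
      Real.exp (-(d ^ 2 / (2 * Fintype.card ι))) := by
  have hM : (0:ℝ) < Fintype.card ι := by exact_mod_cast Fintype.card_pos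
  have := Gp_tail h0 h1 (f := (Nn : (ι → Bool) → ℝ)) (c := fun _ => 1) (fun x e => ?_) hM
    (by simp) hd
  · rwa [Gp_Nn h0 h1] at this
  · have hle := Nn_mono (update_false_le x e)
    rw [abs_of_nonneg (by linarith)]
    have h2 := Nn_update x e true
    have h3 := Nn_update x e false
    rw [h2, h3]
    simp [ind]

/-- Non-asymptotic lower bound. -/
lemma lower_core (hn2 : 2 ≤ n) (hg : Good V Pt β) {ps : ℝ} (hHT : HighTemp Pt β ps)
    {η : ℝ} (hη0 : 0 < η) (hη1 : η < 1)
    (hηu : ∀ p, ps ≤ p → p ≤ 1 → phiF Pt β p - ps ≤ (1 - η) * (p - ps))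
    (hηl : ∀ p, 0 ≤ p → p ≤ ps → ps - phiF Pt β p ≤ (1 - η) * (ps - p))
    {δ : ℝ} (hδ : 0 ≤ δ) {k : ℕ}
    (hn : ∀ i, V i ≤ n ∧ 4 * (V i : ℝ) ^ 2 ≤ δ * n)
    {T : ℕ} (hT : 1 ≤ T) {ρ : ℝ} (hρ0 : 0 ≤ ρ)
    (hρ : Fintype.card (EdgeK n) * (1 - (Fintype.card (EdgeK n) : ℝ)⁻¹) ^ T ≤ ρ)
    {t : ℕ} (hmix : mixes (glauber V Pt β n) (gibbs V Pt β n) t) {d : ℝ} (hd : 0 < d)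
    (hdrift : useq Pt β (kapK V Pt β * δ) k * Fintype.card (EdgeK n) + d + d ≤
      lseq Pt β (kapK V Pt β * δ) (k+1) * Fintype.card (EdgeK n) +
        (1 - lseq Pt β (kapK V Pt β * δ) (k+1)) * Fintype.card (EdgeK n) *
          (1 - (Fintype.card (EdgeK n) : ℝ)⁻¹) ^ t) :
    1 ≤ Real.exp (-1) + t / d ^ 2 + (t + 1) * ((2 * T) ^ k * (tauF V n δ + ρ))
      + Real.exp (-(d ^ 2 / (2 * Fintype.card (EdgeK n)))) := by
  have := edge_nonempty hn2
  have hε : 0 ≤ kapK V Pt β * δ := mul_nonneg (kapK_pos V Pt β).le hδ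
  have hub := useq_bounds hg hHT hη0 hη1 hηu hε k
  have hlb := lseq_bounds hg hHT hη0 hη1 hηl hε k
  have hlb' := lseq_bounds hg hHT hη0 hη1 hηl hε (k+1)
  have hps := hHT.1
  have hσ := sig_ok (n := n) hg
  have hchain := kernel_chain V Pt β (⊤ : Config n)
  have hgc := gibbs_chain V Pt β (n := n)
  set u := useq Pt β (kapK V Pt β * δ) k
  set l := lseq Pt β (kapK V Pt β * δ) k with hl
  set q := lseq Pt β (kapK V Pt β * δ) (k+1) with hq
  have hτ := tauF_nonneg V n δ
  set F := (2 * (T:ℝ)) ^ k * (tauF V n δ + ρ) with hF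
  have hF0 : 0 ≤ F := by positivity
  have hdu := dom_up hg hHT hη0 hη1 hηu hgc hδ hρ0 hT hρ k (k * T) le_rfl
  have hdl := dom_lo hg hHT hη0 hη1 hηl hgc hδ hρ0 hn hT hρ k (k * T) le_rfl
  -- bad event probability under the Gibbs measure
  have hbad : Ex (gibbs V Pt β n) (fun x => ind (BadLo V n l δ x)) ≤ F := by
    have h2 := hdl.lower (gibbs_prob V Pt β) hlb.1 (hlb.2.1.trans hps.2) (BadLo_lower V l δ)
    have h4 := BadLo_prob V (n := n) hlb.1 (hlb.2.1.trans hps.2) hδ hn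
    linarith
  have hst : ∀ r f, Ex (kernelStep (glauber V Pt β n) r ⊤) f = (Aop (sig V Pt β n))^[r] f ⊤ :=
    fun r f => iter_eq_of_start hchain (kernel_start V Pt β ⊤) r f
  have hbad2 : ∀ r, r < t → Ex (kernelStep (glauber V Pt β n) (0 + r) ⊤)
      (fun x => ind (BadLo V n l δ x)) ≤ F := by
    intro r _
    refine le_trans ?_ hbad
    set g : Config n → ℝ := fun x => 1 - ind (BadLo V n l δ x) with hgdef
    have hgm : Monotone g := fun x y hxy => by
      have := ind_mono (BadLo_lower V l δ x y hxy)
      simp only [hgdef]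
      linarith
    have h1 : Ex (gibbs V Pt β n) g ≤ Ex (kernelStep (glauber V Pt β n) (0 + r) ⊤) g := by
      rw [zero_add, hst]
      have e1 : Ex (gibbs V Pt β n) g = Ex (gibbs V Pt β n) ((Aop (sig V Pt β n))^[r] g) :=
        hgc.iter 0 r g
      rw [e1, ← Ex_const (gibbs_prob V Pt β (n := n)) ((Aop (sig V Pt β n))^[r] g ⊤)]
      exact Ex_mono (gibbs_prob V Pt β) fun y => iter_mono hσ hgm r le_top
    simp only [hgdef] at h1
    rw [Ex_sub, Ex_sub, Ex_const (gibbs_prob V Pt β), Ex_const (hchain.prob _)] at h1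
    linarith
  set θ := u * Fintype.card (EdgeK n) + d with hθ
  set f : Config n → ℝ := fun x => ind (θ ≤ Nn x) with hf
  have hfm : Monotone f := fun x y hxy => ind_mono fun h => h.trans (Nn_mono hxy)
  have hfu : ∀ x, 0 ≤ f x ∧ f x ≤ 1 := fun x => ⟨ind_nonneg _, ind_le_one _⟩
  have hcmp := chain_compare_lo hσ hchain hlb'.1 (hlb'.2.1.trans hps.2)
    (B := fun x => BadLo V n l δ x)
    (fun x hx e => lgs_mono (le_dH hg hδ hx e)) (s := 0) t hbad2 hfm hfu
  simp only [kernel_start] at hcmp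
  rw [zero_add] at hcmp
  have hlarge := indep_large (ι := EdgeK n) hlb'.1 (hlb'.2.1.trans hps.2) t hd hdrift
  have hpi : Ex (gibbs V Pt β n) f ≤ Real.exp (-(d ^ 2 / (2 * Fintype.card (EdgeK n)))) + F := by
    have h1 := hdu f hfm hfu
    have h2 := Gp_Nn_tail (ι := EdgeK n) (hps.1.trans hub.1) hub.2.1 hd.le
    linarith
  have htv := (tv_ge (hchain.prob t) (gibbs_prob V Pt β) hfu).trans (hmix ⊤)
  have e9 : 1 - t / d ^ 2 ≤ (Aop (fun _ _ => q))^[t] f ⊤ := hlarge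
  linarith

end Core

end
end ErgmMix


namespace ErgmMix

noncomputable section

open Filter Topology

lemma geo_pow {κ M : ℝ} {n a b : ℕ} (hκ0 : 0 ≤ κ) (hκ1 : κ ≤ 1) (hM : 1 ≤ M) (hMn : M ≤ (n:ℝ) ^ 2)
    (hn : 1 ≤ n) (hb : (b : ℝ) ≤ κ * a) :
    (1 - κ * M⁻¹) ^ (a * n ^ 2 * ⌈Real.log n⌉₊) ≤ ((n : ℝ) ^ b)⁻¹ := by
  have hn0 : (0:ℝ) < n := by exact_mod_cast hn
  have hlog : 0 ≤ Real.log n := Real.log_natCast_nonneg n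
  have hMi : M⁻¹ ≤ 1 := inv_le_one_of_one_le₀ hM
  have hMi0 : 0 < M⁻¹ := by positivity
  have h0 : 0 ≤ 1 - κ * M⁻¹ := by nlinarith
  have h1 : 1 - κ * M⁻¹ ≤ Real.exp (-(κ * M⁻¹)) := by
    have := Real.add_one_le_exp (-(κ * M⁻¹)); linarith
  calc (1 - κ * M⁻¹) ^ (a * n ^ 2 * ⌈Real.log n⌉₊)
      ≤ (Real.exp (-(κ * M⁻¹))) ^ (a * n ^ 2 * ⌈Real.log n⌉₊) := pow_le_pow_left₀ h0 h1 _
    _ = Real.exp (-(κ * a * ((n:ℝ) ^ 2 * M⁻¹) * ⌈Real.log n⌉₊)) := by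
        rw [← Real.exp_nat_mul]; congr 1; push_cast; ring
    _ ≤ Real.exp (-(b * Real.log n)) := by
        apply Real.exp_le_exp.mpr
        have h2 : 1 ≤ (n:ℝ) ^ 2 * M⁻¹ := by
          rw [← div_eq_mul_inv, one_le_div (by linarith)]; exact hMn
        have h3 := Nat.le_ceil (Real.log n)
        have h4 : (b:ℝ) ≤ κ * a * ((n:ℝ) ^ 2 * M⁻¹) :=
          hb.trans (le_mul_of_one_le_right (by positivity) h2)
        have := mul_le_mul h4 h3 hlog (by positivity)
        linarith
    _ = ((n : ℝ) ^ b)⁻¹ := by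
        rw [Real.exp_neg, Real.exp_nat_mul, Real.exp_log hn0]

lemma ceil_log_le {n : ℕ} (hn : 1 ≤ n) : ⌈Real.log n⌉₊ ≤ n := by
  rw [Nat.ceil_le]
  have hn0 : (0:ℝ) < n := by exact_mod_cast hn
  have := Real.log_le_sub_one_of_pos hn0
  linarith

lemma ceil_log_le' {n : ℕ} (hn : 3 ≤ n) : (⌈Real.log n⌉₊ : ℝ) ≤ 2 * Real.log n := by
  have h1 : 1 ≤ Real.log n := by
    rw [Real.le_log_iff_exp_le (by positivity)]
    have : (3:ℝ) ≤ n := by exact_mod_cast hn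
    linarith [Real.exp_one_lt_three]
  have := Nat.ceil_lt_add_one (a := Real.log n) (by linarith)
  linarith

lemma up_tendsto (K c A B : ℝ) (hc : 0 < c) (k : ℕ) :
    Tendsto (fun n : ℕ => 2 * ((n:ℝ)⁻¹ + A * (K * ((n:ℝ) ^ k * Real.exp (-(c * n))) + B * (n:ℝ)⁻¹)))
      atTop (𝓝 0) := by
  have h1 : Tendsto (fun n : ℕ => (n:ℝ)⁻¹) atTop (𝓝 0) := tendsto_inv_atTop_nhds_zero_nat
  have h2 : Tendsto (fun n : ℕ => (n:ℝ) ^ k * Real.exp (-(c * n))) atTop (𝓝 0) := by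
    have h := (Real.tendsto_pow_mul_exp_neg_atTop_nhds_zero k)
    have h3 : Tendsto (fun n : ℕ => c * (n:ℝ)) atTop atTop :=
      Tendsto.const_mul_atTop hc tendsto_natCast_atTop_atTop
    have h4 := (h.comp h3).const_mul ((c ^ k)⁻¹)
    rw [mul_zero] at h4
    refine h4.congr fun n => ?_
    simp only [Function.comp]
    rw [mul_pow]
    field_simp
  have := (h1.add (((h2.const_mul K).add (h1.const_mul B)).const_mul A)).const_mul 2
  simpa using this

section
variable {s : ℕ} {V : Fin s → ℕ} {Pt : ∀ i, Finset (EdgeK (V i))} {β : Fin s → ℝ}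

lemma card_ge_one {n : ℕ} (hn2 : 2 ≤ n) : (1:ℝ) ≤ Fintype.card (EdgeK n) := by
  have := edge_nonempty hn2
  exact_mod_cast Fintype.card_pos

lemma upper_asym (hg : Good V Pt β) {ps : ℝ} (hHT : HighTemp Pt β ps) {L : ℕ}
    (hVL : ∀ i, V i ≤ L) :
    ∃ C : ℝ, 0 < C ∧ ∀ᶠ n : ℕ in atTop, ∃ t : ℕ, mixes (glauber V Pt β n) (gibbs V Pt β n) t ∧
      (t : ℝ) ≤ C * (n:ℝ) ^ 2 * Real.log n := by
  obtain ⟨η, hη0, hη1, hηu, hηl⟩ := phi_contr hHT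
  obtain ⟨r, κ, hr, hκ0, hκ1, lam, hlam, hloc⟩ := local_contr hHT
  have hK := kapK_pos V Pt β
  obtain ⟨k, hk⟩ := exists_pow_lt_of_lt_one (show 0 < r / 2 by linarith) (show 1 - η < 1 by linarith)
  set δ : ℝ := r * η / (2 * kapK V Pt β) with hδdef
  have hδ : 0 < δ := by positivity
  have hKδ : kapK V Pt β * δ = r * η / 2 := by rw [hδdef]; field_simp
  have hε0 : 0 ≤ kapK V Pt β * δ := by positivity
  have hεr : kapK V Pt β * δ ≤ r := by rw [hKδ]; nlinarith
  have hεη : kapK V Pt β * δ / η = r / 2 := by rw [hKδ]; field_simp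
  have hub := useq_bounds hg hHT hη0 hη1 hηu hε0 k
  have hlb := lseq_bounds hg hHT hη0 hη1 hηl hε0 k
  rw [hεη] at hub hlb
  obtain ⟨hL, hc⟩ := hloc (useq Pt β (kapK V Pt β * δ) k) (lseq Pt β (kapK V Pt β * δ) k)
    (kapK V Pt β * δ) (by rw [abs_le]; constructor <;> linarith)
    (by rw [abs_le]; constructor <;> linarith) hε0 hεr
  obtain ⟨a', ha'⟩ := exists_nat_ge (3 / κ)
  have ha'3 : ((3:ℕ):ℝ) ≤ κ * a' := by
    rw [div_le_iff₀ hκ0] at ha'; push_cast; linarith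
  set a : ℕ := 3 * k + 6 with ha
  refine ⟨2 * (k * a + a') + 1, by positivity, ?_⟩
  have hc0 : 0 < δ ^ 2 / (8 * kap1 V) := by have := kap1_pos V; positivity
  have hev1 := (up_tendsto (kap0 V) (δ ^ 2 / (8 * kap1 V)) (8 * a' * (2 * a) ^ k) 1 hc0
    (3 * k + 5)).eventually (ge_mem_nhds (Real.exp_pos (-1)))
  have hev2 : ∀ᶠ n : ℕ in atTop, 4 * (L:ℝ) ^ 2 / δ ≤ n :=
    tendsto_natCast_atTop_atTop.eventually_ge_atTop _
  filter_upwards [hev1, hev2, eventually_ge_atTop 3, eventually_ge_atTop L] with n h1 h2 h3 h4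
  have hn2 : 2 ≤ n := by omega
  have hn0 : (0:ℝ) < n := by positivity
  have hn1 : (1:ℝ) ≤ n := by exact_mod_cast (by omega : 1 ≤ n)
  set ℓ := ⌈Real.log n⌉₊ with hℓ
  have hℓ2 := ceil_log_le' h3
  have hℓn : (ℓ:ℝ) ≤ n := by exact_mod_cast ceil_log_le (by omega : 1 ≤ n)
  have hℓ1 : 1 ≤ ℓ := by
    rw [hℓ, Nat.one_le_ceil_iff]
    exact Real.log_pos (by exact_mod_cast (by omega : 1 < n))
  have hM1 := card_ge_one hn2
  have hMn := card_EdgeK_le n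
  set M : ℝ := (Fintype.card (EdgeK n) : ℝ) with hM
  have hg1 := geo_pow (κ := 1) (a := a) (b := a) zero_le_one le_rfl hM1 hMn (by omega : 1 ≤ n)
    (by simp)
  have hg2 := geo_pow (a := a') (b := 3) hκ0.le hκ1 hM1 hMn (by omega : 1 ≤ n) ha'3
  rw [one_mul] at hg1
  set ρ : ℝ := (n:ℝ) ^ 2 * ((n:ℝ) ^ a)⁻¹ with hρ
  have hρ0 : 0 ≤ ρ := by positivity
  have hτ := tauF_nonneg V n δ
  have hκ0' := kap0_nonneg V
  refine ⟨k * (a * n ^ 2 * ℓ) + a' * n ^ 2 * ℓ,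
    upper_core hn2 hg hHT hη0 hη1 hηu hηl hκ0 hκ1 hlam hδ.le (ρ := ρ) hL hc ?_ ?_ hρ0 ?_
      (a' * n ^ 2 * ℓ) ?_, ?_⟩
  · intro i
    refine ⟨(hVL i).trans h4, ?_⟩
    have hV : (V i : ℝ) ≤ L := by exact_mod_cast hVL i
    rw [div_le_iff₀ hδ] at h2
    have : (V i : ℝ) ^ 2 ≤ (L:ℝ) ^ 2 := by gcongr
    linarith
  · have : 1 ≤ a := by omega
    have : 1 ≤ n ^ 2 := Nat.one_le_pow _ _ (by omega)
    exact Nat.one_le_iff_ne_zero.mpr (by positivity)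
  · exact mul_le_mul hMn hg1 (by
      have : M⁻¹ ≤ 1 := inv_le_one_of_one_le₀ hM1
      exact pow_nonneg (by linarith) _) (by positivity)
  · refine le_trans ?_ h1
    have e1 : (1 - κ * M⁻¹) ^ (a' * n ^ 2 * ℓ) * M ≤ (n:ℝ)⁻¹ := by
      calc _ ≤ ((n:ℝ) ^ 3)⁻¹ * (n:ℝ) ^ 2 := mul_le_mul hg2 hMn (by linarith) (by positivity)
        _ = (n:ℝ)⁻¹ := by field_simp
    have e2 : 8 * ((a' * n ^ 2 * ℓ : ℕ) : ℝ) ≤ 8 * a' * (n:ℝ) ^ 3 := by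
      push_cast
      calc 8 * ((a':ℝ) * n ^ 2 * ℓ) ≤ 8 * ((a':ℝ) * n ^ 2 * n) := by gcongr
        _ = _ := by ring
    have e3 : (2 * ((a * n ^ 2 * ℓ : ℕ) : ℝ)) ^ k ≤ (2 * a) ^ k * (n:ℝ) ^ (3 * k) := by
      rw [pow_mul, ← mul_pow]
      refine pow_le_pow_left₀ (by positivity) ?_ k
      push_cast
      calc 2 * ((a:ℝ) * n ^ 2 * ℓ) ≤ 2 * ((a:ℝ) * n ^ 2 * n) := by gcongr
        _ = _ := by ring
    have e4 : 8 * ((a' * n ^ 2 * ℓ : ℕ) : ℝ) *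
        ((2 * ((a * n ^ 2 * ℓ : ℕ) : ℝ)) ^ k * (tauF V n δ + ρ)) ≤
        8 * a' * (2 * a) ^ k * (kap0 V * ((n:ℝ) ^ (3 * k + 5) *
          Real.exp (-(δ ^ 2 / (8 * kap1 V) * n))) + 1 * (n:ℝ)⁻¹) := by
      calc _ ≤ 8 * a' * (n:ℝ) ^ 3 * ((2 * a) ^ k * (n:ℝ) ^ (3 * k) * (tauF V n δ + ρ)) := by
            gcongr
        _ = _ := by
          have e5 : ρ = ((n:ℝ) ^ (3 * k + 4))⁻¹ := by
            rw [hρ, ha, show 3 * k + 6 = 3 * k + 4 + 2 by ring, pow_add _ (3 * k + 4) 2]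
            field_simp
          have e6 : (n:ℝ)⁻¹ = (n:ℝ) ^ (3 * k + 3) * ((n:ℝ) ^ (3 * k + 4))⁻¹ := by
            rw [show 3 * k + 4 = 3 * k + 3 + 1 by ring, pow_add _ (3 * k + 3) 1]
            field_simp
          rw [e6, ← e5]
          unfold tauF
          rw [show δ ^ 2 / (8 * kap1 V) * (n:ℝ) = δ ^ 2 * n / (8 * kap1 V) by ring]
          ring
    linarith
  · push_cast
    have hlog : 0 ≤ Real.log n := Real.log_natCast_nonneg n
    have : (k:ℝ) * (a * n ^ 2 * ℓ) + a' * n ^ 2 * ℓ = (k * a + a') * n ^ 2 * ℓ := by ring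
    rw [this]
    calc ((k:ℝ) * a + a') * n ^ 2 * ℓ ≤ ((k:ℝ) * a + a') * n ^ 2 * (2 * Real.log n) := by gcongr
      _ ≤ _ := by nlinarith [mul_nonneg (sq_nonneg (n:ℝ)) hlog]

end

end

end ErgmMix


namespace ErgmMix

noncomputable section

open Filter Topology

lemma one_sub_pow_ge {z : ℝ} (h0 : 0 ≤ z) (h1 : z ≤ 1 / 2) (t : ℕ) :
    Real.exp (-(2 * t * z)) ≤ (1 - z) ^ t := by
  have h2 : Real.exp (-(2 * z)) ≤ 1 - z := by
    rw [Real.exp_neg, inv_le_comm₀ (Real.exp_pos _) (by linarith)]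
    have := Real.add_one_le_exp (2 * z)
    refine le_trans ?_ this
    rw [inv_le_iff_one_le_mul₀ (by linarith)]
    nlinarith
  calc Real.exp (-(2 * t * z)) = Real.exp (-(2 * z)) ^ t := by
        rw [← Real.exp_nat_mul]; congr 1; ring
    _ ≤ _ := pow_le_pow_left₀ (Real.exp_pos _).le h2 t

lemma exp_neg_le_inv {z : ℝ} (hz : 0 < z) : Real.exp (-z) ≤ z⁻¹ := by
  rw [Real.exp_neg]
  have := Real.add_one_le_exp z
  exact inv_anti₀ hz (by linarith)

lemma card_ge_quarter {n : ℕ} (hn2 : 2 ≤ n) : (n:ℝ) ^ 2 / 4 ≤ Fintype.card (EdgeK n) := by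
  rw [card_EdgeK, Nat.cast_choose_two]
  have : (2:ℝ) ≤ n := by exact_mod_cast hn2
  nlinarith

section
variable {s : ℕ} {V : Fin s → ℕ} {Pt : ∀ i, Finset (EdgeK (V i))} {β : Fin s → ℝ}

lemma kap1_ge_one (V : Fin s → ℕ) : 1 ≤ kap1 V := by
  unfold kap1
  have : 0 ≤ ∑ i, 16 * (Fintype.card (EdgeK (V i)) : ℝ) ^ 2 :=
    Finset.sum_nonneg fun _ _ => by positivity
  linarith

/-- The error term in the lower bound is small. -/
lemma low_err {x C b K0 : ℝ} {k t : ℕ} (hx : 2 ≤ x) (hC : 0 ≤ C) (hK0 : 0 ≤ K0)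
    (hk : (k:ℝ) ≤ C * Real.log x + 1) (ht : (t:ℝ) + 1 ≤ x ^ 17) (hb1 : b ≤ 1) (hb0 : 0 ≤ b)
    (hbx : 33 * C + 66 + 1 ≤ b * x ^ 2) :
    (t + 1) * ((2 * x ^ 32) ^ k * (K0 * x ^ 16 * Real.exp (-(b * x ^ 4)) + x ^ 16 * Real.exp (-x ^ 16)))
      ≤ (K0 + 1) * x⁻¹ := by
  have hx0 : 0 < x := by linarith
  have hlog0 : 0 ≤ Real.log x := Real.log_nonneg (by linarith)
  have hlogx : Real.log x ≤ x := by linarith [Real.log_le_sub_one_of_pos hx0]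
  have h1 : (2 * x ^ 32) ^ k ≤ Real.exp (33 * (C * Real.log x + 1) * Real.log x) := by
    have h2 : 2 * x ^ 32 ≤ Real.exp (33 * Real.log x) := by
      have : Real.exp (33 * Real.log x) = x ^ 33 := by
        rw [show (33:ℝ) = ((33:ℕ):ℝ) by norm_num, Real.exp_nat_mul, Real.exp_log hx0]
      rw [this]
      calc 2 * x ^ 32 ≤ x * x ^ 32 := by gcongr
        _ = x ^ 33 := by ring
    calc (2 * x ^ 32) ^ k ≤ Real.exp (33 * Real.log x) ^ k := pow_le_pow_left₀ (by positivity) h2 k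
      _ = Real.exp (33 * k * Real.log x) := by rw [← Real.exp_nat_mul]; congr 1; ring
      _ ≤ _ := by
        apply Real.exp_le_exp.mpr
        gcongr
  have h3 : Real.exp (-x ^ 16) ≤ Real.exp (-(b * x ^ 4)) := by
    apply Real.exp_le_exp.mpr
    have : x ^ 4 ≤ x ^ 16 := pow_le_pow_right₀ (by linarith) (by norm_num)
    have : b * x ^ 4 ≤ 1 * x ^ 4 := by gcongr
    linarith
  have h4 : x ^ 33 ≤ Real.exp (33 * Real.log x) := by
    rw [show (33:ℝ) = ((33:ℕ):ℝ) by norm_num, Real.exp_nat_mul, Real.exp_log hx0]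
  have h5 : 33 * Real.log x + 33 * (C * Real.log x + 1) * Real.log x - b * x ^ 4 ≤ -x := by
    have e1 : Real.log x ^ 2 ≤ x ^ 2 := by gcongr
    have e2 : x ≤ x ^ 2 := by nlinarith
    have e3 : C * Real.log x ^ 2 ≤ C * x ^ 2 := by gcongr
    have e4 : (33 * C + 66 + 1) * x ^ 2 ≤ b * x ^ 2 * x ^ 2 := by gcongr
    nlinarith
  calc _ ≤ x ^ 17 * (Real.exp (33 * (C * Real.log x + 1) * Real.log x) *
        (K0 * x ^ 16 * Real.exp (-(b * x ^ 4)) + x ^ 16 * Real.exp (-(b * x ^ 4)))) := by gcongr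
    _ = (K0 + 1) * (x ^ 33 * (Real.exp (33 * (C * Real.log x + 1) * Real.log x) *
        Real.exp (-(b * x ^ 4)))) := by ring
    _ ≤ (K0 + 1) * (Real.exp (33 * Real.log x) * (Real.exp (33 * (C * Real.log x + 1) * Real.log x) *
        Real.exp (-(b * x ^ 4)))) := by gcongr
    _ = (K0 + 1) * Real.exp (33 * Real.log x + 33 * (C * Real.log x + 1) * Real.log x - b * x ^ 4) := by
        rw [← Real.exp_add, ← Real.exp_add]; congr 2; ring
    _ ≤ (K0 + 1) * Real.exp (-x) := by gcongr
    _ ≤ _ := by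
        have := exp_neg_le_inv hx0
        gcongr

lemma tendsto_x : Tendsto (fun n : ℕ => (n:ℝ) ^ (1/8 : ℝ)) atTop atTop :=
  (tendsto_rpow_atTop (by norm_num)).comp tendsto_natCast_atTop_atTop

set_option maxHeartbeats 1600000 in
lemma lower_asym (hg : Good V Pt β) {ps : ℝ} (hHT : HighTemp Pt β ps) {L : ℕ}
    (hVL : ∀ i, V i ≤ L) :
    ∀ᶠ n : ℕ in atTop, ∀ t : ℕ, mixes (glauber V Pt β n) (gibbs V Pt β n) t →
      (1/64) * (n:ℝ) ^ 2 * Real.log n ≤ t := by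
  obtain ⟨η, hη0, hη1, hηu, hηl⟩ := phi_contr hHT
  have hK := kapK_pos V Pt β
  have hps1 : ps < 1 := by
    have := hHT.2.1
    rw [phiF_eq] at this
    rw [← this]; exact lgs_lt_one _
  have hK1 := kap1_ge_one V
  have hK0 := kap0_nonneg V
  have hb0 : 0 < 1 / (8 * kap1 V) := by positivity
  have hb1 : 1 / (8 * kap1 V) ≤ 1 := by
    rw [div_le_one (by positivity)]; linarith
  filter_upwards [tendsto_x.eventually_ge_atTop 100,
    tendsto_x.eventually_ge_atTop (4 * (L:ℝ) ^ 2),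
    tendsto_x.eventually_ge_atTop ((2 * (1 + kapK V Pt β / η) + 8) / (1 - ps)),
    tendsto_x.eventually_ge_atTop ((33 * (2 / η) + 66 + 1) / (1 / (8 * kap1 V))),
    tendsto_x.eventually_ge_atTop (10 * (kap0 V + 1)),
    eventually_ge_atTop L, eventually_ge_atTop 2] with n hx100 hxL hxd hxe hxk hnL hn2
  intro t hmix
  by_contra hlt
  push Not at hlt
  set x : ℝ := (n:ℝ) ^ (1/8 : ℝ) with hx
  have hx0 : 0 < x := by linarith
  have hx1 : 1 ≤ x := by linarith
  have hxn : (n:ℝ) = x ^ 8 := by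
    rw [hx, ← Real.rpow_natCast, ← Real.rpow_mul (by positivity)]
    norm_num
  have hlogn : Real.log n = 8 * Real.log x := by
    rw [hxn, Real.log_pow]; norm_num
  have hlog0 : 0 ≤ Real.log x := Real.log_nonneg hx1
  have hlogx : Real.log x ≤ x := by linarith [Real.log_le_sub_one_of_pos hx0]
  rw [hlogn] at hlt
  have ht8 : (t:ℝ) < x ^ 16 * Real.log x / 8 := by
    calc (t:ℝ) < _ := hlt
      _ = _ := by rw [hxn]; ring
  set k : ℕ := ⌈2 / η * Real.log x⌉₊ with hk
  have hk1 : 2 / η * Real.log x ≤ k := Nat.le_ceil _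
  have hk2 : (k:ℝ) ≤ 2 / η * Real.log x + 1 := (Nat.ceil_lt_add_one (by positivity)).le
  have hpow : (1 - η) ^ k ≤ (x ^ 2)⁻¹ := by
    have h1 : 1 - η ≤ Real.exp (-η) := by have := Real.add_one_le_exp (-η); linarith
    calc (1 - η) ^ k ≤ Real.exp (-η) ^ k := pow_le_pow_left₀ (by linarith) h1 k
      _ = Real.exp (-(k * η)) := by rw [← Real.exp_nat_mul]; congr 1; ring
      _ ≤ Real.exp (-(2 * Real.log x)) := by
        apply Real.exp_le_exp.mpr
        have := mul_le_mul_of_nonneg_right hk1 hη0.le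
        have e : 2 / η * Real.log x * η = 2 * Real.log x := by field_simp
        linarith
      _ = (x ^ 2)⁻¹ := by
        rw [Real.exp_neg, show (2:ℝ) = ((2:ℕ):ℝ) by norm_num, Real.exp_nat_mul, Real.exp_log hx0]
  have hpow' : (1 - η) ^ (k+1) ≤ (x ^ 2)⁻¹ :=
    (pow_le_pow_of_le_one (by linarith) (by linarith) (Nat.le_succ k)).trans hpow
  set δ : ℝ := (x ^ 2)⁻¹ with hδdef
  have hδ : 0 < δ := by positivity
  have hε : 0 ≤ kapK V Pt β * δ := by positivity
  have hub := useq_bounds hg hHT hη0 hη1 hηu hε k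
  have hlb := lseq_bounds hg hHT hη0 hη1 hηl hε (k+1)
  have hM4 := card_ge_quarter hn2
  have hMn := card_EdgeK_le n
  have hM1 := card_ge_one hn2
  have hTe : (((n ^ 4 : ℕ)) : ℝ) = x ^ 32 := by push_cast; rw [hxn]; ring
  have hlow := lower_core (T := n ^ 4) (ρ := x ^ 16 * Real.exp (-x ^ 16)) (d := x ^ 14) (k := k) (t := t)
    hn2 hg hHT hη0 hη1 hηu hηl hδ.le
  rw [hTe] at hlow
  have hn2x : (n:ℝ) ^ 2 = x ^ 16 := by rw [hxn]; ring
  rw [hn2x] at hM4 hMn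
  set M : ℝ := (Fintype.card (EdgeK n) : ℝ) with hM
  have hM0 : 0 < M := by linarith
  have hx16 : x ≤ x ^ 16 := le_self_pow₀ hx1 (by norm_num)
  have hMi : M⁻¹ ≤ 1 / 2 := by
    rw [one_div]; exact inv_anti₀ (by norm_num) (by linarith)
  have key := hlow ?_ ?_ (by positivity) ?_ hmix (by positivity) ?_
  · -- contradiction
    have a1 : Real.exp (-1) ≤ 0.4 := by
      rw [Real.exp_neg]
      rw [inv_le_comm₀ (Real.exp_pos 1) (by norm_num)]
      linarith [Real.exp_one_gt_d9]
    have hxi : x⁻¹ ≤ 0.01 := by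
      rw [inv_le_comm₀ hx0 (by norm_num)]; linarith
    have ht17 : (t:ℝ) ≤ x ^ 17 / 8 := by
      calc (t:ℝ) ≤ x ^ 16 * Real.log x / 8 := ht8.le
        _ ≤ x ^ 16 * x / 8 := by gcongr
        _ = _ := by ring
    have a2 : (t:ℝ) / (x ^ 14) ^ 2 ≤ 0.1 := by
      have : (t:ℝ) / (x ^ 14) ^ 2 ≤ x⁻¹ := by
        rw [div_le_iff₀ (by positivity)]
        have e : x⁻¹ * (x ^ 14) ^ 2 = x ^ 27 := by field_simp
        rw [e]
        have : x ^ 17 ≤ x ^ 27 := pow_le_pow_right₀ hx1 (by norm_num)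
        have : 0 ≤ x ^ 17 := by positivity
        linarith
      linarith
    have a3 : Real.exp (-((x ^ 14) ^ 2 / (2 * M))) ≤ 0.1 := by
      have h1 : x / 2 ≤ (x ^ 14) ^ 2 / (2 * M) := by
        rw [div_le_div_iff₀ (by norm_num) (by positivity)]
        have h2 : x * M ≤ x * x ^ 16 := by gcongr
        have h3 : x ^ 17 ≤ x ^ 28 := pow_le_pow_right₀ hx1 (by norm_num)
        nlinarith
      have h2 : Real.exp (-((x ^ 14) ^ 2 / (2 * M))) ≤ Real.exp (-(x/2)) :=
        Real.exp_le_exp.mpr (by linarith)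
      have h3 := exp_neg_le_inv (show 0 < x / 2 by positivity)
      have h4 : (x / 2)⁻¹ = 2 * x⁻¹ := by field_simp
      linarith
    have a4 := low_err (x := x) (C := 2 / η) (b := 1 / (8 * kap1 V)) (K0 := kap0 V) (k := k) (t := t)
      (by linarith) (by positivity) hK0 hk2 (by
        have : x ≤ x ^ 17 := le_self_pow₀ hx1 (by norm_num)
        linarith) hb1 hb0.le (by
        rw [div_le_iff₀ hb0] at hxe
        have : x ≤ x ^ 2 := le_self_pow₀ hx1 (by norm_num)
        nlinarith)
    have a5 : tauF V n δ = kap0 V * x ^ 16 * Real.exp (-(1 / (8 * kap1 V) * x ^ 4)) := by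
      unfold tauF
      rw [hn2x]
      congr 3
      have e : δ ^ 2 * (n:ℝ) = x ^ 4 := by
        rw [hδdef, hxn]; field_simp
      rw [e]; ring
    rw [a5] at key
    have a6 : (kap0 V + 1) * x⁻¹ ≤ 0.1 := by
      rw [← div_eq_mul_inv, div_le_iff₀ hx0]; linarith
    linarith
  · intro i
    refine ⟨(hVL i).trans hnL, ?_⟩
    have hV : (V i : ℝ) ≤ L := by exact_mod_cast hVL i
    have h1 : (V i : ℝ) ^ 2 ≤ (L:ℝ) ^ 2 := by gcongr
    have h2 : δ * n = x ^ 6 := by rw [hδdef, hxn]; field_simp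
    have h3 : x ≤ x ^ 6 := le_self_pow₀ hx1 (by norm_num)
    rw [h2]; linarith
  · exact Nat.one_le_pow _ _ (by omega)
  · have h0 : 0 ≤ 1 - M⁻¹ := by linarith
    have h1 : 1 - M⁻¹ ≤ Real.exp (-M⁻¹) := by have := Real.add_one_le_exp (-M⁻¹); linarith
    have h2 : (1 - M⁻¹) ^ (n ^ 4) ≤ Real.exp (-x ^ 16) := by
      calc (1 - M⁻¹) ^ (n ^ 4) ≤ Real.exp (-M⁻¹) ^ (n ^ 4) := pow_le_pow_left₀ h0 h1 _
        _ = Real.exp (-(x ^ 32 * M⁻¹)) := by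
          rw [← Real.exp_nat_mul, hTe]; congr 1; ring
        _ ≤ _ := by
          apply Real.exp_le_exp.mpr
          have : x ^ 16 ≤ x ^ 32 * M⁻¹ := by
            rw [← div_eq_mul_inv, le_div_iff₀ hM0]
            calc x ^ 16 * M ≤ x ^ 16 * x ^ 16 := by gcongr
              _ = x ^ 32 := by ring
          linarith
    exact mul_le_mul hMn h2 (pow_nonneg h0 _) (by positivity)
  · set u := useq Pt β (kapK V Pt β * δ) k
    set q := lseq Pt β (kapK V Pt β * δ) (k+1)
    have hw : x⁻¹ ≤ (1 - M⁻¹) ^ t := by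
      refine le_trans ?_ (one_sub_pow_ge (by positivity) hMi t)
      rw [← Real.exp_log (show 0 < x⁻¹ by positivity), Real.log_inv]
      apply Real.exp_le_exp.mpr
      have h1 : 2 * t * M⁻¹ ≤ Real.log x := by
        rw [← div_eq_mul_inv, div_le_iff₀ hM0]
        have : Real.log x * (x ^ 16 / 4) ≤ Real.log x * M := by gcongr
        nlinarith
      linarith
    have huq : u - q ≤ 2 * (1 + kapK V Pt β / η) * δ := by
      have e : kapK V Pt β * δ / η = kapK V Pt β / η * δ := by ring
      rw [e] at hub hlb
      nlinarith [hub.2.2, hlb.2.2]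
    have hd14 : x ^ 14 + x ^ 14 ≤ 8 * δ * M := by
      have e : 8 * δ * (x ^ 16 / 4) = 2 * x ^ 14 := by rw [hδdef]; field_simp; norm_num
      have : 8 * δ * (x ^ 16 / 4) ≤ 8 * δ * M := by gcongr
      linarith
    have hmain : (2 * (1 + kapK V Pt β / η) + 8) * δ ≤ (1 - q) * (1 - M⁻¹) ^ t := by
      rw [div_le_iff₀ (by linarith)] at hxd
      calc (2 * (1 + kapK V Pt β / η) + 8) * δ ≤ (x * (1 - ps)) * δ := by gcongr
        _ = (1 - ps) * x⁻¹ := by rw [hδdef]; field_simp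
        _ ≤ (1 - q) * (1 - M⁻¹) ^ t :=
          mul_le_mul (by linarith [hlb.2.1]) hw (by positivity) (by linarith [hlb.2.1])
    have h1 := mul_le_mul_of_nonneg_right hmain hM0.le
    have h2 := mul_le_mul_of_nonneg_right huq hM0.le
    nlinarith

end

end

end ErgmMix


/-- **High temperature (Theorem 1).** In the high temperature phase the mixing time of the
Glauber dynamics for the exponential random graph model is `Θ(n² log n)`. -/
theorem high_temperature_mixing_time
    {L s : ℕ} (hL : 2 ≤ L) (hs : 0 < s)
    (V : Fin s → ℕ) (Pt : ∀ i, Finset (EdgeK (V i))) (β : Fin s → ℝ)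
    (hV2 : ∀ i, 2 ≤ V i) (hVL : ∀ i, V i ≤ L)
    (hG1V : V ⟨0, hs⟩ = 2) (hG1E : (Pt ⟨0, hs⟩).card = 1)
    (hβ : ∀ i : Fin s, 0 < (i : ℕ) → 0 < β i)
    (pstar : ℝ) (hHT : HighTemp Pt β pstar) :
    ∃ c C : ℝ, 0 < c ∧ 0 < C ∧ ∃ N : ℕ, ∀ n ≥ N,
      c * (n : ℝ) ^ 2 * Real.log n ≤
          (mixingTime (glauber V Pt β n) (gibbs V Pt β n) : ℝ) ∧
        (mixingTime (glauber V Pt β n) (gibbs V Pt β n) : ℝ) ≤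
          C * (n : ℝ) ^ 2 * Real.log n := by
  have hg : ErgmMix.Good V Pt β := by
    intro i
    by_cases hi : (i : ℕ) = 0
    · right
      have : i = ⟨0, hs⟩ := Fin.ext hi
      subst this
      exact ⟨hG1V, hG1E⟩
    · exact Or.inl (hβ i (Nat.pos_of_ne_zero hi)).le
  obtain ⟨C, hC, hup⟩ := ErgmMix.upper_asym hg hHT hVL
  have hlow := ErgmMix.lower_asym hg hHT hVL
  obtain ⟨N, hN⟩ := Filter.eventually_atTop.mp (hup.and hlow)
  refine ⟨1 / 64, C, by norm_num, hC, N, fun n hn => ?_⟩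
  obtain ⟨⟨t, hmix, ht⟩, hl⟩ := hN n hn
  refine ⟨hl _ (Nat.sInf_mem (s := {t | mixes (glauber V Pt β n) (gibbs V Pt β n) t}) ⟨t, hmix⟩), ?_⟩
  have h1 : mixingTime (glauber V Pt β n) (gibbs V Pt β n) ≤ t := Nat.sInf_le hmix
  have h2 : (mixingTime (glauber V Pt β n) (gibbs V Pt β n) : ℝ) ≤ t := by exact_mod_cast h1
  exact h2.trans ht
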